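/- Let X ⊂ ℂ be a non-separating continuum with 0 ∈ Bd(X) and X ⊂ B(0,1), and suppose X̂ = A ∪ B where A and B are disjoint, closed, nonempty sets such that A lies above B. Then the equidistant set E(A,B) is a closed ray, the real part function maps E(A,B) onto all of ℝ, and for every x > 0 the set {z ∈ E(A,B) : Re z = x} consists of exactly one point. -/

import Mathlib

open Set Metric Topology Filter

/-- The set of connected components of a set `S`. -/
def componentsOf {α : Type*} [TopologicalSpace α] (S : Set α) : Set (Set α) :=
  {C | ∃ x ∈ S, C = connectedComponentIn S x}

/-- `X̂ = exp⁻¹(X \ {0})`. -/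
def hatSet (X : Set ℂ) : Set ℂ := Complex.exp ⁻¹' (X \ {0})

/-- The conditions on the path `s` in the definition of "C lies above D":
`s : [0,1] → {z : Re z ≤ 0} \ C`, `s 0 ∈ D`, `s 1 = 0`. -/
def AbovePath (C D : Set ℂ) (s : ℝ → ℂ) : Prop :=
  ContinuousOn s (Set.Icc 0 1) ∧ (∀ u ∈ Set.Icc (0:ℝ) 1, (s u).re ≤ 0 ∧ s u ∉ C) ∧
    s 0 ∈ D ∧ s 1 = 0

/-- The ray `R = s([0,1]) ∪ [0,∞)` associated to the path `s`. -/
def AboveRay (s : ℝ → ℂ) : Set ℂ := s '' Set.Icc 0 1 ∪ (Complex.ofReal '' Set.Ici 0)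

/-- `C` is contained in the unbounded component of `ℂ \ (D ∪ R)` containing `1 + 2πi`. -/
def AboveVia (C D : Set ℂ) (s : ℝ → ℂ) : Prop :=
  ¬ Bornology.IsBounded
      (connectedComponentIn (D ∪ AboveRay s)ᶜ ((1 : ℂ) + 2 * (Real.pi : ℂ) * Complex.I)) ∧
  C ⊆ connectedComponentIn (D ∪ AboveRay s)ᶜ ((1 : ℂ) + 2 * (Real.pi : ℂ) * Complex.I)

/-- `C` lies above `D`. -/
def LiesAbove (C D : Set ℂ) : Prop := ∃ s : ℝ → ℂ, AbovePath C D s ∧ AboveVia C D s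

/-- `A` lies above `B`: every component of `A` lies above every component of `B`. -/
def LiesAboveSets (A B : Set ℂ) : Prop :=
  ∀ C ∈ componentsOf A, ∀ D ∈ componentsOf B, LiesAbove C D

/-- The equidistant set `E(A,B) = {z : dist(z,A) = dist(z,B)}`. -/
def equidistSet (A B : Set ℂ) : Set ℂ :=
  {z : ℂ | Metric.infDist z A = Metric.infDist z B}

/-- `E` is a closed ray: a closed subset of `ℂ` homeomorphic to `ℝ`. -/
def IsClosedRay (E : Set ℂ) : Prop := IsClosed E ∧ Nonempty (E ≃ₜ ℝ)

open Set Metric Topology Filter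

/-! ### Part 1: logarithm basics -/

lemma log_uni {α : Type*} [TopologicalSpace α] {K : Set α} (hK : IsPreconnected K) {l1 l2 : α → ℂ} (h1 : ContinuousOn l1 K)
    (h2 : ContinuousOn l2 K) (h : ∀ e ∈ K, Complex.exp (l1 e) = Complex.exp (l2 e))
    {e0 : α} (he0 : e0 ∈ K) (h0 : l1 e0 = l2 e0) : EqOn l1 l2 K := by
  refine Complex.isCoveringMap_exp.eqOn_of_comp_eqOn hK h1 h2 ?_ he0 h0
  intro e he
  exact Subtype.ext (h e he)

lemma stay_between {α : Type*} [TopologicalSpace α] {K : Set α} (hK : IsPreconnected K) {φ : α → ℝ}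
    (hφ : ContinuousOn φ K)
    {l u : ℝ} (hl : ∀ e ∈ K, φ e ≠ l) (hu : ∀ e ∈ K, φ e ≠ u) {e0 : α} (he0 : e0 ∈ K)
    (h0 : φ e0 ∈ Ioo l u) : ∀ e ∈ K, φ e ∈ Ioo l u := by
  intro e he
  constructor
  · by_contra hcon
    obtain ⟨x, hx, hx'⟩ := hK.intermediate_value he he0 hφ ⟨not_lt.1 hcon, h0.1.le⟩
    exact hl x hx hx'
  · by_contra hcon
    obtain ⟨x, hx, hx'⟩ := hK.intermediate_value he0 he hφ ⟨h0.2.le, not_lt.1 hcon⟩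
    exact hu x hx hx'

lemma stay_above {α : Type*} [TopologicalSpace α] {K : Set α} (hK : IsPreconnected K) {φ : α → ℝ}
    (hφ : ContinuousOn φ K)
    {l : ℝ} (hl : ∀ e ∈ K, φ e ≠ l) {e0 : α} (he0 : e0 ∈ K)
    (h0 : l < φ e0) : ∀ e ∈ K, l < φ e := by
  intro e he
  by_contra hcon
  obtain ⟨x, hx, hx'⟩ := hK.intermediate_value he he0 hφ ⟨not_lt.1 hcon, h0.le⟩
  exact hl x hx hx'

lemma stay_below {α : Type*} [TopologicalSpace α] {K : Set α} (hK : IsPreconnected K) {φ : α → ℝ}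
    (hφ : ContinuousOn φ K)
    {u : ℝ} (hu : ∀ e ∈ K, φ e ≠ u) {e0 : α} (he0 : e0 ∈ K)
    (h0 : φ e0 < u) : ∀ e ∈ K, φ e < u := by
  intro e he
  by_contra hcon
  obtain ⟨x, hx, hx'⟩ := hK.intermediate_value he0 he hφ ⟨h0.le, not_lt.1 hcon⟩
  exact hu x hx hx'

lemma slit_of_not_segment {c c' e : ℂ} (h : e ∉ segment ℝ c c') :
    (e - c) / (e - c') ∈ Complex.slitPlane := by
  have hc : e - c ≠ 0 := by
    intro h'; rw [sub_eq_zero] at h'; exact h (h' ▸ left_mem_segment ℝ c c')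
  have hc' : e - c' ≠ 0 := by
    intro h'; rw [sub_eq_zero] at h'; exact h (h' ▸ right_mem_segment ℝ c c')
  by_contra hcon
  rw [Complex.mem_slitPlane_iff_not_le_zero, not_not, Complex.le_def] at hcon
  simp only [Complex.zero_re, Complex.zero_im] at hcon
  set t : ℝ := -((e - c) / (e - c')).re with ht
  have ht0 : 0 ≤ t := by linarith [hcon.1]
  have hq : (e - c) / (e - c') = -(t : ℂ) := by
    apply Complex.ext <;> simp [ht, hcon.2]
  rw [div_eq_iff hc'] at hq
  apply h
  have h1t : (0:ℝ) < 1 + t := by linarith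
  have h1tc : (1 + t : ℂ) ≠ 0 := by exact_mod_cast h1t.ne'
  refine ⟨1 / (1 + t), t / (1 + t), by positivity, by positivity, by field_simp, ?_⟩
  simp only [Complex.real_smul]
  push_cast
  field_simp
  linear_combination -hq

lemma segment_ball {c c' : ℂ} {δ : ℝ} (hc : c' ∈ ball c δ) : segment ℝ c c' ⊆ ball c δ := by
  have : 0 < δ := lt_of_le_of_lt dist_nonneg (mem_ball.1 hc)
  exact (convex_ball c δ).segment_subset (mem_ball_self this) hc

lemma log1_seg {K : Set ℂ} {c c' : ℂ} (h : ∀ e ∈ K, e ∉ segment ℝ c c') :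
    ContinuousOn (fun e => Complex.log ((e - c) / (e - c'))) K ∧
    ∀ e ∈ K, Complex.exp (Complex.log ((e - c) / (e - c'))) * (e - c') = e - c := by
  have hc' : ∀ e ∈ K, e - c' ≠ 0 := by
    intro e he h'; rw [sub_eq_zero] at h'; exact h e he (h' ▸ right_mem_segment ℝ c c')
  constructor
  · refine ContinuousOn.clog ?_ (fun e he => slit_of_not_segment (h e he))
    exact ContinuousOn.div (by fun_prop) (by fun_prop) hc'
  · intro e he
    rw [Complex.exp_log (Complex.slitPlane_ne_zero (slit_of_not_segment (h e he)))]
    exact div_mul_cancel₀ _ (hc' e he)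

lemma log1 {S K : Set ℂ} (hS : IsPreconnected S) (hK : IsClosed K) (hd : ∀ e ∈ K, e ∉ S)
    {c c' : ℂ} (hc : c ∈ S) (hc' : c' ∈ S) :
    ∃ L : ℂ → ℂ, ContinuousOn L K ∧ ∀ e ∈ K, Complex.exp (L e) * (e - c') = e - c := by
  refine hS.induction₂ (fun c c' => ∃ L : ℂ → ℂ, ContinuousOn L K ∧
    ∀ e ∈ K, Complex.exp (L e) * (e - c') = e - c) ?_ ?_ ?_ hc hc'
  · intro x hx
    have hxK : x ∈ Kᶜ := fun h => hd x h hx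
    obtain ⟨δ, hδ, hb⟩ := Metric.isOpen_iff.1 hK.isOpen_compl x hxK
    filter_upwards [mem_nhdsWithin_of_mem_nhds (ball_mem_nhds x hδ)] with y hy
    exact ⟨_, log1_seg (fun e he hes => hb (segment_ball hy hes) he)⟩
  · rintro x y z - - - ⟨L1, h1, h1'⟩ ⟨L2, h2, h2'⟩
    refine ⟨fun e => L1 e + L2 e, h1.add h2, fun e he => ?_⟩
    rw [Complex.exp_add, ← h1' e he, ← h2' e he]; ring
  · rintro x y - - ⟨L1, h1, h1'⟩
    refine ⟨fun e => - L1 e, h1.neg, fun e he => ?_⟩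
    rw [Complex.exp_neg, ← h1' e he, ← mul_assoc, inv_mul_cancel₀ (Complex.exp_ne_zero _), one_mul]

/-- compact preconnected joining set -/
lemma join_compact {G O : Set ℂ} (hG : IsPreconnected G) (hO : IsOpen O) (hGO : G ⊆ O)
    {x y : ℂ} (hx : x ∈ G) (hy : y ∈ G) :
    ∃ J : Set ℂ, IsCompact J ∧ IsPreconnected J ∧ J ⊆ O ∧ x ∈ J ∧ y ∈ J := by
  refine hG.induction₂ (fun x y => ∃ J : Set ℂ, IsCompact J ∧ IsPreconnected J ∧ J ⊆ O ∧ x ∈ J ∧ y ∈ J)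
    ?_ ?_ ?_ hx hy
  · intro x hx
    obtain ⟨δ, hδ, hb⟩ := Metric.isOpen_iff.1 hO x (hGO hx)
    filter_upwards [mem_nhdsWithin_of_mem_nhds (ball_mem_nhds x (half_pos hδ))] with y hy
    refine ⟨closedBall x (δ/2), isCompact_closedBall _ _, (convex_closedBall _ _).isPreconnected,
      (closedBall_subset_ball (by linarith)).trans hb, mem_closedBall_self (by linarith),
      ball_subset_closedBall hy⟩
  · rintro x y z - - - ⟨J1, a1, b1, c1, d1, e1⟩ ⟨J2, a2, b2, c2, d2, e2⟩
    exact ⟨J1 ∪ J2, a1.union a2, b1.union y e1 d2 b2, union_subset c1 c2, Or.inl d1, Or.inr e2⟩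
  · rintro x y - - ⟨J1, a1, b1, c1, d1, e1⟩
    exact ⟨J1, a1, b1, c1, e1, d1⟩

/-- glue logarithms on compact sets -/
lemma log_glue {Ω : Set ℂ} (hΩ : IsOpen Ω) (hc : IsPreconnected Ω) {g : ℂ → ℂ}
    {p : ℂ} (hp : p ∈ Ω)
    (h : ∀ K ⊆ Ω, IsCompact K → ∃ l : ℂ → ℂ, ContinuousOn l K ∧ ∀ e ∈ K, Complex.exp (l e) = g e)
    {w : ℂ} (hw : Complex.exp w = g p) :
    ∃ l : ℂ → ℂ, ContinuousOn l Ω ∧ (∀ e ∈ Ω, Complex.exp (l e) = g e) ∧ l p = w := by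
  have h' : ∀ K ⊆ Ω, IsCompact K → p ∈ K → ∃ l : ℂ → ℂ, ContinuousOn l K ∧
      (∀ e ∈ K, Complex.exp (l e) = g e) ∧ l p = w := by
    intro K hK hKc hpK
    obtain ⟨l, hl, hl'⟩ := h K hK hKc
    refine ⟨fun e => l e + (w - l p), hl.add continuousOn_const, fun e he => ?_, by ring⟩
    rw [Complex.exp_add, Complex.exp_sub, hw, hl' p hpK, hl' e he, div_self, mul_one]
    rw [← hw]; exact Complex.exp_ne_zero _
  have hJ : ∀ e : ℂ, ∃ J : Set ℂ, e ∈ Ω → (IsCompact J ∧ IsPreconnected J ∧ J ⊆ Ω ∧ p ∈ J ∧ e ∈ J) := by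
    intro e
    by_cases he : e ∈ Ω
    · obtain ⟨J, hJ⟩ := join_compact hc hΩ le_rfl hp he
      exact ⟨J, fun _ => hJ⟩
    · exact ⟨∅, fun h => absurd h he⟩
  choose J hJ using hJ
  have hl : ∀ e : ℂ, ∃ l : ℂ → ℂ, e ∈ Ω → (ContinuousOn l (J e) ∧
      (∀ e' ∈ J e, Complex.exp (l e') = g e') ∧ l p = w) := by
    intro e
    by_cases he : e ∈ Ω
    · obtain ⟨a, b, c, d, f⟩ := hJ e he
      obtain ⟨l, hl⟩ := h' (J e) c a d
      exact ⟨l, fun _ => hl⟩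
    · exact ⟨id, fun h => absurd h he⟩
  choose l hl using hl
  -- key : value agrees with any log on a compact preconnected set
  have key : ∀ e ∈ Ω, ∀ K ⊆ Ω, IsCompact K → IsPreconnected K → p ∈ K → e ∈ K → ∀ m : ℂ → ℂ,
      ContinuousOn m K → (∀ e ∈ K, Complex.exp (m e) = g e) → m p = w → l e e = m e := by
    intro e he K hK hKc hKp hpK heK m hm hm' hmp
    obtain ⟨a, b, c, d, f⟩ := hJ e he
    obtain ⟨l1, l2, l3⟩ := hl e he
    obtain ⟨n, n1, n2, n3⟩ := h' (J e ∪ K) (union_subset c hK) (a.union hKc) (Or.inl d)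
    have e1 := log_uni b l1 (n1.mono subset_union_left)
      (fun x hx => (l2 x hx).trans (n2 x (Or.inl hx)).symm) d (l3.trans n3.symm) f
    have e2 := log_uni hKp hm (n1.mono subset_union_right)
      (fun x hx => (hm' x hx).trans (n2 x (Or.inr hx)).symm) hpK (hmp.trans n3.symm) heK
    exact e1.trans e2.symm
  refine ⟨fun e => l e e, ?_, fun e he => ?_, ?_⟩
  · intro e he
    obtain ⟨δ, hδ, hb⟩ := Metric.isOpen_iff.1 hΩ e he
    obtain ⟨a, b, c, d, f⟩ := hJ e he
    have hcb : closedBall e (δ/2) ⊆ Ω := (closedBall_subset_ball (by linarith)).trans hb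
    obtain ⟨n, n1, n2, n3⟩ := h' (J e ∪ closedBall e (δ/2)) (union_subset c hcb)
      (a.union (isCompact_closedBall _ _)) (Or.inl d)
    have hpre : IsPreconnected (J e ∪ closedBall e (δ/2)) :=
      b.union e f (mem_closedBall_self (by linarith)) (convex_closedBall _ _).isPreconnected
    have heq : ∀ x ∈ closedBall e (δ/2), l x x = n x := fun x hx =>
      key x (hcb hx) _ (union_subset c hcb) (a.union (isCompact_closedBall _ _)) hpre (Or.inl d)
        (Or.inr hx) n n1 n2 n3
    have hcont : ContinuousAt n e :=
      n1.continuousAt (mem_of_superset (closedBall_mem_nhds e (half_pos hδ)) subset_union_right)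
    refine (hcont.congr ?_).continuousWithinAt
    filter_upwards [closedBall_mem_nhds e (half_pos hδ)] with x hx
    exact (heq x hx).symm
  · exact (hl e he).2.1 e (hJ e he).2.2.2.2
  · exact (hl p hp).2.2

open Set Metric Topology Filter

/-! ### Part 2: compact clopen neighbourhoods of components; tails -/

lemma cpt_nbhd {Y : Set ℂ} (hY : IsClosed Y) {y : ℂ} (hy : y ∈ Y)
    (hb : Bornology.IsBounded (connectedComponentIn Y y)) {O : Set ℂ} (hO : IsOpen O)
    (hPO : connectedComponentIn Y y ⊆ O) :
    ∃ N U : Set ℂ, IsCompact N ∧ connectedComponentIn Y y ⊆ N ∧ N ⊆ O ∧ IsOpen U ∧ N = Y ∩ U := by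
  obtain ⟨R, hR⟩ := hb.subset_ball y
  set P := connectedComponentIn Y y with hP
  set Z := Y ∩ closedBall y R with hZ
  have hZc : IsCompact Z := (isCompact_closedBall y R).inter_left hY
  have hPZ : P ⊆ Z := fun x hx => ⟨connectedComponentIn_subset _ _ hx, ball_subset_closedBall (hR hx)⟩
  have hyP : y ∈ P := mem_connectedComponentIn hy
  have hyZ : y ∈ Z := hPZ hyP
  have hQ : connectedComponentIn Z y = P := by
    apply Subset.antisymm
    · exact isPreconnected_connectedComponentIn.subset_connectedComponentIn
        (mem_connectedComponentIn hyZ) ((connectedComponentIn_subset _ _).trans inter_subset_left)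
    · exact isPreconnected_connectedComponentIn.subset_connectedComponentIn hyP hPZ
  have : CompactSpace Z := isCompact_iff_compactSpace.1 hZc
  have hcc : connectedComponent (⟨y, hyZ⟩ : Z) =
      ⋂ s : { s : Set Z // IsClopen s ∧ (⟨y, hyZ⟩ : Z) ∈ s }, s := connectedComponent_eq_iInter_isClopen _
  have hQ' : ((↑) : Z → ℂ) '' connectedComponent (⟨y, hyZ⟩ : Z) = P := by
    rw [← hQ, connectedComponentIn_eq_image hyZ]
  have : Nonempty { s : Set Z // IsClopen s ∧ (⟨y, hyZ⟩ : Z) ∈ s } := ⟨⟨univ, isClopen_univ, mem_univ _⟩⟩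
  obtain ⟨⟨V, hV, hyV⟩, hVO⟩ := exists_subset_nhds_of_isCompact'
    (V := fun s : { s : Set Z // IsClopen s ∧ (⟨y, hyZ⟩ : Z) ∈ s } => (s : Set Z))
    (U := ((↑) : Z → ℂ) ⁻¹' (O ∩ ball y R))
    (by
      rintro ⟨s, hs, hs'⟩ ⟨t, ht, ht'⟩
      exact ⟨⟨s ∩ t, hs.inter ht, hs', ht'⟩, inter_subset_left, inter_subset_right⟩)
    (fun s => s.2.1.1.isCompact) (fun s => s.2.1.1)
    (by
      intro x hx
      rw [← hcc] at hx
      have hxP : (x : ℂ) ∈ P := hQ' ▸ mem_image_of_mem _ hx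
      exact ((hO.inter isOpen_ball).preimage continuous_subtype_val).mem_nhds ⟨hPO hxP, hR hxP⟩)
  obtain ⟨U0, hU0, hU0V⟩ := isOpen_induced_iff.1 hV.2
  refine ⟨((↑) : Z → ℂ) '' V, U0 ∩ ball y R, hV.1.isCompact.image continuous_subtype_val, ?_, ?_,
    hU0.inter isOpen_ball, ?_⟩
  · rw [← hQ']; exact image_mono (hV.connectedComponent_subset hyV)
  · rintro _ ⟨x, hx, rfl⟩; exact (hVO hx).1
  · ext x; constructor
    · rintro ⟨x, hx, rfl⟩
      refine ⟨x.2.1, ?_, (hVO hx).2⟩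
      rw [← hU0V] at hx; exact hx
    · rintro ⟨h1, h2, h3⟩
      refine ⟨⟨x, h1, ball_subset_closedBall h3⟩, ?_, rfl⟩
      rw [← hU0V]; exact h2

structure Tail (S : Set ℂ) (ρ : ℝ) : Prop where
  closed : IsClosed S
  conn : IsPreconnected S
  lt : ∀ z ∈ S, z.re < ρ
  unb : ∀ m : ℝ, ∃ z ∈ S, z.re < m

def tdom (S : Set ℂ) (ρ : ℝ) : Set ℂ := connectedComponentIn Sᶜ (ρ : ℂ)

lemma halfplane_pre (ρ : ℝ) : IsPreconnected {z : ℂ | ρ ≤ z.re} :=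
  (convex_halfSpace_re_ge ρ).isPreconnected

lemma Tail.rho_not_mem {S : Set ℂ} {ρ : ℝ} (h : Tail S ρ) : (ρ : ℂ) ∈ Sᶜ := by
  intro hm; have := h.lt _ hm; simp at this

lemma Tail.isOpen {S : Set ℂ} {ρ : ℝ} (h : Tail S ρ) : IsOpen (tdom S ρ) :=
  h.closed.isOpen_compl.connectedComponentIn

lemma tdom_pre {S : Set ℂ} {ρ : ℝ} : IsPreconnected (tdom S ρ) := isPreconnected_connectedComponentIn

lemma tdom_sub {S : Set ℂ} {ρ : ℝ} : tdom S ρ ⊆ Sᶜ := connectedComponentIn_subset _ _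

lemma Tail.right {S : Set ℂ} {ρ : ℝ} (h : Tail S ρ) {e : ℂ} (he : ρ ≤ e.re) : e ∈ tdom S ρ := by
  refine (halfplane_pre ρ).subset_connectedComponentIn (x := (ρ : ℂ)) (by simp) ?_ he
  intro z hz hm
  exact absurd (h.lt z hm) (not_lt.2 hz)

lemma tdom_of {S : Set ℂ} {ρ : ℝ} {K : Set ℂ} (hK : IsPreconnected K) (hKS : K ⊆ Sᶜ) {e : ℂ}
    (he : e ∈ K) (he' : e ∈ tdom S ρ) : K ⊆ tdom S ρ := by
  have := hK.subset_connectedComponentIn he hKS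
  rw [tdom, connectedComponentIn_eq he']
  exact this

lemma Tail.mono_dom {S S' : Set ℂ} {ρ ρ' : ℝ} (h : Tail S ρ) (h' : Tail S' ρ') (hS : S ⊆ S') :
    tdom S' ρ' ⊆ tdom S ρ := by
  refine tdom_of tdom_pre (tdom_sub.trans (compl_subset_compl.2 hS)) (e := ((max ρ ρ' : ℝ) : ℂ)) ?_ ?_
  · exact h'.right (by simp)
  · exact h.right (by simp)

lemma log_right {e c : ℂ} (h : c.re < e.re) : e - c ∈ Complex.slitPlane :=
  Or.inl (by simpa using h)

lemma Tail.exists_br {S : Set ℂ} {ρ : ℝ} (h : Tail S ρ) {c : ℂ} (hc : c ∈ S) :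
    ∃ l : ℂ → ℂ, ContinuousOn l (tdom S ρ) ∧ (∀ e ∈ tdom S ρ, Complex.exp (l e) = e - c) ∧
      ∀ e : ℂ, ρ ≤ e.re → l e = Complex.log (e - c) := by
  have hρ : (ρ:ℂ) ∈ tdom S ρ := h.right (by simp)
  obtain ⟨l, h1, h2, h3⟩ := log_glue h.isOpen tdom_pre (g := fun e => e - c) hρ
    (w := Complex.log (ρ - c)) (by
      intro K hK hKc
      obtain ⟨m, hm⟩ : ∃ m : ℝ, ∀ e ∈ K, m ≤ e.re := by
        obtain ⟨m, hm⟩ := (hKc.image Complex.continuous_re).bddBelow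
        exact ⟨m, fun e he => hm ⟨e, he, rfl⟩⟩
      obtain ⟨c', hc', hm'⟩ := h.unb m
      obtain ⟨L, hL, hL'⟩ := log1 h.conn hKc.isClosed (fun e he => tdom_sub (hK he)) hc hc'
      have hsl : ∀ e ∈ K, e - c' ∈ Complex.slitPlane := fun e he => log_right (hm'.trans_le (hm e he))
      refine ⟨fun e => L e + Complex.log (e - c'), hL.add (ContinuousOn.clog (by fun_prop) hsl), ?_⟩
      intro e he
      rw [Complex.exp_add, Complex.exp_log (Complex.slitPlane_ne_zero (hsl e he)), hL' e he])
    (by rw [Complex.exp_log]; exact Complex.slitPlane_ne_zero (log_right (by simpa using h.lt c hc)))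
  refine ⟨l, h1, h2, fun e he => ?_⟩
  have hsl : ∀ e ∈ {z : ℂ | ρ ≤ z.re}, e - c ∈ Complex.slitPlane := fun e he => log_right ((h.lt c hc).trans_le he)
  exact log_uni (halfplane_pre ρ) (h1.mono (fun z hz => h.right hz))
    (l2 := fun e => Complex.log (e - c)) (ContinuousOn.clog (by fun_prop) hsl)
    (fun z hz => by rw [h2 z (h.right hz), Complex.exp_log (Complex.slitPlane_ne_zero (hsl z hz))])
    (e0 := (ρ:ℂ)) (by simp) h3 he

open Classical in
noncomputable def br (S : Set ℂ) (ρ : ℝ) (c : ℂ) : ℂ → ℂ :=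
  if h : ∃ l : ℂ → ℂ, ContinuousOn l (tdom S ρ) ∧ (∀ e ∈ tdom S ρ, Complex.exp (l e) = e - c) ∧
      ∀ e : ℂ, ρ ≤ e.re → l e = Complex.log (e - c) then h.choose else 0

section
variable {S : Set ℂ} {ρ : ℝ} {c : ℂ}

lemma Tail.br_spec (h : Tail S ρ) (hc : c ∈ S) : ContinuousOn (br S ρ c) (tdom S ρ) ∧
    (∀ e ∈ tdom S ρ, Complex.exp (br S ρ c e) = e - c) ∧
      ∀ e : ℂ, ρ ≤ e.re → br S ρ c e = Complex.log (e - c) := by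
  have hex := h.exists_br hc
  rw [br, dif_pos hex]
  exact hex.choose_spec

lemma Tail.br_cont (h : Tail S ρ) (hc : c ∈ S) : ContinuousOn (br S ρ c) (tdom S ρ) := (h.br_spec hc).1
lemma Tail.br_exp (h : Tail S ρ) (hc : c ∈ S) {e : ℂ} (he : e ∈ tdom S ρ) :
    Complex.exp (br S ρ c e) = e - c := (h.br_spec hc).2.1 e he
lemma Tail.br_right (h : Tail S ρ) (hc : c ∈ S) {e : ℂ} (he : ρ ≤ e.re) :
    br S ρ c e = Complex.log (e - c) := (h.br_spec hc).2.2 e he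

lemma Tail.br_mono {S' : Set ℂ} {ρ' : ℝ} (h : Tail S ρ) (h' : Tail S' ρ') (hS : S ⊆ S') (hc : c ∈ S)
    {e : ℂ} (he : e ∈ tdom S' ρ') : br S ρ c e = br S' ρ' c e := by
  have hm := h.mono_dom h' hS
  refine log_uni (K := tdom S' ρ') tdom_pre ((h.br_cont hc).mono hm) (h'.br_cont (hS hc))
    (fun z hz => by rw [h.br_exp hc (hm hz), h'.br_exp (hS hc) hz])
    (e0 := ((max ρ ρ' : ℝ) : ℂ)) (h'.right (by simp)) ?_ he
  rw [h.br_right hc (by simp), h'.br_right (hS hc) (by simp)]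

/-- the difference of two branches is a log determined on the right -/
lemma Tail.br_diff {c' : ℂ} (h : Tail S ρ) (hc : c ∈ S) (hc' : c' ∈ S) {K : Set ℂ}
    (hK : IsPreconnected K) (hKS : K ⊆ Sᶜ) {r : ℂ} (hr : r ∈ K) (hr' : ρ ≤ r.re)
    (hs : ∀ e ∈ K, e ∉ segment ℝ c c') {e : ℂ} (he : e ∈ K) :
    br S ρ c e = br S ρ c' e + Complex.log ((e - c) / (e - c')) := by
  have hKd : K ⊆ tdom S ρ := tdom_of hK hKS hr (h.right hr')
  obtain ⟨g1, g2⟩ := log1_seg hs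
  refine log_uni hK ((h.br_cont hc).mono hKd) (l2 := fun e => br S ρ c' e + Complex.log ((e - c) / (e - c')))
    (((h.br_cont hc').mono hKd).add g1) (fun z hz => ?_) hr ?_ he
  · rw [Complex.exp_add, h.br_exp hc (hKd hz), h.br_exp hc' (hKd hz), mul_comm, g2 z hz]
  · rw [h.br_right hc hr', h.br_right hc' hr']
    have hrc := (h.lt c hc).trans_le hr'
    have hrc' := (h.lt c' hc').trans_le hr'
    have e1 : Complex.arg (r - c) ∈ Ioo (-(Real.pi/2)) (Real.pi/2) := by
      have := Complex.abs_arg_lt_pi_div_two_iff.2 (Or.inl (show 0 < (r - c).re by simpa using hrc))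
      exact abs_lt.1 this
    have e2 : Complex.arg (r - c') ∈ Ioo (-(Real.pi/2)) (Real.pi/2) := by
      have := Complex.abs_arg_lt_pi_div_two_iff.2 (Or.inl (show 0 < (r - c').re by simpa using hrc'))
      exact abs_lt.1 this
    have hc0 : r - c ≠ 0 := Complex.slitPlane_ne_zero (log_right hrc)
    have hc0' : r - c' ≠ 0 := Complex.slitPlane_ne_zero (log_right hrc')
    have : Complex.log ((r - c) / (r - c')) = Complex.log (r - c) - Complex.log (r - c') := by
      rw [← Complex.log_exp (x := Complex.log (r - c) - Complex.log (r - c'))]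
      · rw [Complex.exp_sub, Complex.exp_log hc0, Complex.exp_log hc0']
      · simp only [Complex.sub_im, Complex.log_im]; linarith [e1.1, e1.2, e2.1, e2.2]
      · simp only [Complex.sub_im, Complex.log_im]; linarith [e1.1, e1.2, e2.1, e2.2]
    rw [this]; ring

lemma Tail.br_seg {p q : ℂ} (h : Tail S ρ) (hs : segment ℝ p q ⊆ S) {e : ℂ} (he : e ∈ tdom S ρ) :
    br S ρ p e = br S ρ q e + Complex.log ((e - p) / (e - q)) :=
  h.br_diff (hs (left_mem_segment ℝ p q)) (hs (right_mem_segment ℝ p q)) tdom_pre tdom_sub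
    (r := (ρ:ℂ)) (h.right (by simp)) (by simp) (fun _ hz hz' => tdom_sub hz (hs hz')) he

lemma Tail.br_base (h : Tail S ρ) {e : ℂ} (he : e ∈ tdom S ρ) : ContinuousOn (fun c => br S ρ c e) S := by
  obtain ⟨K, hKc, hKp, hKO, hr, heK⟩ := join_compact tdom_pre h.isOpen le_rfl
    (h.right (e := (ρ:ℂ)) (by simp)) he
  intro c hc
  have hcK : c ∈ Kᶜ := fun h => tdom_sub (hKO h) hc
  obtain ⟨δ, hδ, hb⟩ := Metric.isOpen_iff.1 hKc.isClosed.isOpen_compl c hcK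
  have hec : e - c ≠ 0 := fun h' => by
    rw [sub_eq_zero] at h'; exact hcK (h' ▸ heK)
  have hcont : ContinuousAt (fun c1 => br S ρ c e - Complex.log ((e - c) / (e - c1))) c := by
    refine continuousAt_const.sub (ContinuousAt.clog ?_ ?_)
    · exact ContinuousAt.div (by fun_prop) (by fun_prop) hec
    · rw [div_self hec]; exact Complex.one_mem_slitPlane
  have hval : br S ρ c e - Complex.log ((e - c) / (e - c)) = br S ρ c e := by simp [div_self hec]
  refine ContinuousWithinAt.congr_of_eventuallyEq hcont.continuousWithinAt ?_ hval.symm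
  filter_upwards [mem_nhdsWithin_of_mem_nhds (ball_mem_nhds c hδ), self_mem_nhdsWithin] with c1 h1 h2
  have := h.br_diff hc h2 hKp (hKO.trans tdom_sub) hr (by simp)
    (fun z hz hz' => hb (segment_ball h1 hz') hz) heK
  rw [this]; ring

end

open Set Metric Topology Filter

/-! ### Part 3: facts about the preimage set -/

section hat
variable {X : Set ℂ}

lemma hat_neg (hXb : X ⊆ ball 0 1) {z : ℂ} (hz : z ∈ hatSet X) : z.re < 0 := by
  have h1 := hXb hz.1
  rw [mem_ball_zero_iff, Complex.norm_exp] at h1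
  exact Real.exp_lt_one_iff.1 h1

lemma slit_one_sub {u : ℂ} (hu : ‖u‖ < 1) : 1 - u ∈ Complex.slitPlane := by
  left
  have := (Complex.re_le_norm u).trans_lt hu
  simp; linarith

lemma hat_bdd (hXcpt : IsCompact X) (hXns : IsPreconnected Xᶜ) (h0 : (0:ℂ) ∈ frontier X)
    (hXb : X ⊆ ball 0 1) {P : Set ℂ} (hP : P ⊆ hatSet X) (hPc : IsPreconnected P) {M : ℝ}
    (hM : ∀ z ∈ P, M ≤ z.re) : Bornology.IsBounded P := by
  rcases P.eq_empty_or_nonempty with rfl | ⟨p, hp⟩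
  · exact Bornology.isBounded_empty
  have h0' : (0:ℂ) ∈ closure Xᶜ := (frontier_eq_closure_inter_closure (s := X) ▸ h0).2
  obtain ⟨w0, hw0, hw0'⟩ := Metric.mem_closure_iff.1 h0' (Real.exp M) (Real.exp_pos M)
  rw [dist_comm, dist_zero_right] at hw0'
  have h2 : (2:ℂ) ∈ Xᶜ := by
    intro h; have := hXb h; rw [mem_ball_zero_iff] at this; norm_num at this
  obtain ⟨L, hL, hL'⟩ := log1 hXns hXcpt.isClosed (fun e he h => h he) hw0 h2
  set K1 : Set ℂ := X ∩ {x | Real.exp M ≤ ‖x‖} with hK1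
  have hK1c : IsCompact K1 := hXcpt.inter_right (isClosed_le continuous_const continuous_norm)
  have hne : ∀ x ∈ K1, x ≠ 0 := by
    rintro x ⟨-, hx⟩ rfl
    simp only [mem_ofPred_eq, norm_zero] at hx
    linarith [Real.exp_pos M]
  have hs1 : ∀ x ∈ K1, 1 - x / 2 ∈ Complex.slitPlane := by
    intro x hx
    apply slit_one_sub
    have := hXb hx.1
    rw [mem_ball_zero_iff] at this
    rw [norm_div]; norm_num; linarith
  have hs2 : ∀ x ∈ K1, 1 - w0 / x ∈ Complex.slitPlane := by
    intro x hx
    apply slit_one_sub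
    rw [norm_div, div_lt_one (norm_pos_iff.2 (hne x hx))]
    exact hw0'.trans_le hx.2
  set F : ℂ → ℂ := fun x => L x + Complex.log (1 - x/2) - Complex.log (1 - w0/x) + Complex.log (-2) with hF
  have hFc : ContinuousOn F K1 := by
    refine (((hL.mono inter_subset_left).add (ContinuousOn.clog (by fun_prop) hs1)).sub
      (ContinuousOn.clog ?_ hs2)).add continuousOn_const
    exact continuousOn_const.sub (continuousOn_const.div continuousOn_id hne)
  have hFe : ∀ x ∈ K1, Complex.exp (F x) = x := by
    intro x hx
    simp only [hF]
    rw [Complex.exp_add, Complex.exp_sub, Complex.exp_add, Complex.exp_log (Complex.slitPlane_ne_zero (hs1 x hx)),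
      Complex.exp_log (Complex.slitPlane_ne_zero (hs2 x hx)), Complex.exp_log (by norm_num)]
    rw [div_mul_eq_mul_div, div_eq_iff (Complex.slitPlane_ne_zero (hs2 x hx))]
    have hx0 := hne x hx
    have : x * (1 - w0 / x) = x - w0 := by field_simp
    rw [this, ← hL' x hx.1]; ring
  have hPK : MapsTo Complex.exp P K1 := by
    intro z hz
    refine ⟨(hP hz).1, ?_⟩
    simp only [mem_ofPred_eq, Complex.norm_exp]
    exact Real.exp_le_exp.2 (hM z hz)
  have heq := log_uni hPc (l1 := fun z => z) (l2 := fun z => F (Complex.exp z) + (p - F (Complex.exp p)))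
    continuousOn_id ((hFc.comp Complex.continuous_exp.continuousOn hPK).add continuousOn_const)
    (fun z hz => by
      rw [Complex.exp_add, Complex.exp_sub, hFe _ (hPK hz), hFe _ (hPK hp), div_self (Complex.exp_ne_zero _),
        mul_one]) hp (by ring)
  have hb : Bornology.IsBounded ((fun x => F x + (p - F (Complex.exp p))) '' K1) :=
    (hK1c.image_of_continuousOn (hFc.add continuousOn_const)).isBounded
  refine hb.subset ?_
  intro z hz
  exact ⟨Complex.exp z, hPK hz, (heq hz).symm⟩

lemma hat_unb (hXcpt : IsCompact X) (hXconn : IsPreconnected X) (hXns : IsPreconnected Xᶜ)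
    (h0 : (0:ℂ) ∈ frontier X)
    (hXb : X ⊆ ball 0 1) {A B : Set ℂ} (hAB : hatSet X = A ∪ B) (hdisj : Disjoint A B)
    (hAcl : IsClosed A) (hBcl : IsClosed B) {a : ℂ} (ha : a ∈ A) (m : ℝ) :
    ∃ z ∈ connectedComponentIn A a, z.re < m := by
  by_contra! hcon
  have hb := hat_bdd hXcpt hXns h0 hXb (P := connectedComponentIn A a)
    ((connectedComponentIn_subset _ _).trans (hAB ▸ subset_union_left)) isPreconnected_connectedComponentIn hcon
  obtain ⟨N, U, hN, hCN, -, hU, hNU⟩ := cpt_nbhd hAcl ha hb isOpen_univ (subset_univ _)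
  have hopen : IsOpen (Complex.exp '' (U \ B)) := by
    have h1 : IsOpenMap (fun z : ℂ => (⟨Complex.exp z, Complex.exp_ne_zero z⟩ : {z : ℂ // z ≠ 0})) :=
      Complex.isCoveringMap_exp.isLocalHomeomorph.isOpenMap
    have h2 := h1 (U \ B) (hU.sdiff hBcl)
    have h3 := (isOpen_ne (x := (0:ℂ))).isOpenMap_subtype_val _ h2
    rw [image_image] at h3
    exact h3
  have hcl : IsClosed (Complex.exp '' N) := (hN.image Complex.continuous_exp).isClosed
  have key : ∀ x ∈ X, x ∈ Complex.exp '' (U \ B) → x ∈ Complex.exp '' N := by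
    rintro x hx ⟨z, hz, rfl⟩
    have : z ∈ A ∪ B := hAB ▸ (⟨hx, Complex.exp_ne_zero z⟩ : z ∈ hatSet X)
    refine ⟨z, ?_, rfl⟩
    rw [hNU]
    exact ⟨this.resolve_right hz.2, hz.1⟩
  have haN : a ∈ N := hCN (mem_connectedComponentIn ha)
  have h0X : (0:ℂ) ∈ X := hXcpt.isClosed.frontier_subset h0
  have hNsub : N ⊆ U \ B := by
    intro z hz; rw [hNU] at hz
    exact ⟨hz.2, fun hb => hdisj.le_bot ⟨hz.1, hb⟩⟩
  have haX : Complex.exp a ∈ X := by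
    have : a ∈ hatSet X := hAB ▸ Or.inl ha
    exact this.1
  obtain ⟨x, hx1, hx2, hx3⟩ := hXconn _ _ hopen hcl.isOpen_compl (by
      intro x hx
      by_cases h : x ∈ Complex.exp '' N
      · exact Or.inl (image_mono hNsub h)
      · exact Or.inr h) ⟨_, haX, a, hNsub haN, rfl⟩
      ⟨0, h0X, fun ⟨z, _, hz⟩ => Complex.exp_ne_zero z hz⟩
  exact hx3 (key x hx1 hx2)

/-- a set unbounded to the left and preconnected meets vertical lines -/
lemma meets_vertical {C : Set ℂ} (hC : IsPreconnected C) (hu : ∀ m : ℝ, ∃ z ∈ C, z.re < m) {c : ℂ}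
    (hc : c ∈ C) {x : ℝ} (hx : x ≤ c.re) : ∃ z ∈ C, z.re = x := by
  obtain ⟨z, hz, hzx⟩ := hu x
  exact hC.intermediate_value hz hc Complex.continuous_re.continuousOn ⟨hzx.le, hx⟩

lemma hat_dense {C : Set ℂ} (hC : IsPreconnected C) (hu : ∀ m : ℝ, ∃ z ∈ C, z.re < m) (hne : C.Nonempty)
    (hCX : C ⊆ hatSet X) (x0 : ℝ) :
    ∃ κ : ℝ, ∀ z : ℂ, z.re ≤ x0 → ∃ x ∈ hatSet X, dist z x ≤ κ := by
  obtain ⟨a, ha⟩ := hne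
  refine ⟨|x0 - a.re| + Real.pi, fun z hz => ?_⟩
  obtain ⟨c, hc, hcx⟩ := meets_vertical hC hu ha (x := min z.re a.re) (min_le_right _ _)
  set n : ℤ := round ((z.im - c.im) / (2 * Real.pi)) with hn
  refine ⟨c + n * (2 * Real.pi * Complex.I), ?_, ?_⟩
  · have := hCX hc
    simp only [hatSet, mem_preimage] at this ⊢
    rwa [Complex.exp_add, Complex.exp_int_mul_two_pi_mul_I, mul_one]
  · rw [Complex.dist_eq]
    refine (Complex.norm_le_abs_re_add_abs_im _).trans (add_le_add ?_ ?_)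
    · simp only [Complex.sub_re, Complex.add_re, Complex.mul_re, Complex.mul_im, hcx]
      simp
      rw [abs_of_nonneg (by simp)]
      rcases min_cases z.re a.re with h | h
      · rw [h.1]; simp
      · rw [h.1]; exact le_trans (by linarith) (le_abs_self _)
    · have h1 := abs_sub_round ((z.im - c.im) / (2 * Real.pi))
      rw [← hn] at h1
      have : (z - (c + n * (2 * Real.pi * Complex.I))).im =
          ((z.im - c.im) / (2 * Real.pi) - n) * (2 * Real.pi) := by
        have := Real.pi_pos
        simp
        field_simp
        ring
      rw [this, abs_mul, abs_of_pos (a := 2 * Real.pi) (by positivity)]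
      nlinarith [Real.pi_pos]

end hat

open Set Metric Topology Filter

/-! ### Part 4: the order relation, in terms of branches -/

lemma isClosed_ccIn {Y : Set ℂ} (hY : IsClosed Y) (y : ℂ) : IsClosed (connectedComponentIn Y y) := by
  by_cases hy : y ∈ Y
  · rw [connectedComponentIn_eq_image hy]
    exact hY.isClosedEmbedding_subtypeVal.isClosedMap _ isClosed_connectedComponent
  · rw [connectedComponentIn_eq_empty hy]; exact isClosed_empty

lemma re_neg_cos {w u : ℂ} (h : Complex.exp w = u) (hu : u.re < 0) : Real.cos w.im < 0 := by
  rw [← h, Complex.exp_re] at hu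
  exact neg_of_mul_neg_right hu (Real.exp_pos _).le

lemma re_neg_ne {w u : ℂ} (h : Complex.exp w = u) (hu : u.re < 0) :
    w.im ≠ -(Real.pi/2) ∧ w.im ≠ Real.pi/2 ∧ w.im ≠ -(3*Real.pi/2) ∧ w.im ≠ 3*Real.pi/2 := by
  have hc := re_neg_cos h hu
  have h32 : Real.cos (3*Real.pi/2) = 0 := by
    rw [show 3*Real.pi/2 = Real.pi/2 + Real.pi by ring, Real.cos_add_pi, Real.cos_pi_div_two, neg_zero]
  refine ⟨?_, ?_, ?_, ?_⟩ <;> intro h' <;> rw [h'] at hc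
  · rw [Real.cos_neg, Real.cos_pi_div_two] at hc; exact lt_irrefl _ hc
  · rw [Real.cos_pi_div_two] at hc; exact lt_irrefl _ hc
  · rw [Real.cos_neg, h32] at hc; exact lt_irrefl _ hc
  · rw [h32] at hc; exact lt_irrefl _ hc

lemma im_ne_ne {w u : ℂ} (h : Complex.exp w = u) (hu : u.im ≠ 0) :
    w.im ≠ 0 ∧ w.im ≠ Real.pi ∧ w.im ≠ -Real.pi := by
  rw [← h, Complex.exp_im] at hu
  refine ⟨?_, ?_, ?_⟩ <;> intro h' <;> rw [h'] at hu <;> simp at hu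

lemma isCompact_re_bdd {J : Set ℂ} (hJ : IsCompact J) : ∃ m M : ℝ, ∀ z ∈ J, m < z.re ∧ z.re < M := by
  obtain ⟨m, hm⟩ := (hJ.image Complex.continuous_re).bddBelow
  obtain ⟨M, hM⟩ := (hJ.image Complex.continuous_re).bddAbove
  exact ⟨m - 1, M + 1, fun z hz => ⟨by linarith [hm ⟨z, hz, rfl⟩], by linarith [hM ⟨z, hz, rfl⟩]⟩⟩

lemma isClosed_posray : IsClosed (Complex.ofReal '' Ici (0:ℝ)) :=
  Complex.isometry_ofReal.isClosedEmbedding.isClosedMap _ isClosed_Ici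

lemma isPre_posray : IsPreconnected (Complex.ofReal '' Ici (0:ℝ)) :=
  isPreconnected_Ici.image _ Complex.continuous_ofReal.continuousOn

/-- moving the base point far to the right of `e` -/
lemma Tail.move_below {S : Set ℂ} {ρ : ℝ} (h : Tail S ρ) {J : Set ℂ} (hJ : IsPreconnected J) (hJS : J ⊆ S)
    {e : ℂ} (he : e ∈ tdom S ρ) (hlt : ∀ z ∈ J, e.re < z.re) {p q : ℂ} (hp : p ∈ J) (hq : q ∈ J)
    (h1 : (br S ρ p e).im < -(Real.pi/2)) : (br S ρ q e).im < -(Real.pi/2) := by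
  refine stay_below hJ (φ := fun c => (br S ρ c e).im)
    (Complex.continuous_im.comp_continuousOn ((h.br_base he).mono hJS)) ?_ hp h1 q hq
  intro z hz
  exact (re_neg_ne (h.br_exp (hJS hz) he) (by simpa using hlt z hz)).1

lemma Tail.move_above {S : Set ℂ} {ρ : ℝ} (h : Tail S ρ) {J : Set ℂ} (hJ : IsPreconnected J) (hJS : J ⊆ S)
    {e : ℂ} (he : e ∈ tdom S ρ) (hlt : ∀ z ∈ J, e.re < z.re) {p q : ℂ} (hp : p ∈ J) (hq : q ∈ J)
    (h1 : Real.pi/2 < (br S ρ p e).im) : Real.pi/2 < (br S ρ q e).im := by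
  refine stay_above hJ (φ := fun c => (br S ρ c e).im)
    (Complex.continuous_im.comp_continuousOn ((h.br_base he).mono hJS)) ?_ hp h1 q hq
  intro z hz
  exact (re_neg_ne (h.br_exp (hJS hz) he) (by simpa using hlt z hz)).2.1

lemma above_plus {C D : Set ℂ} (hC : Tail C 0) (hD : Tail D 0) (hab : LiesAbove C D) {c : ℂ} (hc : c ∈ C) :
    D ⊆ tdom C 0 ∧ ∃ m : ℝ, ∀ d' ∈ D, d'.re < m → (br C 0 c d').im < -(Real.pi/2) := by
  obtain ⟨s, ⟨hs1, hs2, hs3, hs4⟩, -, hCG⟩ := hab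
  set T0 : ℂ := 1 + 2 * (Real.pi:ℂ) * Complex.I with hT0
  have hT0re : T0.re = 1 := by simp [hT0]
  have hT0im : T0.im = 2 * Real.pi := by simp [hT0]
  have hsc : IsCompact (s '' Icc 0 1) := isCompact_Icc.image_of_continuousOn hs1
  have hRcl : IsClosed (AboveRay s) := hsc.isClosed.union isClosed_posray
  have hcl : IsClosed (D ∪ AboveRay s) := hD.closed.union hRcl
  have hT0G : T0 ∈ connectedComponentIn (D ∪ AboveRay s)ᶜ T0 :=
    mem_connectedComponentIn (connectedComponentIn_nonempty_iff.1 ⟨c, hCG hc⟩)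
  obtain ⟨J, hJc, hJp, hJO, hcJ, hTJ⟩ := join_compact isPreconnected_connectedComponentIn
    hcl.isOpen_compl (connectedComponentIn_subset _ _) (hCG hc) hT0G
  obtain ⟨m, M, hmM⟩ := isCompact_re_bdd hJc
  set N : ℝ := max M 2 with hN
  have hN2 : 2 ≤ N := le_max_right _ _
  set S : Set ℂ := C ∪ J with hS
  have hTail : Tail S N := by
    refine ⟨hC.closed.union hJc.isClosed, hC.conn.union c hc hcJ hJp, ?_, ?_⟩
    · rintro z (hz | hz)
      · linarith [hC.lt z hz]
      · exact (hmM z hz).2.trans_le (le_max_left _ _)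
    · intro m; obtain ⟨z, hz, h⟩ := hC.unb m; exact ⟨z, Or.inl hz, h⟩
  have hTS : T0 ∈ S := Or.inr hTJ
  have hSd : S ⊆ (D ∪ AboveRay s)ᶜ := union_subset (hCG.trans (connectedComponentIn_subset _ _)) hJO
  set P1 : Set ℂ := Complex.ofReal '' Ici (0:ℝ) with hP1
  set P2 : Set ℂ := D ∪ s '' Icc 0 1 with hP2
  have h01 : (0:ℂ) ∈ s '' Icc 0 1 := ⟨1, by simp, hs4⟩
  have hP2c : IsPreconnected P2 :=
    hD.conn.union (s 0) hs3 ⟨0, by simp, rfl⟩ (isPreconnected_Icc.image _ hs1)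
  have h0P1 : (0:ℂ) ∈ P1 := ⟨0, by simp, by simp⟩
  have hP12 : IsPreconnected (P1 ∪ P2) := isPre_posray.union 0 h0P1 (Or.inr h01) hP2c
  have hPS : P1 ∪ P2 ⊆ Sᶜ := by
    rintro z (hz | hz | hz) hzS
    · exact hSd hzS (Or.inr (Or.inr hz))
    · exact hSd hzS (Or.inl hz)
    · exact hSd hzS (Or.inr (Or.inl hz))
  have hPdom : P1 ∪ P2 ⊆ tdom S N := tdom_of hP12 hPS (e := (N:ℂ))
    (Or.inl ⟨N, by simp; linarith, rfl⟩) (hTail.right (by simp))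
  have hcontψ : ContinuousOn (fun e => (br S N T0 e).im) (tdom S N) :=
    Complex.continuous_im.comp_continuousOn (hTail.br_cont hTS)
  have him : ∀ z ∈ P1, (z - T0).im = - (2 * Real.pi) := by
    rintro _ ⟨t, -, rfl⟩; simp [hT0im]
  have hpi := Real.pi_pos
  have hne1 : ∀ z ∈ P1, (br S N T0 z).im ≠ 0 ∧ (br S N T0 z).im ≠ Real.pi ∧ (br S N T0 z).im ≠ -Real.pi :=
    fun z hz => im_ne_ne (hTail.br_exp hTS (hPdom (Or.inl hz))) (by rw [him z hz]; linarith)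
  have hNP1 : (N:ℂ) ∈ P1 := ⟨N, by simp; linarith, rfl⟩
  have hatN : (br S N T0 N).im ∈ Ioo (-Real.pi) 0 := by
    have h1 := hne1 N hNP1
    rw [hTail.br_right hTS (by simp), Complex.log_im] at h1 ⊢
    refine ⟨Complex.neg_pi_lt_arg _, ?_⟩
    rw [Complex.arg_neg_iff, him N hNP1]; linarith
  have hat1 := stay_between isPre_posray (hcontψ.mono (subset_union_left.trans hPdom))
    (fun e he => (hne1 e he).2.2) (fun e he => (hne1 e he).1) hNP1 hatN
  have h0dom : (0:ℂ) ∈ tdom S N := hPdom (Or.inl h0P1)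
  have hat0 : (br S N T0 0).im < -(Real.pi/2) := by
    by_contra hcon
    have h1 := re_neg_cos (hTail.br_exp hTS h0dom) (by simp [hT0re])
    have h2 := hat1 0 h0P1
    have := Real.cos_nonneg_of_mem_Icc (x := (br S N T0 0).im) ⟨not_lt.1 hcon, by linarith [h2.2]⟩
    linarith
  have hat2 : ∀ e ∈ P2, (br S N T0 e).im < -(Real.pi/2) := by
    refine stay_below hP2c (hcontψ.mono (subset_union_right.trans hPdom)) ?_ (Or.inr h01) hat0
    intro e he
    refine (re_neg_ne (hTail.br_exp hTS (hPdom (Or.inr he))) ?_).1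
    rw [Complex.sub_re, hT0re]
    rcases he with he | ⟨u, hu, rfl⟩
    · linarith [hD.lt e he]
    · linarith [(hs2 u hu).1]
  have hDdom : D ⊆ tdom S N := fun z hz => hPdom (Or.inr (Or.inl hz))
  refine ⟨hDdom.trans (hC.mono_dom hTail subset_union_left), m, ?_⟩
  intro d' hd' hlt
  rw [hC.br_mono hTail subset_union_left hc (hDdom hd')]
  exact hTail.move_below hJp subset_union_right (hDdom hd') (fun z hz => hlt.trans (hmM z hz).1) hTJ hcJ
    (hat2 d' (Or.inl hd'))

lemma above_minus {C D : Set ℂ} (hC : Tail C 0) (hD : Tail D 0) (hab : LiesAbove C D)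
    (hCne : C.Nonempty) {d : ℂ} (hd : d ∈ D) :
    C ⊆ tdom D 0 ∧ ∃ m : ℝ, ∀ c' ∈ C, c'.re < m → Real.pi/2 < (br D 0 d c').im := by
  obtain ⟨c, hc⟩ := hCne
  obtain ⟨s, ⟨hs1, hs2, hs3, hs4⟩, -, hCG⟩ := hab
  set T0 : ℂ := 1 + 2 * (Real.pi:ℂ) * Complex.I with hT0
  have hT0re : T0.re = 1 := by simp [hT0]
  have hT0im : T0.im = 2 * Real.pi := by simp [hT0]
  have hsc : IsCompact (s '' Icc 0 1) := isCompact_Icc.image_of_continuousOn hs1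
  have hRcl : IsClosed (AboveRay s) := hsc.isClosed.union isClosed_posray
  have hcl : IsClosed (D ∪ AboveRay s) := hD.closed.union hRcl
  have hT0G : T0 ∈ connectedComponentIn (D ∪ AboveRay s)ᶜ T0 :=
    mem_connectedComponentIn (connectedComponentIn_nonempty_iff.1 ⟨c, hCG hc⟩)
  obtain ⟨J, hJc, hJp, hJO, hcJ, hTJ⟩ := join_compact isPreconnected_connectedComponentIn
    hcl.isOpen_compl (connectedComponentIn_subset _ _) (hCG hc) hT0G
  obtain ⟨m, M, hmM⟩ := isCompact_re_bdd hJc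
  set N : ℝ := max M 2 with hN
  have hN2 : 2 ≤ N := le_max_right _ _
  have hCJD : C ∪ J ⊆ (D ∪ AboveRay s)ᶜ := union_subset (hCG.trans (connectedComponentIn_subset _ _)) hJO
  obtain ⟨Jd, hJdc, hJdp, hJdO, hdJd, hsJd⟩ := join_compact (O := {z : ℂ | z.re < 0} ∩ (C ∪ J)ᶜ) hD.conn
    ((isOpen_lt Complex.continuous_re continuous_const).inter (hC.closed.union hJc.isClosed).isOpen_compl)
    (show D ⊆ {z : ℂ | z.re < 0} ∩ (C ∪ J)ᶜ from
      fun z hz => ⟨hD.lt z hz, fun h => hCJD h (Or.inl hz)⟩) hd hs3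
  set I : Set ℂ := Complex.ofReal '' Icc (0:ℝ) N with hI
  have hIc : IsCompact I := isCompact_Icc.image Complex.continuous_ofReal
  have hIp : IsPreconnected I := isPreconnected_Icc.image _ Complex.continuous_ofReal.continuousOn
  set Q : Set ℂ := (Jd ∪ s '' Icc 0 1) ∪ I with hQ
  have h0I : (0:ℂ) ∈ I := ⟨0, ⟨le_rfl, by linarith⟩, by simp⟩
  have h01 : (0:ℂ) ∈ s '' Icc 0 1 := ⟨1, by simp, hs4⟩
  have hQc : IsCompact Q := (hJdc.union hsc).union hIc
  have hQp : IsPreconnected Q :=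
    (hJdp.union (s 0) hsJd (mem_image_of_mem s (by simp)) (isPreconnected_Icc.image _ hs1)).union 0 (Or.inr h01) h0I hIp
  have hdQ : d ∈ Q := Or.inl (Or.inl hdJd)
  have hNQ : (N:ℂ) ∈ Q := Or.inr ⟨N, ⟨by linarith, le_rfl⟩, rfl⟩
  set S : Set ℂ := D ∪ Q with hS
  have hTail : Tail S (N+1) := by
    refine ⟨hD.closed.union hQc.isClosed, hD.conn.union d hd hdQ hQp, ?_, ?_⟩
    · rintro z (hz | (hz | ⟨u, hu, rfl⟩) | ⟨u, hu, rfl⟩)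
      · linarith [hD.lt z hz]
      · have : z.re < 0 := (hJdO hz).1
        linarith
      · linarith [(hs2 u hu).1]
      · simp; linarith [hu.2]
    · intro m; obtain ⟨z, hz, h⟩ := hD.unb m; exact ⟨z, Or.inl hz, h⟩
  have hNS : (N:ℂ) ∈ S := Or.inr hNQ
  set P1 : Set ℂ := (fun t : ℝ => T0 + t) '' Ici (0:ℝ) with hP1
  have hP1p : IsPreconnected P1 := isPreconnected_Ici.image _ (by fun_prop)
  have hTP1 : T0 ∈ P1 := ⟨0, by simp, by simp⟩
  have hP2c : IsPreconnected (C ∪ J) := hC.conn.union c hc hcJ hJp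
  have hP12 : IsPreconnected (P1 ∪ (C ∪ J)) := hP1p.union T0 hTP1 (Or.inr hTJ) hP2c
  have hpi := Real.pi_pos
  have hPS : P1 ∪ (C ∪ J) ⊆ Sᶜ := by
    rintro z (⟨t, ht, rfl⟩ | hz) hzS
    · have hre : (T0 + t).re = 1 + t := by simp [hT0re]
      have him : (T0 + t).im = 2 * Real.pi := by simp [hT0im]
      have ht' : 0 ≤ t := ht
      rcases hzS with hz | (hz | ⟨u, hu, hz⟩) | ⟨u, hu, hz⟩
      · linarith [hD.lt _ hz]
      · have : (T0 + t).re < 0 := (hJdO hz).1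
        linarith
      · have := (hs2 u hu).1
        rw [hz] at this
        have h3 : (T0 + t).re ≤ 0 := this
        linarith
      · have h3 : (T0 + t).im = 0 := by
          have := congrArg Complex.im hz
          simpa using this.symm
        linarith
    · rcases hzS with h | (h | h) | ⟨u, hu, h⟩
      · exact hCJD hz (Or.inl h)
      · exact (hJdO h).2 hz
      · exact hCJD hz (Or.inr (Or.inl h))
      · exact hCJD hz (Or.inr (Or.inr ⟨u, hu.1, h⟩))
  set r : ℂ := T0 + (N : ℝ) with hr
  have hrP1 : r ∈ P1 := ⟨N, by simp; linarith, rfl⟩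
  have hrre : r.re = N + 1 := by simp [hr, hT0re]; ring
  have hPdom : P1 ∪ (C ∪ J) ⊆ tdom S (N+1) := tdom_of hP12 hPS (e := r)
    (Or.inl hrP1) (hTail.right (by rw [hrre]))
  have hcontψ : ContinuousOn (fun e => (br S (N+1) N e).im) (tdom S (N+1)) :=
    Complex.continuous_im.comp_continuousOn (hTail.br_cont hNS)
  have him : ∀ z ∈ P1, (z - (N:ℂ)).im = 2 * Real.pi := by
    rintro _ ⟨t, -, rfl⟩; simp [hT0im]
  have hne1 : ∀ z ∈ P1, (br S (N+1) N z).im ≠ 0 ∧ (br S (N+1) N z).im ≠ Real.pi ∧ (br S (N+1) N z).im ≠ -Real.pi :=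
    fun z hz => im_ne_ne (hTail.br_exp hNS (hPdom (Or.inl hz))) (by rw [him z hz]; linarith)
  have hatN : (br S (N+1) N r).im ∈ Ioo 0 Real.pi := by
    have h1 := hne1 r hrP1
    rw [hTail.br_right hNS (by rw [hrre]), Complex.log_im] at h1 ⊢
    refine ⟨lt_of_le_of_ne ?_ (Ne.symm h1.1), lt_of_le_of_ne (Complex.arg_le_pi _) h1.2.1⟩
    rw [Complex.arg_nonneg_iff, him r hrP1]; linarith
  have hat1 := stay_between hP1p (hcontψ.mono (subset_union_left.trans hPdom))
    (fun e he => (hne1 e he).1) (fun e he => (hne1 e he).2.1) hrP1 hatN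
  have hat0 : Real.pi/2 < (br S (N+1) N T0).im := by
    by_contra hcon
    have h1 := re_neg_cos (hTail.br_exp hNS (hPdom (Or.inl hTP1))) (by simp [hT0re]; linarith)
    have h2 := hat1 T0 hTP1
    have := Real.cos_nonneg_of_mem_Icc (x := (br S (N+1) N T0).im) ⟨by linarith [h2.1], not_lt.1 hcon⟩
    linarith
  have hat2 : ∀ e ∈ C ∪ J, Real.pi/2 < (br S (N+1) N e).im := by
    refine stay_above hP2c (hcontψ.mono (subset_union_right.trans hPdom)) ?_ (Or.inr hTJ) hat0
    intro e he
    refine (re_neg_ne (hTail.br_exp hNS (hPdom (Or.inr he))) ?_).2.1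
    rw [Complex.sub_re, Complex.ofReal_re]
    rcases he with he | he
    · linarith [hC.lt e he]
    · have : M ≤ N := le_max_left _ _
      linarith [(hmM e he).2]
  have hCdom : C ⊆ tdom S (N+1) := fun z hz => hPdom (Or.inr (Or.inl hz))
  obtain ⟨m', M', hmM'⟩ := isCompact_re_bdd hQc
  refine ⟨hCdom.trans (hD.mono_dom hTail subset_union_left), m', ?_⟩
  intro d' hd' hlt
  rw [hD.br_mono hTail subset_union_left hd (hCdom hd')]
  exact hTail.move_above hQp subset_union_right (hCdom hd') (fun z hz => hlt.trans (hmM' z hz).1) hNQ hdQ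
    (hat2 d' (Or.inl hd'))

open Set Metric Topology Filter

/-! ### Part 5: abstract setup; the compact upper part -/

structure Good (A B : Set ℂ) (σ : ℝ) : Prop where
  acl : IsClosed A
  bcl : IsClosed B
  disj : ∀ z ∈ A, z ∉ B
  ane : A.Nonempty
  bne : B.Nonempty
  aneg : ∀ z ∈ A, z.re < 0
  bneg : ∀ z ∈ B, z.re < 0
  sg : σ = 1 ∨ σ = -1
  bdd : ∀ P ⊆ A ∪ B, IsPreconnected P → ∀ M : ℝ, (∀ z ∈ P, M ≤ z.re) → Bornology.IsBounded P
  aunb : ∀ a ∈ A, ∀ m : ℝ, ∃ z ∈ connectedComponentIn A a, z.re < m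
  bunb : ∀ b ∈ B, ∀ m : ℝ, ∃ z ∈ connectedComponentIn B b, z.re < m
  dense : ∀ x0 : ℝ, ∃ κ : ℝ, ∀ z : ℂ, z.re ≤ x0 → ∃ x ∈ A ∪ B, dist z x ≤ κ
  pab : ∀ c ∈ A, ∀ d ∈ B, connectedComponentIn B d ⊆ tdom (connectedComponentIn A c) 0 ∧
    ∃ m : ℝ, ∀ d' ∈ connectedComponentIn B d, d'.re < m →
      σ * (br (connectedComponentIn A c) 0 c d').im < -(Real.pi/2)
  pba : ∀ c ∈ A, ∀ d ∈ B, connectedComponentIn A c ⊆ tdom (connectedComponentIn B d) 0 ∧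
    ∃ m : ℝ, ∀ c' ∈ connectedComponentIn A c, c'.re < m →
      -σ * (br (connectedComponentIn B d) 0 d c').im < -(Real.pi/2)

lemma tail_of {A : Set ℂ} (hA : IsClosed A) (hn : ∀ z ∈ A, z.re < 0) {a : ℂ}
    (hu : ∀ m : ℝ, ∃ z ∈ connectedComponentIn A a, z.re < m) : Tail (connectedComponentIn A a) 0 :=
  ⟨isClosed_ccIn hA a, isPreconnected_connectedComponentIn,
    fun z hz => hn z (connectedComponentIn_subset _ _ hz), hu⟩

lemma good_of {X : Set ℂ} (hXcpt : IsCompact X) (hXconn : IsConnected X)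
    (hXns : IsConnected Xᶜ) (h0 : (0:ℂ) ∈ frontier X) (hXb : X ⊆ Metric.ball 0 1)
    {A B : Set ℂ} (hAB : hatSet X = A ∪ B) (hdisj : Disjoint A B)
    (hAcl : IsClosed A) (hBcl : IsClosed B)
    (hAne : A.Nonempty) (hBne : B.Nonempty) (habove : LiesAboveSets A B) : Good A B 1 := by
  have haneg : ∀ z ∈ A, z.re < 0 := fun z hz => hat_neg hXb (hAB ▸ Or.inl hz)
  have hbneg : ∀ z ∈ B, z.re < 0 := fun z hz => hat_neg hXb (hAB ▸ Or.inr hz)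
  have haunb : ∀ a ∈ A, ∀ m : ℝ, ∃ z ∈ connectedComponentIn A a, z.re < m := fun a ha m =>
    hat_unb hXcpt hXconn.isPreconnected hXns.isPreconnected h0 hXb hAB hdisj hAcl hBcl ha m
  have hbunb : ∀ a ∈ B, ∀ m : ℝ, ∃ z ∈ connectedComponentIn B a, z.re < m := fun a ha m =>
    hat_unb hXcpt hXconn.isPreconnected hXns.isPreconnected h0 hXb (hAB.trans (union_comm A B))
      hdisj.symm hBcl hAcl ha m
  refine ⟨hAcl, hBcl, fun z h1 h2 => hdisj.le_bot ⟨h1, h2⟩, hAne, hBne, haneg, hbneg, Or.inl rfl, ?_, haunb, hbunb, ?_, ?_, ?_⟩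
  · intro P hP hPc M hM
    exact hat_bdd hXcpt hXns.isPreconnected h0 hXb (hAB ▸ hP) hPc hM
  · intro x0
    obtain ⟨a, ha⟩ := hAne
    rw [← hAB]
    exact hat_dense isPreconnected_connectedComponentIn (haunb a ha) ⟨a, mem_connectedComponentIn ha⟩
      ((connectedComponentIn_subset _ _).trans (hAB ▸ subset_union_left)) x0
  · intro c hc d hd
    have := above_plus (tail_of hAcl haneg (haunb c hc)) (tail_of hBcl hbneg (hbunb d hd))
      (habove _ ⟨c, hc, rfl⟩ _ ⟨d, hd, rfl⟩) (mem_connectedComponentIn hc)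
    simpa using this
  · intro c hc d hd
    obtain ⟨h1, m, h2⟩ := above_minus (tail_of hAcl haneg (haunb c hc)) (tail_of hBcl hbneg (hbunb d hd))
      (habove _ ⟨c, hc, rfl⟩ _ ⟨d, hd, rfl⟩) ⟨c, mem_connectedComponentIn hc⟩ (mem_connectedComponentIn hd)
    refine ⟨h1, m, fun c' hc' hm => ?_⟩
    linarith [h2 c' hc' hm]

namespace Good
variable {A B : Set ℂ} {σ : ℝ}

lemma symm (h : Good A B σ) : Good B A (-σ) where
  acl := h.bcl
  bcl := h.acl
  disj := fun z hz hz' => h.disj z hz' hz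
  ane := h.bne
  bne := h.ane
  aneg := h.bneg
  bneg := h.aneg
  sg := by rcases h.sg with h | h <;> simp [h]
  bdd := fun P hP => h.bdd P (union_comm B A ▸ hP)
  aunb := h.bunb
  bunb := h.aunb
  dense := by rw [union_comm]; exact h.dense
  pab := fun c hc d hd => h.pba d hd c hc
  pba := fun c hc d hd => by rw [neg_neg]; exact h.pab d hd c hc

lemma tailA (h : Good A B σ) {a : ℂ} (ha : a ∈ A) : Tail (connectedComponentIn A a) 0 :=
  tail_of h.acl h.aneg (h.aunb a ha)

lemma tailB (h : Good A B σ) {b : ℂ} (hb : b ∈ B) : Tail (connectedComponentIn B b) 0 :=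
  tail_of h.bcl h.bneg (h.bunb b hb)

lemma sq (h : Good A B σ) : σ * σ = 1 := by rcases h.sg with h | h <;> simp [h]

lemma B_sub (h : Good A B σ) {c : ℂ} (hc : c ∈ A) : B ⊆ tdom (connectedComponentIn A c) 0 :=
  fun b hb => (h.pab c hc b hb).1 (mem_connectedComponentIn hb)

lemma im_zero (h : Good A B σ) {w u : ℂ} (he : Complex.exp w = u) (h0 : σ * w.im = 0) :
    u = ((‖u‖ : ℝ) : ℂ) := by
  have hw : w.im = 0 := by
    have := h.sq
    calc w.im = σ * (σ * w.im) := by rw [← mul_assoc, this, one_mul]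
      _ = 0 := by rw [h0, mul_zero]
  have hw' : w = (w.re : ℂ) := by apply Complex.ext <;> simp [hw]
  rw [← he, Complex.norm_exp, Complex.ofReal_exp, ← hw']

lemma upper_bdd (h : Good A B σ) {c : ℂ} (hc : c ∈ A) :
    ∃ r : ℝ, ∀ b ∈ B, 0 ≤ σ * (br (connectedComponentIn A c) 0 c b).im → dist b c ≤ r := by
  set C := connectedComponentIn A c with hC
  have hT : Tail C 0 := h.tailA hc
  have hcC : c ∈ C := mem_connectedComponentIn hc
  have hBd : B ⊆ tdom C 0 := h.B_sub hc
  set ψ : ℂ → ℝ := fun e => σ * (br C 0 c e).im with hψ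
  have hψc : ContinuousOn ψ B := continuousOn_const.mul
    (Complex.continuous_im.comp_continuousOn ((hT.br_cont hcC).mono hBd))
  set Bu : Set ℂ := B ∩ ψ ⁻¹' (Ici 0) with hBu
  set Bd : Set ℂ := B ∩ ψ ⁻¹' (Iic 0) with hBdd
  have hBucl : IsClosed Bu := hψc.preimage_isClosed_of_isClosed h.bcl isClosed_Ici
  have hBdcl : IsClosed Bd := hψc.preimage_isClosed_of_isClosed h.bcl isClosed_Iic
  have hfar : ∀ b ∈ B, ∃ m : ℝ, ∀ d' ∈ connectedComponentIn B b, d'.re < m → ψ d' < 0 := by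
    intro b hb
    obtain ⟨m, hm⟩ := (h.pab c hc b hb).2
    exact ⟨m, fun d' hd' hlt => (hm d' hd' hlt).trans (by linarith [Real.pi_pos])⟩
  have hcomp : ∀ b ∈ Bu, Bornology.IsBounded (connectedComponentIn Bu b) := by
    intro b hb
    obtain ⟨m, hm⟩ := hfar b hb.1
    refine h.bdd _ ((connectedComponentIn_subset _ _).trans (inter_subset_left.trans subset_union_right))
      isPreconnected_connectedComponentIn m ?_
    intro z hz
    by_contra hcon
    have h1 : z ∈ connectedComponentIn B b := connectedComponentIn_mono b inter_subset_left hz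
    have h2 : 0 ≤ ψ z := (connectedComponentIn_subset _ _ hz).2
    linarith [hm z h1 (not_le.1 hcon)]
  set Z : Set ℂ := Bu ∩ Bd with hZ
  have hZc : IsCompact Z := by
    refine Metric.isCompact_of_isClosed_isBounded (hBucl.inter hBdcl) ?_
    refine (isBounded_closedBall (x := c) (r := -c.re)).subset ?_
    rintro b ⟨⟨hb, h1⟩, -, h2⟩
    have h3 : ψ b = 0 := le_antisymm h2 h1
    have h4 := h.im_zero (hT.br_exp hcC (hBd hb)) h3
    have h5 := congrArg Complex.re h4
    rw [mem_closedBall, Complex.dist_eq]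
    simp only [Complex.sub_re, Complex.ofReal_re] at h5
    linarith [h.bneg b hb]
  have hN : ∀ b ∈ Z, ∃ N U : Set ℂ, IsCompact N ∧ b ∈ U ∧ IsOpen U ∧ N = Bu ∩ U := by
    intro b hb
    obtain ⟨N, U, h1, h2, -, h4, h5⟩ := cpt_nbhd hBucl hb.1 (hcomp b hb.1) isOpen_univ (subset_univ _)
    refine ⟨N, U, h1, ?_, h4, h5⟩
    have := h2 (mem_connectedComponentIn hb.1)
    rw [h5] at this; exact this.2
  choose! N U hN1 hN2 hN3 hN4 using hN
  obtain ⟨t, ht, htZ⟩ := hZc.elim_nhds_subcover U (fun b hb => (hN3 b hb).mem_nhds (hN2 b hb))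
  set UU : Set ℂ := ⋃ x ∈ t, U x with hUU
  have hUUo : IsOpen UU := isOpen_biUnion fun x hx => hN3 x (ht x hx)
  have hNN : Bu ∩ UU = ⋃ x ∈ t, N x := by
    rw [hUU, inter_iUnion₂]
    exact iUnion₂_congr fun x hx => (hN4 x (ht x hx)).symm
  have hNNc : IsCompact (Bu ∩ UU) := by
    rw [hNN]; exact t.isCompact_biUnion fun x hx => hN1 x (ht x hx)
  have hsub : Bu ⊆ UU := by
    intro b hb
    by_contra hbU
    have hpre : IsPreconnected (connectedComponentIn B b) := isPreconnected_connectedComponentIn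
    have hbC : b ∈ connectedComponentIn B b := mem_connectedComponentIn hb.1
    obtain ⟨m, hm⟩ := hfar b hb.1
    obtain ⟨z, hz, hzm⟩ := h.bunb b hb.1 m
    have hzB : z ∈ B := connectedComponentIn_subset _ _ hz
    rw [isPreconnected_closed_iff] at hpre
    obtain ⟨x, -, hx1, hx2⟩ := hpre (Bu \ UU) (Bd ∪ (Bu ∩ UU)) (hBucl.sdiff hUUo) (hBdcl.union hNNc.isClosed)
      (by
        intro x hx
        have hxB : x ∈ B := connectedComponentIn_subset _ _ hx
        rcases le_total (ψ x) 0 with h0 | h0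
        · exact Or.inr (Or.inl ⟨hxB, h0⟩)
        · by_cases hxU : x ∈ UU
          · exact Or.inr (Or.inr ⟨⟨hxB, h0⟩, hxU⟩)
          · exact Or.inl ⟨⟨hxB, h0⟩, hxU⟩)
      ⟨b, hbC, hb, hbU⟩ ⟨z, hz, Or.inl ⟨hzB, (hm z hz hzm).le⟩⟩
    rcases hx2 with hx2 | hx2
    · exact hx1.2 (htZ ⟨hx1.1, hx2⟩)
    · exact hx1.2 hx2.2
  rw [inter_eq_left.2 hsub] at hNNc
  obtain ⟨r, hr⟩ := hNNc.isBounded.subset_closedBall c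
  exact ⟨r, fun b hb hb' => hr ⟨hb, hb'⟩⟩

end Good

open Set Metric Topology Filter

/-! ### Part 6: connectedness of the Voronoi regions -/

def VA (A B : Set ℂ) : Set ℂ := {z | infDist z A < infDist z B}

lemma cos_le_cos_arc {α θ : ℝ} (h0 : 0 ≤ α) (h1 : α ≤ θ) (h2 : θ ≤ 2 * Real.pi - α) :
    Real.cos θ ≤ Real.cos α := by
  rcases le_total θ Real.pi with h | h
  · exact Real.cos_le_cos_of_nonneg_of_le_pi h0 h h1
  · rw [← Real.cos_two_pi_sub θ]
    exact Real.cos_le_cos_of_nonneg_of_le_pi h0 (by linarith) (by linarith)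

lemma segment_near {A : Set ℂ} {z a : ℂ} (ha : a ∈ A) (hd : infDist z A = dist z a)
    {p : ℂ} (hp : p ∈ segment ℝ z a) : infDist p A = dist p a ∧ dist z p + dist p a = dist z a := by
  have h1 : dist z p + dist p a = dist z a := dist_add_dist_of_mem_segment hp
  refine ⟨le_antisymm (infDist_le_dist_of_mem ha) ?_, h1⟩
  have h2 := infDist_le_infDist_add_dist (s := A) (x := z) (y := p)
  linarith

lemma segment_VA {A B : Set ℂ} {z a : ℂ} (hz : z ∈ VA A B) (ha : a ∈ A) (hd : infDist z A = dist z a) :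
    segment ℝ z a ⊆ VA A B := by
  intro p hp
  obtain ⟨h1, h2⟩ := segment_near ha hd hp
  have h3 := infDist_le_infDist_add_dist (s := B) (x := z) (y := p)
  have h4 : infDist z A < infDist z B := hz
  change infDist p A < infDist p B
  linarith

namespace Good
variable {A B : Set ℂ} {σ : ℝ}

lemma mem_VA_of_mem (h : Good A B σ) {a : ℂ} (ha : a ∈ A) : a ∈ VA A B := by
  change infDist a A < infDist a B
  rw [infDist_zero_of_mem ha]
  exact (h.bcl.notMem_iff_infDist_pos h.bne).1 (h.disj a ha)

/-- nearest point of `B` on the far side, reached along the circle -/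
lemma no_near_B (h : Good A B σ) {c : ℂ} (hc : c ∈ A) {x0 κ r ρ : ℝ} (hx0 : 0 < x0)
    (hκ : ∀ z : ℂ, z.re ≤ x0 → ∃ x ∈ A ∪ B, dist z x ≤ κ)
    (hr : ∀ b ∈ B, 0 ≤ σ * (br (connectedComponentIn A c) 0 c b).im → dist b c ≤ r)
    (h1 : r + κ < ρ) (h2 : κ + x0 - c.re < ρ) {z : ℂ} (hzρ : dist z c = ρ) (hzx : z.re ≤ x0)
    (hzd : z ∈ tdom (connectedComponentIn A c) 0)
    (hψ : 0 < σ * (br (connectedComponentIn A c) 0 c z).im) : z ∈ VA A B := by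
  by_contra hcon
  have hf : infDist z B ≤ infDist z A := not_lt.1 hcon
  set C := connectedComponentIn A c with hC
  have hT : Tail C 0 := h.tailA hc
  have hcC : c ∈ C := mem_connectedComponentIn hc
  obtain ⟨b, hb, hbd⟩ := h.bcl.exists_infDist_eq_dist h.bne z
  have hbκ : dist z b ≤ κ := by
    obtain ⟨x, hx | hx, hxd⟩ := hκ z hzx
    · rw [← hbd]; exact hf.trans ((infDist_le_dist_of_mem hx).trans hxd)
    · rw [← hbd]; exact (infDist_le_dist_of_mem hx).trans hxd
  have hseg : segment ℝ z b ⊆ Cᶜ := by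
    intro p hp hpC
    have hpA : p ∈ A := connectedComponentIn_subset _ _ hpC
    obtain ⟨e1, e2⟩ := segment_near hb hbd hp
    have e3 := infDist_le_dist_of_mem (x := z) hpA
    have e4 : dist p b ≤ 0 := by linarith
    have : p = b := dist_le_zero.1 e4
    exact h.disj p hpA (this ▸ hb)
  have hpre : IsPreconnected (segment ℝ z b) := (convex_segment z b).isPreconnected
  have hsd : segment ℝ z b ⊆ tdom C 0 := tdom_of hpre hseg (left_mem_segment ℝ z b) hzd
  have hst := stay_above hpre (φ := fun e => σ * (br C 0 c e).im) (l := 0)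
    (continuousOn_const.mul (Complex.continuous_im.comp_continuousOn ((hT.br_cont hcC).mono hsd)))
    (by
      intro p hp h0
      have e1 := h.im_zero (hT.br_exp hcC (hsd hp)) h0
      have e2 := congrArg Complex.re e1
      simp only [Complex.sub_re, Complex.ofReal_re] at e2
      have e3 : dist z p + dist p b = dist z b := dist_add_dist_of_mem_segment hp
      have e4 := dist_triangle z p c
      have e5 : p.re ≤ x0 := by
        have : segment ℝ z b ⊆ {w : ℂ | w.re ≤ x0} :=
          (convex_halfSpace_re_le x0).segment_subset hzx ((h.bneg b hb).le.trans hx0.le)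
        exact this hp
      rw [← Complex.dist_eq] at e2
      have := dist_nonneg (x := p) (y := b)
      linarith)
    (left_mem_segment ℝ z b) hψ b (right_mem_segment ℝ z b)
  have e1 := hr b hb (le_of_lt hst)
  have e2 := dist_triangle z b c
  linarith

lemma arc (h : Good A B σ) {c : ℂ} (hc : c ∈ A) {x0 : ℝ} (hx0 : 0 < x0) :
    ∃ y0 : ℝ, ∀ y ≥ y0, ∃ Γ ⊆ VA A B, IsPreconnected Γ ∧ ((x0 : ℂ) + (σ * y : ℝ) * Complex.I) ∈ Γ ∧
      ∃ c' ∈ connectedComponentIn A c, c' ∈ Γ := by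
  obtain ⟨κ, hκ⟩ := h.dense x0
  obtain ⟨r, hr⟩ := h.upper_bdd hc
  set C := connectedComponentIn A c with hC
  have hT : Tail C 0 := h.tailA hc
  have hcC : c ∈ C := mem_connectedComponentIn hc
  have hcneg : c.re < 0 := h.aneg c hc
  have hpi := Real.pi_pos
  refine ⟨|c.im| + |r| + |κ| + x0 + |c.re| + 1, fun y hy => ?_⟩
  set z0 : ℂ := (x0 : ℂ) + (σ * y : ℝ) * Complex.I with hz0
  have hz0re : z0.re = x0 := by simp [hz0]
  have hz0im : z0.im = σ * y := by simp [hz0]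
  set ρ : ℝ := ‖z0 - c‖ with hρ
  set α : ℝ := σ * (z0 - c).arg with hα
  have hσim : |c.im| < y ∧ y - |c.im| ≤ σ * (z0 - c).im := by
    have e1 : σ * (z0 - c).im = y - σ * c.im := by
      rw [Complex.sub_im, hz0im, mul_sub, ← mul_assoc, h.sq, one_mul]
    have e2 : σ * c.im ≤ |c.im| := by
      rcases h.sg with h | h <;> rw [h]
      · simpa using le_abs_self c.im
      · simpa using neg_le_abs c.im
    constructor
    · linarith [abs_nonneg r, abs_nonneg κ, abs_nonneg c.re]
    · linarith
  have hρy : y - |c.im| ≤ ρ := by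
    have : σ * (z0 - c).im ≤ |(z0 - c).im| := by
      rcases h.sg with h | h <;> rw [h]
      · rw [one_mul]; exact le_abs_self _
      · rw [neg_one_mul]; exact neg_le_abs _
    exact hσim.2.trans (this.trans (Complex.abs_im_le_norm _))
  have hρ1 : r + κ < ρ := by
    linarith [le_abs_self r, le_abs_self κ, abs_nonneg c.re]
  have hρ2 : κ + x0 - c.re < ρ := by
    linarith [neg_abs_le c.re, le_abs_self κ, abs_nonneg r]
  have hρ0 : 0 < ρ := by linarith [hσim.1]
  have hre0 : 0 < (z0 - c).re := by rw [Complex.sub_re, hz0re]; linarith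
  have hα1 : 0 < α ∧ α < Real.pi / 2 := by
    have e1 := abs_lt.1 (Complex.abs_arg_lt_pi_div_two_iff.2 (Or.inl hre0))
    have e2 : 0 < σ * (z0 - c).im := by linarith [hσim.1, hσim.2]
    rcases h.sg with hs | hs
    · rw [hα, hs, one_mul]
      rw [hs, one_mul] at e2
      refine ⟨lt_of_le_of_ne (Complex.arg_nonneg_iff.2 e2.le) ?_, e1.2⟩
      intro h0
      rw [eq_comm, Complex.arg_eq_zero_iff] at h0
      linarith [h0.2]
    · rw [hα, hs]
      rw [hs] at e2
      have : (z0 - c).arg < 0 := Complex.arg_neg_iff.2 (by linarith)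
      constructor <;> linarith [e1.1]
  set w : ℝ → ℂ := fun θ => c + ρ * Complex.exp ((σ * θ : ℝ) * Complex.I) with hw
  have hwc : Continuous w := by
    rw [hw]; fun_prop
  have hwα : w α = z0 := by
    simp only [hw, hα]
    rw [← mul_assoc, h.sq, one_mul, hρ, Complex.norm_mul_exp_arg_mul_I]; ring
  have hwd : ∀ θ, dist (w θ) c = ρ := by
    intro θ
    rw [Complex.dist_eq]
    simp only [hw, add_sub_cancel_left, norm_mul, Complex.norm_exp_ofReal_mul_I, mul_one]
    simp [abs_of_pos hρ0]
  have hwre : ∀ θ, (w θ).re = c.re + ρ * Real.cos θ := by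
    intro θ
    simp only [hw, Complex.add_re, Complex.re_ofReal_mul, Complex.exp_ofReal_mul_I_re]
    rcases h.sg with h | h <;> simp [h]
  have hwα' : c.re + ρ * Real.cos α = x0 := by rw [← hwre, hwα, hz0re]
  -- C meets the circle
  obtain ⟨p, hpC, hpρ⟩ : ∃ p ∈ C, dist p c = ρ := by
    obtain ⟨q, hq, hqre⟩ := hT.unb (c.re - ρ)
    refine hT.conn.intermediate_value hcC hq (f := fun p => dist p c) (by fun_prop) ⟨by simp [hρ0.le], ?_⟩
    rw [Complex.dist_eq]
    have := Complex.abs_re_le_norm (q - c)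
    have h2 := neg_le_abs (q - c).re
    simp only [Complex.sub_re] at this h2
    linarith
  have hpneg : p.re < 0 := hT.lt p hpC
  obtain ⟨θp, hθp0, hθp1, hθp⟩ : ∃ θ, 0 ≤ θ ∧ θ ≤ 2 * Real.pi ∧ w θ = p := by
    have e0 : (ρ : ℂ) * Complex.exp ((p - c).arg * Complex.I) = p - c := by
      rw [← hpρ, Complex.dist_eq, Complex.norm_mul_exp_arg_mul_I]
    have e1 := Complex.neg_pi_lt_arg (p - c)
    have e2 := Complex.arg_le_pi (p - c)
    have hab : |σ * (p - c).arg| ≤ Real.pi := by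
      rw [abs_mul]
      rcases h.sg with h | h <;> simp [h, abs_le] <;> constructor <;> linarith
    rw [abs_le] at hab
    rcases le_total 0 (σ * (p - c).arg) with h0 | h0
    · refine ⟨σ * (p - c).arg, h0, by linarith, ?_⟩
      simp only [hw]
      rw [← mul_assoc, h.sq, one_mul, e0]; ring
    · refine ⟨σ * (p - c).arg + 2 * Real.pi, by linarith, by linarith, ?_⟩
      simp only [hw]
      have e3 : σ * (σ * (p - c).arg + 2 * Real.pi) = (p - c).arg + σ * (2 * Real.pi) := by
        rw [mul_add, ← mul_assoc, h.sq, one_mul]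
      have e4 : Complex.exp ((σ * (2 * Real.pi) : ℝ) * Complex.I) = 1 := by
        rcases h.sg with h | h
        · rw [h]; push_cast; rw [one_mul]; exact Complex.exp_two_pi_mul_I
        · rw [h]; push_cast; rw [neg_one_mul, neg_mul, Complex.exp_neg, Complex.exp_two_pi_mul_I, inv_one]
      rw [e3, Complex.ofReal_add, add_mul, Complex.exp_add, e4, mul_one, e0]; ring
  have hθpα : α ≤ θp := by
    by_contra hcon
    have := Real.cos_le_cos_of_nonneg_of_le_pi hθp0 (by linarith) (not_le.1 hcon).le
    have e1 := hwre θp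
    rw [hθp] at e1
    nlinarith
  set T : Set ℝ := Icc α (2 * Real.pi) ∩ w ⁻¹' C with hTT
  have hTc : IsCompact T := isCompact_Icc.inter_right (hT.closed.preimage hwc)
  obtain ⟨θ1, ⟨⟨hθ1a, hθ1b⟩, hθ1C⟩, hθmin⟩ := hTc.exists_isLeast ⟨θp, ⟨hθpα, hθp1⟩, by
    change w θp ∈ C; rw [hθp]; exact hpC⟩
  have hθ1C' : w θ1 ∈ C := hθ1C
  have hθ1π : θ1 ≤ 2 * Real.pi - α := by
    by_contra hcon
    have := Real.cos_le_cos_of_nonneg_of_le_pi (x := 2 * Real.pi - θ1) (y := α) (by linarith) (by linarith)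
      (by linarith [not_le.1 hcon])
    rw [Real.cos_two_pi_sub] at this
    have e1 := hwre θ1
    have e2 := hT.lt _ hθ1C'
    nlinarith
  have hnot : ∀ θ ∈ Ico α θ1, w θ ∉ C := by
    intro θ hθ hcon
    exact absurd (hθmin ⟨⟨hθ.1, by linarith [hθ.2]⟩, hcon⟩) (not_le.2 hθ.2)
  have hα1' : α < θ1 := by
    refine lt_of_le_of_ne hθ1a ?_
    intro he
    have := hT.lt _ hθ1C'
    rw [← he, hwα, hz0re] at this
    linarith
  have hαI : α ∈ Ico α θ1 := ⟨le_rfl, hα1'⟩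
  have hIp : IsPreconnected (Ico α θ1) := isPreconnected_Ico
  have hz0d : z0 ∈ tdom C 0 := hT.right (by rw [hz0re]; exact hx0.le)
  have hIdom : w '' Ico α θ1 ⊆ tdom C 0 := by
    refine tdom_of (hIp.image _ hwc.continuousOn) ?_ (e := z0) ⟨α, hαI, hwα⟩ hz0d
    rintro _ ⟨θ, hθ, rfl⟩
    exact hnot θ hθ
  have hexp : Complex.exp (Real.log ρ : ℂ) = ρ := by
    rw [← Complex.ofReal_exp, Real.exp_log hρ0]
  have hbr : EqOn (fun θ : ℝ => br C 0 c (w θ)) (fun θ => (Real.log ρ : ℂ) + (σ * θ : ℝ) * Complex.I) (Ico α θ1) := by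
    refine log_uni hIp ((hT.br_cont hcC).comp hwc.continuousOn (fun θ hθ => hIdom ⟨θ, hθ, rfl⟩))
      (by fun_prop) ?_ hαI ?_
    · intro θ hθ
      rw [hT.br_exp hcC (hIdom ⟨θ, hθ, rfl⟩), Complex.exp_add, hexp]
      simp only [hw]; ring
    · rw [hwα, hT.br_right hcC (by rw [hz0re]; exact hx0.le), hα, ← mul_assoc, h.sq, one_mul]
      rfl
  refine ⟨w '' Icc α θ1, ?_, isPreconnected_Icc.image _ hwc.continuousOn, ⟨α, ⟨le_rfl, hθ1a⟩, hwα⟩, w θ1, hθ1C',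
    ⟨θ1, ⟨hθ1a, le_rfl⟩, rfl⟩⟩
  rintro _ ⟨θ, ⟨hθa, hθb⟩, rfl⟩
  rcases hθb.lt_or_eq with hlt | rfl
  · refine h.no_near_B hc hx0 hκ hr hρ1 hρ2 (hwd θ) ?_ (hIdom ⟨θ, ⟨hθa, hlt⟩, rfl⟩) ?_
    · rw [hwre]
      have := cos_le_cos_arc hα1.1.le hθa (hθb.trans hθ1π)
      nlinarith
    · have := hbr ⟨hθa, hlt⟩
      rw [show br C 0 c (w θ) = _ from this]
      simp
      rw [← mul_assoc, h.sq, one_mul]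
      linarith
  · exact h.mem_VA_of_mem (connectedComponentIn_subset _ _ hθ1C')

lemma far (h : Good A B σ) {x0 : ℝ} (hx0 : 0 < x0) :
    ∃ y0 : ℝ, ∀ y ≥ y0, ((x0 : ℂ) + (σ * y : ℝ) * Complex.I) ∈ VA A B := by
  obtain ⟨c, hc⟩ := h.ane
  obtain ⟨y0, hy0⟩ := h.arc hc hx0
  refine ⟨y0, fun y hy => ?_⟩
  obtain ⟨Γ, h1, -, h3, -⟩ := hy0 y hy
  exact h1 h3

lemma VA_pre (h : Good A B σ) : IsPreconnected (VA A B) := by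
  have key : ∀ u ∈ VA A B, ∃ y0 : ℝ, ∀ y ≥ y0, ∃ Γ ⊆ VA A B, IsPreconnected Γ ∧
      (((1:ℝ) : ℂ) + (σ * y : ℝ) * Complex.I) ∈ Γ ∧ u ∈ Γ := by
    intro u hu
    obtain ⟨a, ha, hd⟩ := h.acl.exists_infDist_eq_dist h.ane u
    obtain ⟨y0, hy0⟩ := h.arc ha one_pos
    refine ⟨y0, fun y hy => ?_⟩
    obtain ⟨Γ, h1, h2, h3, c', h4, h5⟩ := hy0 y hy
    refine ⟨(segment ℝ u a ∪ connectedComponentIn A a) ∪ Γ, ?_, ?_, Or.inr h3, Or.inl (Or.inl (left_mem_segment ℝ u a))⟩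
    · exact union_subset (union_subset (segment_VA hu ha hd)
        (fun z hz => h.mem_VA_of_mem (connectedComponentIn_subset _ _ hz))) h1
    · exact ((convex_segment u a).isPreconnected.union a (right_mem_segment ℝ u a) (mem_connectedComponentIn ha)
        isPreconnected_connectedComponentIn).union c' (Or.inr h4) h5 h2
  refine isPreconnected_of_forall_pair fun u hu v hv => ?_
  obtain ⟨y1, h1⟩ := key u hu
  obtain ⟨y2, h2⟩ := key v hv
  obtain ⟨Γ1, a1, b1, c1, d1⟩ := h1 (max y1 y2) (le_max_left _ _)
  obtain ⟨Γ2, a2, b2, c2, d2⟩ := h2 (max y1 y2) (le_max_right _ _)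
  exact ⟨Γ1 ∪ Γ2, union_subset a1 a2, Or.inl d1, Or.inr d2, b1.union _ c1 c2 b2⟩

end Good

open Set Metric Topology Filter

/-! ### Part 7: vertical lines, connectedness of the equidistant set -/

def FA (A B : Set ℂ) : Set ℂ := {z | infDist z A ≤ infDist z B}

lemma VA_sub_FA {A B : Set ℂ} : VA A B ⊆ FA A B := 
  fun z hz => show infDist z A ≤ infDist z B from le_of_lt (show infDist z A < infDist z B from hz)

lemma FA_closed {A B : Set ℂ} : IsClosed (FA A B) :=
  isClosed_le (continuous_infDist_pt A) (continuous_infDist_pt B)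

lemma FA_inter {A B : Set ℂ} : FA A B ∩ FA B A = equidistSet A B := by
  ext z; constructor
  · rintro ⟨h1, h2⟩; exact le_antisymm h1 h2
  · intro h; have h : infDist z A = infDist z B := h
    exact ⟨h.le, h.ge⟩

lemma FA_union {A B : Set ℂ} : FA A B ∪ FA B A = univ := by
  ext z; simp only [mem_union, mem_univ, iff_true]; exact le_total (infDist z A) (infDist z B)

lemma unicoherent {F G : Set ℂ} (hF : IsClosed F) (hG : IsClosed G) (hFp : IsPreconnected F)
    (hGp : IsPreconnected G) (hU : F ∪ G = univ) : IsPreconnected (F ∩ G) := by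
  classical
  rw [isPreconnected_closed_iff]
  intro t t' ht ht' hsub ⟨e1, he1, he1t⟩ ⟨e2, he2, he2t⟩
  by_contra hne
  have hdis : Disjoint (F ∩ G ∩ t) (F ∩ G ∩ t') := by
    rw [Set.disjoint_left]
    rintro x ⟨h1, h2⟩ ⟨-, h3⟩
    exact hne ⟨x, h1, h2, h3⟩
  obtain ⟨h, h0, h1, -⟩ := exists_continuous_zero_one_of_isClosed ((hF.inter hG).inter ht) ((hF.inter hG).inter ht') hdis
  set q : ℂ → ℂ := fun z => if z ∈ F then Complex.exp ((Real.pi * h z : ℝ) * Complex.I)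
    else Complex.exp (-((Real.pi * h z : ℝ) * Complex.I)) with hq
  have hqF : ∀ z ∈ F, q z = Complex.exp ((Real.pi * h z : ℝ) * Complex.I) := fun z hz => if_pos hz
  have hqG : ∀ z ∈ G, q z = Complex.exp (-((Real.pi * h z : ℝ) * Complex.I)) := by
    intro z hz
    by_cases hzF : z ∈ F
    · rw [hqF z hzF]
      rcases hsub ⟨hzF, hz⟩ with hzt | hzt
      · have : h z = 0 := h0 ⟨⟨hzF, hz⟩, hzt⟩
        simp [this]
      · have : h z = 1 := h1 ⟨⟨hzF, hz⟩, hzt⟩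
        simp [this, Complex.exp_pi_mul_I, Complex.exp_neg]
    · exact if_neg hzF
  have hqc : Continuous q := by
    rw [← continuousOn_univ, ← hU]
    refine ContinuousOn.union_of_isClosed ?_ ?_ hF hG
    · refine ContinuousOn.congr ?_ hqF
      fun_prop
    · refine ContinuousOn.congr ?_ hqG
      fun_prop
  have hq0 : ∀ z, q z ≠ 0 := by
    intro z; simp only [hq]; split_ifs <;> exact Complex.exp_ne_zero _
  have hq1 : q e1 = 1 := by
    have : h e1 = 0 := h0 ⟨he1, he1t⟩
    rw [hqF e1 he1.1, this]; simp
  obtain ⟨L, ⟨hL1, hL2⟩, -⟩ := IsCoveringMapOn.existsUnique_continuousMap_lifts Complex.isCoveringMapOn_exp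
    (⟨q, hqc⟩ : C(ℂ, ℂ)) (a₀ := e1) (e₀ := 0) (by simp [hq1]) (by intro z; simpa using hq0 z)
  have hL : ∀ z, Complex.exp (L z) = q z := fun z => congrFun hL2 z
  have hF2 := log_uni hFp (l1 := L) (l2 := fun z => (Real.pi * h z : ℝ) * Complex.I) (by fun_prop) (by fun_prop)
    (fun z hz => by rw [hL, hqF z hz]) he1.1 (by rw [hL1, show h e1 = 0 from h0 ⟨he1, he1t⟩]; simp) he2.1
  have hG2 := log_uni hGp (l1 := L) (l2 := fun z => -((Real.pi * h z : ℝ) * Complex.I)) (by fun_prop) (by fun_prop)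
    (fun z hz => by rw [hL, hqG z hz]) he1.2 (by rw [hL1, show h e1 = 0 from h0 ⟨he1, he1t⟩]; simp) he2.2
  have hcon : ((Real.pi * h e2 : ℝ) : ℂ) * Complex.I = -(((Real.pi * h e2 : ℝ):ℂ) * Complex.I) := hF2.symm.trans hG2
  rw [show h e2 = 1 from h1 ⟨he2, he2t⟩] at hcon
  have := congrArg Complex.im hcon
  simp at this
  linarith [Real.pi_pos]

lemma eq_of_between {z p a b : ℂ} (ha : dist z p + dist p a = dist z a) (hb : dist z p + dist p b = dist z b)
    (hab : dist z a = dist z b) (hp : p ≠ z) : a = b := by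
  rw [dist_add_dist_eq_iff] at ha hb
  obtain ⟨r, hr, rfl⟩ := ha
  obtain ⟨s, hs, hs'⟩ := hb
  have e1 : dist z (AffineMap.lineMap z a r) = r * dist z a := by
    rw [dist_left_lineMap, Real.norm_of_nonneg hr.1]
  have e2 : dist z (AffineMap.lineMap z b s) = s * dist z b := by
    rw [dist_left_lineMap, Real.norm_of_nonneg hs.1]
  rw [hs', e1, hab] at e2
  have hz : 0 < dist z (AffineMap.lineMap z a r) := dist_pos.2 (Ne.symm hp)
  rw [e1] at hz
  have hr0 : r ≠ 0 := by rintro rfl; simp at hz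
  have hzb : dist z b ≠ 0 := by rw [← hab]; intro h0; rw [h0, mul_zero] at hz; exact lt_irrefl _ hz
  have hrs : r = s := mul_right_cancel₀ hzb e2
  subst hrs
  rw [AffineMap.lineMap_apply, AffineMap.lineMap_apply] at hs'
  simp only [vsub_eq_sub, vadd_eq_add, Complex.real_smul, add_left_inj] at hs'
  have := mul_left_cancel₀ (by exact_mod_cast hr0) hs'
  exact (sub_left_inj.1 this).symm

lemma segV {A B : Set ℂ} (hB : IsClosed B) (hBne : B.Nonempty) (hd : ∀ z ∈ A, z ∉ B) {z a p : ℂ}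
    (hz : z ∈ FA A B) (ha : a ∈ A) (hda : infDist z A = dist z a) (hp : p ∈ segment ℝ z a) (hpz : p ≠ z) :
    p ∈ VA A B := by
  by_contra hcon
  have hcon : infDist p B ≤ infDist p A := not_lt.1 hcon
  obtain ⟨b, hb, hbd⟩ := hB.exists_infDist_eq_dist hBne p
  obtain ⟨h1, h2⟩ := segment_near ha hda hp
  have h3 := infDist_le_dist_of_mem (x := z) hb
  have h4 : infDist z A ≤ infDist z B := hz
  have h5 := dist_triangle z p b
  have hab := eq_of_between (z := z) (p := p) (a := a) (b := b) h2 (by linarith) (by linarith) hpz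
  exact hd a ha (hab ▸ hb)

namespace Good
variable {A B : Set ℂ} {σ : ℝ}

lemma FA_pre (h : Good A B σ) : IsPreconnected (FA A B) := by
  refine h.VA_pre.subset_closure VA_sub_FA ?_
  intro z hz
  obtain ⟨a, ha, hda⟩ := h.acl.exists_infDist_eq_dist h.ane z
  by_cases haz : a = z
  · subst haz; exact subset_closure (h.mem_VA_of_mem ha)
  · have hcont : Tendsto (fun t : ℝ => AffineMap.lineMap z a t) (𝓝[>] 0) (𝓝 z) := by
      have : Continuous (fun t : ℝ => (AffineMap.lineMap z a t : ℂ)) := AffineMap.lineMap_continuous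
      have h2 := this.tendsto 0
      rw [AffineMap.lineMap_apply_zero] at h2
      exact h2.mono_left nhdsWithin_le_nhds
    refine mem_closure_of_tendsto hcont ?_
    filter_upwards [Ioo_mem_nhdsGT (show (0:ℝ) < 1 by norm_num)] with t ht
    refine segV h.bcl h.bne h.disj hz ha hda ?_ ?_
    · rw [segment_eq_image_lineMap]; exact ⟨t, ⟨ht.1.le, ht.2.le⟩, rfl⟩
    · intro h0
      rw [AffineMap.lineMap_eq_left_iff] at h0
      rcases h0 with h0 | h0
      · exact haz h0.symm
      · exact ht.1.ne' h0

lemma E_pre (h : Good A B σ) : IsPreconnected (equidistSet A B) := by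
  rw [← FA_inter]
  exact unicoherent FA_closed FA_closed h.FA_pre h.symm.FA_pre FA_union

lemma vert (h : Good A B 1) {z1 z2 : ℂ} (hx : 0 < z1.re) (hre : z2.re = z1.re) (him : z1.im < z2.im)
    (h1 : z1 ∈ FA A B) (h2 : z2 ∈ FA B A) : False := by
  obtain ⟨a, ha, hda⟩ := h.acl.exists_infDist_eq_dist h.ane z1
  obtain ⟨b, hb, hdb⟩ := h.bcl.exists_infDist_eq_dist h.bne z2
  set C := connectedComponentIn A a with hC
  set D := connectedComponentIn B b with hD
  have hTC : Tail C 0 := h.tailA ha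
  have hTD : Tail D 0 := h.tailB hb
  have haC : a ∈ C := mem_connectedComponentIn ha
  have hbD : b ∈ D := mem_connectedComponentIn hb
  have hCA : C ⊆ VA A B := fun z hz => h.mem_VA_of_mem (connectedComponentIn_subset _ _ hz)
  have hDB : D ⊆ VA B A := fun z hz => h.symm.mem_VA_of_mem (connectedComponentIn_subset _ _ hz)
  set S : Set ℂ := C ∪ segment ℝ z1 a with hS
  have haneg := h.aneg a ha
  have hbneg := h.bneg b hb
  have hsegre : ∀ {z w p : ℂ}, w.re < z.re → p ∈ segment ℝ z w → p.re ≤ z.re ∧ (p.re = z.re → p = z) := by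
    rintro z w p hw ⟨s, t, hs, ht, hst, rfl⟩
    simp only [Complex.real_smul, Complex.add_re, Complex.re_ofReal_mul]
    have hs' : s = 1 - t := by linarith
    subst hs'
    refine ⟨by nlinarith, fun he => ?_⟩
    have : t * (z.re - w.re) = 0 := by linarith
    rcases mul_eq_zero.1 this with h0 | h0
    · simp [h0]
    · linarith
  have hsegS : IsPreconnected (segment ℝ z1 a) := (convex_segment z1 a).isPreconnected
  have hsegc : IsCompact (segment ℝ z1 a) := by
    rw [segment_eq_image_lineMap]; exact isCompact_Icc.image AffineMap.lineMap_continuous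
  have hTS : Tail S (z1.re + 1) := by
    refine ⟨hTC.closed.union hsegc.isClosed, hTC.conn.union a haC (right_mem_segment ℝ z1 a) hsegS, ?_, ?_⟩
    · rintro z (hz | hz)
      · linarith [hTC.lt z hz]
      · linarith [(hsegre (haneg.trans hx) hz).1]
    · intro m; obtain ⟨z, hz, h⟩ := hTC.unb m; exact ⟨z, Or.inl hz, h⟩
  have hz1S : z1 ∈ S := Or.inr (left_mem_segment ℝ z1 a)
  set Ry : Set ℂ := (fun t : ℝ => z2 + t) '' Ici (0:ℝ) with hRy
  have hRyp : IsPreconnected Ry := isPreconnected_Ici.image _ (by fun_prop)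
  set K : Set ℂ := (D ∪ segment ℝ z2 b) ∪ Ry with hK
  have hKp : IsPreconnected K :=
    (hTD.conn.union b hbD (right_mem_segment ℝ z2 b) (convex_segment z2 b).isPreconnected).union z2
      (Or.inr (left_mem_segment ℝ z2 b)) ⟨0, by simp, by simp⟩ hRyp
  have hSV : ∀ p ∈ S, p = z1 ∨ p ∈ VA A B := by
    rintro p (hp | hp)
    · exact Or.inr (hCA hp)
    · by_cases hpz : p = z1
      · exact Or.inl hpz
      · exact Or.inr (segV h.bcl h.bne h.disj h1 ha hda hp hpz)
  have hne12 : z1 ≠ z2 := by rintro rfl; exact lt_irrefl _ him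
  have hKS : K ⊆ Sᶜ := by
    rintro p ((hp | hp) | ⟨t, ht, rfl⟩) hpS
    · have e1 : infDist p B < infDist p A := hDB hp
      rcases hSV p hpS with rfl | e2
      · exact absurd h1 (not_le.2 e1)
      · exact lt_asymm e1 e2
    · by_cases hpz : p = z2
      · rcases hSV p hpS with e2 | e2
        · exact hne12 (e2.symm.trans hpz)
        · rw [hpz] at e2; 
          have e2' : infDist z2 A < infDist z2 B := e2
          have h2' : infDist z2 B ≤ infDist z2 A := h2
          linarith
      · have e1 : infDist p B < infDist p A := segV h.acl h.ane h.symm.disj h2 hb hdb hp hpz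
        rcases hSV p hpS with rfl | e2
        · exact absurd h1 (not_le.2 e1)
        · exact lt_asymm e1 e2
    · have ht' : (0:ℝ) ≤ t := ht
      have e1 : (z2 + t).re = z1.re + t := by simp [hre]
      have e2 : (z2 + t).im = z2.im := by simp
      rcases hpS with hp | hp
      · have e3 : (z2 + t).re < 0 := hTC.lt _ hp
        linarith
      · have e3 : (z2 + t).re ≤ z1.re ∧ ((z2 + t).re = z1.re → z2 + t = z1) := hsegre (haneg.trans hx) hp
        have e4 := e3.2 (by linarith [e3.1])
        rw [e4] at e2; linarith
  set r : ℂ := z2 + (1:ℝ) with hr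
  have hrRy : r ∈ Ry := ⟨1, by simp, rfl⟩
  have hrre : r.re = z1.re + 1 := by simp [hr, hre]
  have hKd : K ⊆ tdom S (z1.re + 1) := tdom_of hKp hKS (e := r) (Or.inr hrRy) (hTS.right (by rw [hrre]))
  have hψ : ∀ e ∈ K, 0 < (br S (z1.re + 1) z1 e).im := by
    refine stay_above (φ := fun e => (br S (z1.re + 1) z1 e).im) hKp (Complex.continuous_im.comp_continuousOn ((hTS.br_cont hz1S).mono hKd)) ?_ (Or.inr hrRy) ?_
    · intro e he h0
      have e1 := h.im_zero (hTS.br_exp hz1S (hKd he)) (by rw [h0, mul_zero])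
      have e2 := congrArg Complex.re e1
      have e3 := congrArg Complex.im e1
      simp only [Complex.sub_re, Complex.ofReal_re, Complex.sub_im, Complex.ofReal_im] at e2 e3
      have e4 : 0 < ‖e - z1‖ := by
        rw [norm_pos_iff, sub_ne_zero]; rintro rfl; exact hKS he hz1S
      rcases he with (he | he) | ⟨t, -, rfl⟩
      · linarith [hTD.lt e he]
      · have := (hsegre (z := z2) (w := b) (by rw [hre]; linarith) he).1
        rw [hre] at this; linarith
      · simp at e3; linarith
    · rw [hTS.br_right hz1S (by rw [hrre]), Complex.log_im]
      have e1 : 0 < (r - z1).im := by simp [hr]; exact him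
      refine lt_of_le_of_ne (Complex.arg_nonneg_iff.2 e1.le) ?_
      intro h0
      rw [eq_comm, Complex.arg_eq_zero_iff] at h0
      linarith [h0.2]
  obtain ⟨m, hm⟩ := (h.pab a ha b hb).2
  obtain ⟨m', M', hmM⟩ := isCompact_re_bdd hsegc
  obtain ⟨d', hd', hlt⟩ := hTD.unb (min m m')
  have e1 := hm d' hd' (hlt.trans_le (min_le_left _ _))
  have hd'K : d' ∈ K := Or.inl (Or.inl hd')
  rw [one_mul, hTC.br_mono hTS subset_union_left haC (hKd hd'K)] at e1
  have e2 := hTS.move_below hsegS subset_union_right (hKd hd'K)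
    (fun z hz => (hlt.trans_le (min_le_right _ _)).trans (hmM z hz).1) (right_mem_segment ℝ z1 a)
    (left_mem_segment ℝ z1 a) e1
  linarith [hψ d' hd'K, Real.pi_pos]

lemma vert_unique (h : Good A B 1) {x : ℝ} (hx : 0 < x) : ∃! z : ℂ, z ∈ equidistSet A B ∧ z.re = x := by
  obtain ⟨y1, hy1⟩ := h.far hx
  obtain ⟨y2, hy2⟩ := h.symm.far hx
  set g : ℝ → ℂ := fun y => (x : ℂ) + (y : ℂ) * Complex.I with hg
  have hgc : Continuous g := by rw [hg]; fun_prop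
  have hgre : ∀ y, (g y).re = x := by intro y; simp [hg]
  have hgim : ∀ y, (g y).im = y := by intro y; simp [hg]
  have e1 : g y1 ∈ VA A B := by have := hy1 y1 le_rfl; rwa [one_mul] at this
  have e2 : g (-y2) ∈ VA B A := by have := hy2 y2 le_rfl; rwa [neg_one_mul] at this
  have hfc : Continuous (fun y => infDist (g y) A - infDist (g y) B) :=
    ((continuous_infDist_pt A).comp hgc).sub ((continuous_infDist_pt B).comp hgc)
  obtain ⟨y, -, hy⟩ := isPreconnected_univ.intermediate_value (mem_univ y1) (mem_univ (-y2)) hfc.continuousOn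
    (show (0:ℝ) ∈ Icc _ _ from ⟨(sub_neg.2 e1).le, (sub_pos.2 e2).le⟩)
  refine ⟨g y, ⟨sub_eq_zero.1 hy, hgre y⟩, ?_⟩
  rintro z ⟨hz, hzre⟩
  have hyE : infDist (g y) A = infDist (g y) B := sub_eq_zero.1 hy
  have hzE : infDist z A = infDist z B := hz
  rcases lt_trichotomy z.im y with hlt | heq | hlt
  · exact (h.vert (z1 := z) (z2 := g y) (by rw [hzre]; exact hx) (by rw [hgre, hzre]) (by rw [hgim]; exact hlt)
      hzE.le hyE.ge).elim
  · apply Complex.ext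
    · rw [hgre, hzre]
    · rw [hgim, heq]
  · exact (h.vert (z1 := g y) (z2 := z) (by rw [hgre]; exact hx) (by rw [hgre, hzre]) (by rw [hgim]; exact hlt)
      hyE.le hzE.ge).elim

lemma re_E (h : Good A B 1) : Complex.re '' equidistSet A B = univ := by
  ext x
  simp only [mem_univ, iff_true]
  obtain ⟨a, ha⟩ := h.ane
  obtain ⟨b, hb⟩ := h.bne
  set x1 : ℝ := min x (min a.re b.re) with hx1
  obtain ⟨a', ha', ha're⟩ := meets_vertical isPreconnected_connectedComponentIn (h.aunb a ha)
    (mem_connectedComponentIn ha) (x := x1) ((min_le_right _ _).trans (min_le_left _ _))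
  obtain ⟨b', hb', hb're⟩ := meets_vertical isPreconnected_connectedComponentIn (h.bunb b hb)
    (mem_connectedComponentIn hb) (x := x1) ((min_le_right _ _).trans (min_le_right _ _))
  have e1 := h.mem_VA_of_mem (connectedComponentIn_subset _ _ ha')
  have e2 := h.symm.mem_VA_of_mem (connectedComponentIn_subset _ _ hb')
  have hfc : Continuous (fun y => infDist y A - infDist y B) :=
    (continuous_infDist_pt A).sub (continuous_infDist_pt B)
  obtain ⟨z, hz, hz0⟩ := (convex_segment (𝕜 := ℝ) a' b').isPreconnected.intermediate_value (left_mem_segment ℝ a' b')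
    (right_mem_segment ℝ a' b') hfc.continuousOn
    (show (0:ℝ) ∈ Icc _ _ from ⟨(sub_neg.2 e1).le, (sub_pos.2 e2).le⟩)
  have hzE : z ∈ equidistSet A B := sub_eq_zero.1 hz0
  have hzre : z.re ≤ x := by
    have : segment ℝ a' b' ⊆ {w : ℂ | w.re ≤ x1} :=
      (convex_halfSpace_re_le x1).segment_subset ha're.le hb're.le
    exact (this hz).trans (min_le_left _ _)
  obtain ⟨w, ⟨hw, hwre⟩, -⟩ := h.vert_unique (x := max x 1) (lt_max_of_lt_right one_pos)
  exact h.E_pre.intermediate_value hzE hw Complex.continuous_re.continuousOn ⟨hzre, by rw [hwre]; exact le_max_left _ _⟩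

end Good

open Set Metric Topology Filter

/-! ### Part 8: an abstract characterization of the real line -/

structure CutSep {Y : Type*} [TopologicalSpace Y] (p : Y) (P P' : Set Y) : Prop where
  o : IsOpen P
  o' : IsOpen P'
  disj : ∀ x ∈ P, x ∉ P'
  cov : ∀ x, x ≠ p → x ∈ P ∨ x ∈ P'
  np : p ∉ P
  np' : p ∉ P'
  ne : P.Nonempty
  ne' : P'.Nonempty

namespace CutSep
variable {Y : Type*} [TopologicalSpace Y] [T2Space Y] [PreconnectedSpace Y] {p : Y} {P P' : Set Y}

lemma symm (h : CutSep p P P') : CutSep p P' P :=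
  ⟨h.o', h.o, fun x hx hx' => h.disj x hx' hx, fun x hx => (h.cov x hx).symm, h.np', h.np, h.ne', h.ne⟩

lemma clopen {U V : Set Y} (hU : IsOpen U) (hV : IsOpen V) (hUV : U ∪ V = univ) (hd : ∀ x ∈ U, x ∉ V)
    (hUne : U.Nonempty) (hVne : V.Nonempty) : False := by
  obtain ⟨x, -, hx, hx'⟩ := (isPreconnected_univ (α := Y)) U V hU hV hUV.ge (by simpa using hUne) (by simpa using hVne)
  exact hd x hx hx'

lemma pre (h : CutSep p P P') : IsPreconnected (P ∪ {p}) := by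
  have key : ∀ O1 O2 : Set Y, IsOpen O1 → IsOpen O2 → P ∪ {p} ⊆ O1 ∪ O2 → p ∈ O1 → ((P ∪ {p}) ∩ O2).Nonempty →
      ((P ∪ {p}) ∩ (O1 ∩ O2)).Nonempty := by
    intro O1 O2 h1 h2 hsub hp hne
    by_contra hcon
    have hcon : ∀ x ∈ P ∪ {p}, x ∈ O1 → x ∉ O2 := fun x hx hx1 hx2 => hcon ⟨x, hx, hx1, hx2⟩
    have hp2 : p ∉ O2 := hcon p (Or.inr rfl) hp
    refine clopen (U := O2 ∩ P) (V := P' ∪ O1) (h2.inter h.o) (h.o'.union h1) ?_ ?_ ?_ ⟨p, Or.inr hp⟩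
    · ext x
      simp only [mem_union, mem_inter_iff, mem_univ, iff_true]
      by_cases hx : x = p
      · subst hx; exact Or.inr (Or.inr hp)
      · rcases h.cov x hx with hx | hx
        · rcases hsub (Or.inl hx) with h' | h'
          · exact Or.inr (Or.inr h')
          · exact Or.inl ⟨h', hx⟩
        · exact Or.inr (Or.inl hx)
    · rintro x ⟨hx2, hx⟩ (hx' | hx')
      · exact h.disj x hx hx'
      · exact hcon x (Or.inl hx) hx' hx2
    · obtain ⟨x, hx | hx, hx2⟩ := hne
      · exact ⟨x, hx2, hx⟩
      · rw [mem_singleton_iff.1 hx] at hx2; exact (hp2 hx2).elim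
  intro O1 O2 h1 h2 hsub hn1 hn2
  rcases hsub (Or.inr rfl : p ∈ P ∪ {p}) with hp | hp
  · exact key O1 O2 h1 h2 hsub hp hn2
  · rw [inter_comm O1 O2]
    exact key O2 O1 h2 h1 (hsub.trans (union_comm O1 O2).subset) hp hn1

lemma sub_of (h : CutSep p P P') {K : Set Y} (hK : IsPreconnected K) (hp : p ∉ K) {x : Y} (hx : x ∈ K) (hxP : x ∈ P) :
    K ⊆ P := by
  refine hK.subset_left_of_subset_union h.o h.o' ?_ ?_ ⟨x, hx, hxP⟩
  · rw [Set.disjoint_left]; exact h.disj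
  · intro y hy; exact h.cov y (by rintro rfl; exact hp hy)

end CutSep

structure ArcChart {Y : Type*} [TopologicalSpace Y] (γ : ℝ → Y) (δ : ℝ) : Prop where
  pos : 0 < δ
  cont : ContinuousOn γ (Ioo (-δ) δ)
  inj : InjOn γ (Ioo (-δ) δ)
  op : ∀ s t, -δ ≤ s → t ≤ δ → IsOpen (γ '' Ioo s t)

namespace ArcChart
variable {Y : Type*} [TopologicalSpace Y] [T2Space Y] [PreconnectedSpace Y] {γ : ℝ → Y} {δ : ℝ}

lemma arc (h : ArcChart γ δ) {s t : ℝ} (hs : -δ ≤ s) (ht : t ≤ δ) : IsPreconnected (γ '' Ioo s t) :=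
  isPreconnected_Ioo.image _ (h.cont.mono (Ioo_subset_Ioo hs ht))

lemma not_mem (h : ArcChart γ δ) {s : ℝ} (hs : s ∈ Ioo (-δ) δ) {J : Set ℝ} (hJ : J ⊆ Ioo (-δ) δ) (hsJ : s ∉ J) :
    γ s ∉ γ '' J := by
  rintro ⟨x, hx, hxs⟩
  exact hsJ (h.inj (hJ hx) hs hxs ▸ hx)

lemma notboth (h : ArcChart γ δ) {s : ℝ} (hs : s ∈ Ioo (-δ) δ) {P P' : Set Y} (hP : CutSep (γ s) P P')
    (h1 : γ '' Ioo (-δ) s ⊆ P) (h2 : γ '' Ioo s δ ⊆ P) : False := by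
  obtain ⟨x, hx, hx1, hx2⟩ := hP.symm.pre (γ '' Ioo (-δ) δ) P' (h.op _ _ le_rfl le_rfl) hP.o'
    (by
      rintro x (hx | hx)
      · exact Or.inr hx
      · rw [mem_singleton_iff.1 hx]; exact Or.inl ⟨s, hs, rfl⟩)
    ⟨γ s, Or.inr rfl, s, hs, rfl⟩ (hP.ne'.mono fun x hx => ⟨Or.inl hx, hx⟩)
  obtain ⟨t, ht, rfl⟩ := hx1
  rcases lt_trichotomy t s with hts | rfl | hts
  · exact hP.disj _ (h1 ⟨t, ⟨ht.1, hts⟩, rfl⟩) hx2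
  · exact hP.np' hx2
  · exact hP.disj _ (h2 ⟨t, ⟨hts, ht.2⟩, rfl⟩) hx2

/-- If a point after `s` is in `P`, then the whole half after `s` is in `P`, the half before in the other side. -/
lemma halves_gt (h : ArcChart γ δ) {s t : ℝ} (hs : s ∈ Ioo (-δ) δ) (ht : t ∈ Ioo (-δ) δ) (hst : s < t) {P P' : Set Y}
    (hP : CutSep (γ s) P P') (htP : γ t ∈ P) : γ '' Ioo s δ ⊆ P ∧ γ '' Ioo (-δ) s ⊆ P' := by
  have e1 : γ '' Ioo s δ ⊆ P := hP.sub_of (h.arc hs.1.le le_rfl)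
    (h.not_mem hs (Ioo_subset_Ioo_left hs.1.le) (by simp)) ⟨t, ⟨hst, ht.2⟩, rfl⟩ htP
  refine ⟨e1, ?_⟩
  have hm : ((-δ) + s) / 2 ∈ Ioo (-δ) s := ⟨by linarith [hs.1], by linarith [hs.1]⟩
  have hns : γ s ∉ γ '' Ioo (-δ) s := h.not_mem hs (Ioo_subset_Ioo_right hs.2.le) (by simp)
  rcases hP.cov (γ (((-δ) + s) / 2)) (fun he => hns ⟨_, hm, he⟩) with h' | h'
  · exact (h.notboth hs hP (hP.sub_of (h.arc le_rfl hs.2.le) hns ⟨_, hm, rfl⟩ h') e1).elim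
  · exact hP.symm.sub_of (h.arc le_rfl hs.2.le) hns ⟨_, hm, rfl⟩ h'

lemma halves_lt (h : ArcChart γ δ) {s t : ℝ} (hs : s ∈ Ioo (-δ) δ) (ht : t ∈ Ioo (-δ) δ) (hst : t < s) {P P' : Set Y}
    (hP : CutSep (γ s) P P') (htP : γ t ∈ P) : γ '' Ioo (-δ) s ⊆ P ∧ γ '' Ioo s δ ⊆ P' := by
  have hm : (δ + s) / 2 ∈ Ioo s δ := ⟨by linarith [hs.2], by linarith [hs.2]⟩
  have hns : γ s ∉ γ '' Ioo s δ := h.not_mem hs (Ioo_subset_Ioo_left hs.1.le) (by simp)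
  have hm' : (δ + s) / 2 ∈ Ioo (-δ) δ := ⟨by linarith [hs.1, hm.1], hm.2⟩
  rcases hP.cov (γ ((δ + s) / 2)) (fun he => hns ⟨_, hm, he⟩) with h' | h'
  · exact (hP.disj _ htP ((h.halves_gt hs hm' hm.1 hP h').2 ⟨t, ⟨ht.1, hst⟩, rfl⟩)).elim
  · have := h.halves_gt hs hm' hm.1 hP.symm h'
    exact ⟨this.2, this.1⟩

lemma between_lt (h : ArcChart γ δ) {s t : ℝ} (hs : s ∈ Ioo (-δ) δ) (ht : t ∈ Ioo (-δ) δ) (hst : s < t)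
    {P P' Q Q' : Set Y} (hP : CutSep (γ s) P P') (hQ : CutSep (γ t) Q Q') (htP : γ t ∈ P) (hsQ : γ s ∈ Q) :
    P ∩ Q ⊆ γ '' Icc s t := by
  have hsub : Icc s t ⊆ Ioo (-δ) δ := fun x hx => ⟨hs.1.trans_le hx.1, hx.2.trans_lt ht.2⟩
  have hcl : IsClosed (γ '' Icc s t) := (isCompact_Icc.image_of_continuousOn (h.cont.mono hsub)).isClosed
  have e1 := (h.halves_gt hs ht hst hP htP).2
  have e2 := (h.halves_lt ht hs hst hQ hsQ).2
  by_contra hne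
  rw [Set.not_subset] at hne
  obtain ⟨x, hx, hx'⟩ := hne
  refine CutSep.clopen (U := (P ∩ Q) ∩ (γ '' Icc s t)ᶜ) (V := (P' ∪ Q') ∪ γ '' Ioo (-δ) δ) ((hP.o.inter hQ.o).inter hcl.isOpen_compl)
    ((hP.o'.union hQ.o').union (h.op _ _ le_rfl le_rfl)) ?_ ?_ ⟨x, hx, hx'⟩ ⟨γ s, Or.inr ⟨s, hs, rfl⟩⟩
  · ext y
    simp only [mem_univ, iff_true]
    by_cases hyI : y ∈ γ '' Ioo (-δ) δ
    · exact Or.inr (Or.inr hyI)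
    · rcases hP.cov y (fun he => hyI ⟨s, hs, he.symm⟩) with hy | hy
      · rcases hQ.cov y (fun he => hyI ⟨t, ht, he.symm⟩) with hy2 | hy2
        · exact Or.inl ⟨⟨hy, hy2⟩, fun hh => hyI (image_mono hsub hh)⟩
        · exact Or.inr (Or.inl (Or.inr hy2))
      · exact Or.inr (Or.inl (Or.inl hy))
  · rintro y ⟨⟨hy1, hy2⟩, hy3⟩ ((hy | hy) | ⟨x, hx, rfl⟩)
    · exact hP.disj y hy1 hy
    · exact hQ.disj y hy2 hy
    · rcases lt_or_ge x s with hxs | hxs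
      · exact hP.disj _ hy1 (e1 ⟨x, ⟨hx.1, hxs⟩, rfl⟩)
      · rcases lt_or_ge t x with hxt | hxt
        · exact hQ.disj _ hy2 (e2 ⟨x, ⟨hxt, hx.2⟩, rfl⟩)
        · exact hy3 ⟨x, ⟨hxs, hxt⟩, rfl⟩

lemma between (h : ArcChart γ δ) {s t : ℝ} (hs : s ∈ Ioo (-δ) δ) (ht : t ∈ Ioo (-δ) δ) (hst : s ≠ t)
    {P P' Q Q' : Set Y} (hP : CutSep (γ s) P P') (hQ : CutSep (γ t) Q Q') (htP : γ t ∈ P) (hsQ : γ s ∈ Q) :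
    P ∩ Q ⊆ γ '' uIcc s t := by
  rcases lt_or_gt_of_ne hst with hlt | hlt
  · rw [uIcc_of_lt hlt]; exact h.between_lt hs ht hlt hP hQ htP hsQ
  · rw [uIcc_of_gt hlt, inter_comm]; exact h.between_lt ht hs hlt hQ hP hsQ htP

end ArcChart

structure CutOrd {Y : Type*} [TopologicalSpace Y] (R L : Y → Set Y) : Prop where
  sep : ∀ p, CutSep p (R p) (L p)
  big : ∀ p q, ∀ K : Set Y, IsCompact K → ∃ e, e ∈ R p ∧ e ∈ R q ∧ e ∉ K
  chart : ∀ p, ∃ (γ : ℝ → Y) (δ : ℝ), ArcChart γ δ ∧ γ 0 = p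

namespace CutOrd
variable {Y : Type*} [TopologicalSpace Y] [T2Space Y] [PreconnectedSpace Y] {R L : Y → Set Y}

lemma two (h : CutOrd R L) {p q : Y} (hq : q ∈ L p) : R p ∪ {p} ⊆ R q := by
  obtain ⟨e, he1, he2, -⟩ := h.big p q ∅ isCompact_empty
  refine (h.sep q).sub_of (h.sep p).pre ?_ (Or.inl he1) he2
  rintro (h1 | h1)
  · exact (h.sep p).disj q h1 hq
  · rw [mem_singleton_iff.1 h1] at hq; exact (h.sep p).np' hq

lemma chart_not (h : CutOrd R L) {γ : ℝ → Y} {δ : ℝ} (hc : ArcChart γ δ) {s t : ℝ} (hs : s ∈ Ioo (-δ) δ)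
    (ht : t ∈ Ioo (-δ) δ) (h1 : γ t ∈ R (γ s)) (h2 : γ s ∈ R (γ t)) : False := by
  have hst : s ≠ t := by rintro rfl; exact (h.sep _).np h1
  have hsub : uIcc s t ⊆ Ioo (-δ) δ := ordConnected_Ioo.uIcc_subset hs ht
  obtain ⟨e, he1, he2, he⟩ := h.big (γ s) (γ t) _ (isCompact_uIcc.image_of_continuousOn (hc.cont.mono hsub))
  exact he (hc.between hs ht hst (h.sep _) (h.sep _) h1 h2 ⟨he1, he2⟩)

lemma move (h : CutOrd R L) {γ : ℝ → Y} {δ : ℝ} (hc : ArcChart γ δ) {s t : ℝ} (hs : s ∈ Ioo (-δ) δ)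
    (ht : t ∈ Ioo (-δ) δ) {p : Y} (hp : p ∉ γ '' uIcc s t) (h1 : γ t ∈ R (γ s)) : p ∈ R (γ s) ↔ p ∈ R (γ t) := by
  have hst : s ≠ t := by rintro rfl; exact (h.sep _).np h1
  have h2 : γ s ∈ L (γ t) := ((h.sep (γ t)).cov (γ s) (fun he => hst (hc.inj hs ht he))).resolve_left
    (fun h2 => h.chart_not hc hs ht h1 h2)
  constructor
  · intro hps
    by_contra hcon
    have hpt : p ∈ L (γ t) := ((h.sep (γ t)).cov p (fun he => hp ⟨t, right_mem_uIcc, he.symm⟩)).resolve_left hcon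
    exact hp (hc.between hs ht hst (h.sep _) (h.sep _).symm h1 h2 ⟨hps, hpt⟩)
  · intro hpt
    exact h.two h2 (Or.inl hpt)

lemma move' (h : CutOrd R L) {γ : ℝ → Y} {δ : ℝ} (hc : ArcChart γ δ) {s t : ℝ} (hs : s ∈ Ioo (-δ) δ)
    (ht : t ∈ Ioo (-δ) δ) {p : Y} (hp : p ∉ γ '' uIcc s t) : p ∈ R (γ s) ↔ p ∈ R (γ t) := by
  by_cases hst : s = t
  · rw [hst]
  · rcases (h.sep (γ s)).cov (γ t) (fun he => hst (hc.inj hs ht he.symm)) with h1 | h1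
    · exact h.move hc hs ht hp h1
    · have : γ s ∈ R (γ t) := h.two h1 (Or.inr rfl)
      exact (h.move hc ht hs (by rwa [uIcc_comm]) this).symm

lemma local_const (h : CutOrd R L) {p q : Y} (hpq : q ≠ p) :
    ∃ O, IsOpen O ∧ q ∈ O ∧ ∀ q' ∈ O, (p ∈ R q ↔ p ∈ R q') := by
  obtain ⟨γ, δ, hc, rfl⟩ := h.chart q
  have h0 : (0:ℝ) ∈ Ioo (-δ) δ := ⟨by linarith [hc.pos], hc.pos⟩
  have hev : ∀ᶠ s in 𝓝 (0:ℝ), γ s ≠ p :=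
    ((hc.cont.continuousAt (Ioo_mem_nhds h0.1 h0.2)).eventually_ne hpq)
  obtain ⟨d, hd, hd'⟩ := Metric.eventually_nhds_iff.1 hev
  set d1 := min d δ with hd1
  have hd1pos : 0 < d1 := lt_min hd hc.pos
  refine ⟨γ '' Ioo (-d1) d1, hc.op _ _ (neg_le_neg (min_le_right _ _)) (min_le_right _ _), ⟨0, ⟨by linarith, hd1pos⟩, rfl⟩, ?_⟩
  rintro _ ⟨s, hs, rfl⟩
  have hsI : s ∈ Ioo (-δ) δ := ⟨by linarith [hs.1, min_le_right d δ], by linarith [hs.2, min_le_right d δ]⟩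
  refine h.move' hc h0 hsI ?_
  rintro ⟨x, hx, hxp⟩
  refine hd' ?_ hxp
  have hx2 : x ∈ Ioo (-d1) d1 := ordConnected_Ioo.uIcc_subset (show (0:ℝ) ∈ Ioo (-d1) d1 from ⟨by linarith, hd1pos⟩) hs hx
  rw [Real.dist_eq, sub_zero, abs_lt]
  exact ⟨by linarith [hx2.1, min_le_left d δ], by linarith [hx2.2, min_le_left d δ]⟩

lemma anti (h : CutOrd R L) {p q : Y} (h1 : q ∈ R p) (h2 : p ∈ R q) : False := by
  refine CutSep.clopen (U := {q | q ∈ R p ∧ p ∈ R q}) (V := {q | q ∈ R p ∧ p ∈ R q}ᶜ) ?_ ?_ (union_compl_self _) (fun x hx hx' => hx' hx)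
    ⟨q, h1, h2⟩ ⟨p, fun hp => (h.sep p).np hp.1⟩
  · rw [isOpen_iff_forall_mem_open]
    rintro x ⟨hx1, hx2⟩
    obtain ⟨O, hO, hxO, hO'⟩ := h.local_const (p := p) (q := x) (by rintro rfl; exact (h.sep _).np hx1)
    exact ⟨R p ∩ O, fun y hy => ⟨hy.1, (hO' y hy.2).1 hx2⟩, (h.sep p).o.inter hO, hx1, hxO⟩
  · rw [isOpen_iff_forall_mem_open]
    intro x hx
    by_cases hxp : x = p
    · subst hxp
      obtain ⟨γ, δ, hc, rfl⟩ := h.chart x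
      have h0 : (0:ℝ) ∈ Ioo (-δ) δ := ⟨by linarith [hc.pos], hc.pos⟩
      refine ⟨γ '' Ioo (-δ) δ, ?_, hc.op _ _ le_rfl le_rfl, 0, h0, rfl⟩
      rintro _ ⟨s, hs, rfl⟩ ⟨e1, e2⟩
      exact h.chart_not hc h0 hs e1 e2
    · rcases (h.sep p).cov x hxp with hx1 | hx1
      · obtain ⟨O, hO, hxO, hO'⟩ := h.local_const (p := p) (q := x) hxp
        refine ⟨R p ∩ O, ?_, (h.sep p).o.inter hO, hx1, hxO⟩
        rintro y ⟨hy1, hy2⟩ ⟨-, hy3⟩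
        exact hx ⟨hx1, (hO' y hy2).2 hy3⟩
      · exact ⟨L p, fun y hy hy' => (h.sep p).disj y hy'.1 hy, (h.sep p).o', hx1⟩

lemma iff (h : CutOrd R L) {p q : Y} : q ∈ R p ↔ p ∈ L q := by
  constructor
  · intro h1
    refine ((h.sep q).cov p ?_).resolve_left (fun h2 => h.anti h1 h2)
    rintro rfl; exact (h.sep _).np h1
  · intro h1; exact h.two h1 (Or.inr rfl)

lemma trans (h : CutOrd R L) {p q r : Y} (h1 : q ∈ R p) (h2 : r ∈ R q) : r ∈ R p :=
  h.two (h.iff.1 h1) (Or.inl h2)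

lemma dense (h : CutOrd R L) {p q : Y} (h1 : q ∈ R p) : (R p ∩ L q).Nonempty := by
  by_contra hne
  refine CutSep.clopen (h.sep p).o (h.sep q).o' ?_ (fun x hx hx' => hne ⟨x, hx, hx'⟩) (h.sep p).ne (h.sep q).ne'
  ext x
  simp only [mem_union, mem_univ, iff_true]
  by_cases hxp : x = p
  · subst hxp; exact Or.inr (h.iff.1 h1)
  · rcases (h.sep p).cov x hxp with hx | hx
    · exact Or.inl hx
    · exact Or.inr (h.iff.1 (h.trans (h.iff.2 hx) h1))

/-- small order intervals -/
lemma small (h : CutOrd R L) {p : Y} {O : Set Y} (hO : IsOpen O) (hp : p ∈ O) :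
    ∃ a b, p ∈ R a ∧ p ∈ L b ∧ R a ∩ L b ⊆ O := by
  obtain ⟨γ, δ, hc, rfl⟩ := h.chart p
  have h0 : (0:ℝ) ∈ Ioo (-δ) δ := ⟨by linarith [hc.pos], hc.pos⟩
  have hev : ∀ᶠ s in 𝓝 (0:ℝ), γ s ∈ O :=
    ((hc.cont.continuousAt (Ioo_mem_nhds h0.1 h0.2)).eventually (hO.mem_nhds hp))
  obtain ⟨d, hd, hd'⟩ := Metric.eventually_nhds_iff.1 hev
  set d1 := min d δ / 2 with hd1
  have hm : 0 < min d δ := lt_min hd hc.pos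
  have hs : -d1 ∈ Ioo (-δ) δ := ⟨by linarith [min_le_right d δ], by linarith [hc.pos]⟩
  have ht : d1 ∈ Ioo (-δ) δ := ⟨by linarith [hc.pos], by linarith [min_le_right d δ]⟩
  have hlt : -d1 < d1 := by linarith
  have hsub : γ '' Icc (-d1) d1 ⊆ O := by
    rintro _ ⟨x, hx, rfl⟩
    refine hd' ?_
    rw [Real.dist_eq, sub_zero, abs_lt]
    exact ⟨by linarith [hx.1, min_le_left d δ], by linarith [hx.2, min_le_left d δ]⟩
  rcases (h.sep (γ (-d1))).cov (γ d1) (fun he => hlt.ne' (hc.inj ht hs he)) with h1 | h1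
  · have h2 := h.iff.1 h1
    refine ⟨γ (-d1), γ d1, ?_, ?_, (hc.between_lt hs ht hlt (h.sep _) (h.sep _).symm h1 h2).trans hsub⟩
    · exact (hc.halves_gt hs ht hlt (h.sep _) h1).1 ⟨0, ⟨by linarith, hc.pos⟩, rfl⟩
    · exact (hc.halves_lt ht hs hlt (h.sep _).symm h2).1 ⟨0, ⟨by linarith [hc.pos], by linarith⟩, rfl⟩
  · have h2 := h.iff.2 h1
    refine ⟨γ d1, γ (-d1), ?_, ?_, ?_⟩
    · exact (hc.halves_lt ht hs hlt (h.sep _) h2).1 ⟨0, ⟨by linarith [hc.pos], by linarith⟩, rfl⟩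
    · exact (hc.halves_gt hs ht hlt (h.sep _).symm h1).1 ⟨0, ⟨by linarith, hc.pos⟩, rfl⟩
    · rw [inter_comm]
      exact (hc.between_lt hs ht hlt (h.sep _).symm (h.sep _) h1 h2).trans hsub

theorem homeo [TopologicalSpace.SeparableSpace Y] [Nonempty Y] (h : CutOrd R L) : Nonempty (Y ≃ₜ ℝ) := by
  classical
  letI : LinearOrder Y :=
    { le := fun p q => p = q ∨ q ∈ R p
      lt := fun p q => q ∈ R p
      le_refl := fun p => Or.inl rfl
      le_trans := by
        rintro p q r (rfl | h1) (rfl | h2)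
        · exact Or.inl rfl
        · exact Or.inr h2
        · exact Or.inr h1
        · exact Or.inr (h.trans h1 h2)
      lt_iff_le_not_ge := by
        intro p q
        constructor
        · intro h1
          refine ⟨Or.inr h1, ?_⟩
          rintro (rfl | h2)
          · exact (h.sep _).np h1
          · exact h.anti h1 h2
        · rintro ⟨rfl | h1, h2⟩
          · exact (h2 (Or.inl rfl)).elim
          · exact h1
      le_antisymm := by
        rintro p q (rfl | h1) (h2 | h2)
        · rfl
        · rfl
        · exact h2.symm
        · exact (h.anti h1 h2).elim
      le_total := by
        intro p q
        by_cases hpq : q = p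
        · exact Or.inl (Or.inl hpq.symm)
        · rcases (h.sep p).cov q hpq with h1 | h1
          · exact Or.inl (Or.inr h1)
          · exact Or.inr (Or.inr (h.iff.2 h1))
      toDecidableLE := Classical.decRel _ }
  have hlt : ∀ {p q : Y}, p < q ↔ q ∈ R p := fun {p q} => Iff.rfl
  have hlt' : ∀ {p q : Y}, p < q ↔ p ∈ L q := fun {p q} => h.iff
  obtain ⟨D, hDc, hDd⟩ := TopologicalSpace.exists_countable_dense Y
  have hbet : ∀ p q : Y, p < q → ∃ d : D, p < d ∧ (d : Y) < q := by
    intro p q hpq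
    obtain ⟨d, hd, hdD⟩ := hDd.inter_open_nonempty _ ((h.sep p).o.inter (h.sep q).o') (h.dense hpq)
    exact ⟨⟨d, hdD⟩, hd.1, hlt'.2 hd.2⟩
  have hab : ∀ p : Y, ∃ d : D, p < d := by
    intro p
    obtain ⟨d, hd, hdD⟩ := hDd.inter_open_nonempty _ (h.sep p).o (h.sep p).ne
    exact ⟨⟨d, hdD⟩, hd⟩
  have hbe : ∀ p : Y, ∃ d : D, (d : Y) < p := by
    intro p
    obtain ⟨d, hd, hdD⟩ := hDd.inter_open_nonempty _ (h.sep p).o' (h.sep p).ne'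
    exact ⟨⟨d, hdD⟩, hlt'.2 hd⟩
  haveI : Countable D := hDc.to_subtype
  haveI : Nonempty D := hDd.nonempty.to_subtype
  haveI : DenselyOrdered D := ⟨fun a b hab' => hbet a b hab'⟩
  haveI : NoMaxOrder D := ⟨fun a => hab a⟩
  haveI : NoMinOrder D := ⟨fun a => hbe a⟩
  obtain ⟨f⟩ := Order.iso_of_countable_dense D ℚ
  have hfl : ∀ {d d' : D}, (d : Y) < d' → (f d : ℝ) < f d' := by
    intro d d' hd
    have : d < d' := hd
    exact_mod_cast f.lt_iff_lt.2 this
  have hfl' : ∀ {d d' : D}, (f d : ℝ) < f d' → (d : Y) < d' := by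
    intro d d' hd
    have : f d < f d' := by exact_mod_cast hd
    exact f.lt_iff_lt.1 this
  set T : Y → Set ℝ := fun p => {x : ℝ | ∃ d : D, (d : Y) < p ∧ x = f d} with hT
  set g : Y → ℝ := fun p => sSup (T p) with hg
  have hTne : ∀ p, (T p).Nonempty := fun p => by obtain ⟨d, hd⟩ := hbe p; exact ⟨_, d, hd, rfl⟩
  have hTle : ∀ (p : Y) (d : D), p < (d : Y) → ∀ x ∈ T p, x ≤ f d := by
    rintro p d hd x ⟨d', hd', rfl⟩; exact (hfl (hd'.trans hd)).le
  have hTb : ∀ p, BddAbove (T p) := fun p => by obtain ⟨d, hd⟩ := hab p; exact ⟨_, hTle p d hd⟩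
  have c1 : ∀ (d : D) p, (d : Y) < p → (f d : ℝ) < g p := by
    intro d p hd
    obtain ⟨d', h1, h2⟩ := hbet _ _ hd
    exact (hfl h1).trans_le (le_csSup (hTb p) ⟨d', h2, rfl⟩)
  have c2 : ∀ (d : D) p, p < (d : Y) → g p < (f d : ℝ) := by
    intro d p hd
    obtain ⟨d', h1, h2⟩ := hbet _ _ hd
    exact (csSup_le (hTne p) (hTle p d' h1)).trans_lt (hfl h2)
  have c3 : ∀ (d : D) p, (f d : ℝ) < g p → (d : Y) < p := by
    intro d p hd
    obtain ⟨x, ⟨d', h1, rfl⟩, hx⟩ := exists_lt_of_lt_csSup (hTne p) hd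
    exact (hfl' hx).trans h1
  have c4 : ∀ (d : D) p, g p < (f d : ℝ) → p < (d : Y) := by
    intro d p hd
    by_contra hcon
    rcases (not_lt.1 hcon).lt_or_eq with h1 | h1
    · exact lt_asymm (c1 d p h1) hd
    · obtain ⟨x, hx1, hx2⟩ := exists_rat_btwn hd
      obtain ⟨d', rfl⟩ := f.surjective x
      exact lt_asymm (c1 d' p (h1 ▸ hfl' hx2)) hx1
  have hgc : Continuous g := by
    rw [OrderTopology.continuous_iff]
    intro a
    constructor
    · rw [isOpen_iff_forall_mem_open]
      intro p (hp : a < g p)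
      obtain ⟨x, hx1, hx2⟩ := exists_rat_btwn hp
      obtain ⟨d, rfl⟩ := f.surjective x
      exact ⟨R d, fun y hy => hx1.trans (c1 d y hy), (h.sep _).o, c3 d p hx2⟩
    · rw [isOpen_iff_forall_mem_open]
      intro p (hp : g p < a)
      obtain ⟨x, hx1, hx2⟩ := exists_rat_btwn hp
      obtain ⟨d, rfl⟩ := f.surjective x
      exact ⟨L d, fun y hy => (c2 d y (hlt'.2 hy)).trans hx2, (h.sep _).o', hlt'.1 (c4 d p hx1)⟩
  have hgm : StrictMono g := by
    intro p q hpq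
    obtain ⟨d, h1, h2⟩ := hbet p q hpq
    exact (c2 d p h1).trans (c1 d q h2)
  have hgs : Function.Surjective g := by
    intro x
    obtain ⟨q1, hq1⟩ := exists_rat_lt x
    obtain ⟨q2, hq2⟩ := exists_rat_gt x
    obtain ⟨d1, rfl⟩ := f.surjective q1
    obtain ⟨d2, rfl⟩ := f.surjective q2
    refine mem_range_of_exists_le_of_exists_ge hgc ⟨d1, ?_⟩ ⟨d2, ?_⟩
    · by_contra hcon
      exact lt_irrefl _ (c3 d1 d1 (hq1.trans (not_le.1 hcon)))
    · by_contra hcon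
      exact lt_irrefl _ (c4 d2 d2 ((not_le.1 hcon).trans hq2))
  have hgo : IsOpenMap g := by
    intro O hO
    rw [isOpen_iff_mem_nhds]
    rintro _ ⟨p, hp, rfl⟩
    obtain ⟨a, b, ha, hb, hsub⟩ := h.small hO hp
    refine Filter.mem_of_superset (Ioo_mem_nhds (hgm (show a < p from ha)) (hgm (hlt'.2 hb))) ?_
    rintro x ⟨hx1, hx2⟩
    obtain ⟨y, rfl⟩ := hgs x
    exact ⟨y, hsub ⟨hgm.lt_iff_lt.1 hx1, hlt'.1 (hgm.lt_iff_lt.1 hx2)⟩, rfl⟩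
  exact ⟨(Equiv.ofBijective g ⟨hgm.injective, hgs⟩).toHomeomorphOfContinuousOpen hgc hgo⟩

end CutOrd

open Set Metric Topology Filter

/-! ### Part 9: branches at points of the equidistant set, and the transversal direction -/

def Sa (A : Set ℂ) (z0 a : ℂ) : Set ℂ := connectedComponentIn A a ∪ segment ℝ z0 a

def rho (z0 : ℂ) : ℝ := max z0.re 0 + 1

lemma rho_gt (z0 : ℂ) : z0.re < rho z0 := by unfold rho; linarith [le_max_left z0.re 0]
lemma rho_pos (z0 : ℂ) : 0 < rho z0 := by unfold rho; linarith [le_max_right z0.re 0]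

namespace Good
variable {A B : Set ℂ} {σ : ℝ}

lemma tailS (h : Good A B σ) (z0 : ℂ) {a : ℂ} (ha : a ∈ A) : Tail (Sa A z0 a) (rho z0) := by
  have hTC := h.tailA ha
  have hsegc : IsCompact (segment ℝ z0 a) := by
    rw [segment_eq_image_lineMap]; exact isCompact_Icc.image AffineMap.lineMap_continuous
  refine ⟨hTC.closed.union hsegc.isClosed, hTC.conn.union a (mem_connectedComponentIn ha) (right_mem_segment ℝ z0 a)
    (convex_segment z0 a).isPreconnected, ?_, ?_⟩
  · rintro z (hz | hz)
    · linarith [hTC.lt z hz, rho_pos z0]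
    · have : segment ℝ z0 a ⊆ {w : ℂ | w.re < rho z0} :=
        (convex_halfSpace_re_lt (rho z0)).segment_subset (rho_gt z0) ((h.aneg a ha).trans (rho_pos z0))
      exact this hz
  · intro m; obtain ⟨z, hz, h⟩ := hTC.unb m; exact ⟨z, Or.inl hz, h⟩

lemma base_mem {z0 a : ℂ} : z0 ∈ Sa A z0 a := Or.inr (left_mem_segment ℝ z0 a)

lemma S_V (h : Good A B σ) {z0 a : ℂ} (hz0 : z0 ∈ FA A B) (ha : a ∈ A) (hda : infDist z0 A = dist z0 a) :
    ∀ p ∈ Sa A z0 a, p = z0 ∨ p ∈ VA A B := by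
  rintro p (hp | hp)
  · exact Or.inr (h.mem_VA_of_mem (connectedComponentIn_subset _ _ hp))
  · by_cases hpz : p = z0
    · exact Or.inl hpz
    · exact Or.inr (segV h.bcl h.bne h.disj hz0 ha hda hp hpz)

lemma FB_dom (h : Good A B σ) {z0 a : ℂ} (hz0 : z0 ∈ FA A B) (ha : a ∈ A) (hda : infDist z0 A = dist z0 a) :
    FA B A \ {z0} ⊆ tdom (Sa A z0 a) (rho z0) := by
  have hSV := h.S_V hz0 ha hda
  have hout : ∀ e ∈ FA B A, e ≠ z0 → e ∈ (Sa A z0 a)ᶜ := by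
    intro e he hne hS
    have he : infDist e B ≤ infDist e A := he
    rcases hSV e hS with h1 | h1
    · exact hne h1
    · have h1 : infDist e A < infDist e B := h1
      linarith
  have hz0' : infDist z0 A ≤ infDist z0 B := hz0
  have hVout : VA B A ⊆ (Sa A z0 a)ᶜ := by
    intro e he
    refine hout e (VA_sub_FA he) ?_
    rintro rfl
    have he : infDist e B < infDist e A := he
    linarith
  rintro e ⟨he, hne⟩
  obtain ⟨b, hb, hdb⟩ := h.bcl.exists_infDist_eq_dist h.bne e
  obtain ⟨y, hy⟩ := h.symm.far (rho_pos z0)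
  have hr := hy y le_rfl
  set r : ℂ := ((rho z0 : ℝ) : ℂ) + (-σ * y : ℝ) * Complex.I with hrdef
  have hK : IsPreconnected (VA B A ∪ segment ℝ e b) :=
    h.symm.VA_pre.union b (h.symm.mem_VA_of_mem hb) (right_mem_segment ℝ e b) (convex_segment e b).isPreconnected
  refine tdom_of hK ?_ (Or.inl hr) ((h.tailS z0 ha).right (by simp [hrdef])) (Or.inr (left_mem_segment ℝ e b))
  rintro p (hp | hp)
  · exact hVout hp
  · by_cases hpe : p = e
    · subst hpe; exact hout p he hne
    · exact hVout (segV h.acl h.ane h.symm.disj he hb hdb hp hpe)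

/-- Logarithm of `e - z0` on the closed `B`-side minus `z0`. -/
lemma branch (h : Good A B σ) {z0 : ℂ} (hz0 : z0 ∈ FA A B) :
    ∃ l : ℂ → ℂ, ContinuousOn l (FA B A \ {z0}) ∧ (∀ e ∈ FA B A \ {z0}, Complex.exp (l e) = e - z0) ∧
      ∀ e : ℂ, rho z0 ≤ e.re → l e = Complex.log (e - z0) := by
  obtain ⟨a, ha, hda⟩ := h.acl.exists_infDist_eq_dist h.ane z0
  have hT := h.tailS z0 ha
  have hd := h.FB_dom hz0 ha hda
  exact ⟨br (Sa A z0 a) (rho z0) z0, (hT.br_cont base_mem).mono hd, fun e he => hT.br_exp base_mem (hd he),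
    fun e he => hT.br_right base_mem he⟩

lemma psi_eq (h : Good A B σ) {z0 a a' : ℂ} (hz0 : z0 ∈ FA A B) (ha : a ∈ A) (hda : infDist z0 A = dist z0 a)
    (ha' : a' ∈ A) (hda' : infDist z0 A = dist z0 a') {e : ℂ} (he : e ∈ VA B A) :
    br (Sa A z0 a) (rho z0) z0 e = br (Sa A z0 a') (rho z0) z0 e := by
  have hT := h.tailS z0 ha
  have hT' := h.tailS z0 ha'
  have hz0' : infDist z0 A ≤ infDist z0 B := hz0
  have hsub : VA B A ⊆ FA B A \ {z0} := by
    intro e he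
    refine ⟨VA_sub_FA he, ?_⟩
    rintro rfl
    have he : infDist e B < infDist e A := he
    linarith
  have hd := hsub.trans (h.FB_dom hz0 ha hda)
  have hd' := hsub.trans (h.FB_dom hz0 ha' hda')
  obtain ⟨y, hy⟩ := h.symm.far (rho_pos z0)
  have hr := hy y le_rfl
  set r : ℂ := ((rho z0 : ℝ) : ℂ) + (-σ * y : ℝ) * Complex.I with hrdef
  have hrre : rho z0 ≤ r.re := by simp [hrdef]
  exact log_uni h.symm.VA_pre ((hT.br_cont base_mem).mono hd) ((hT'.br_cont base_mem).mono hd')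
    (fun z hz => by rw [hT.br_exp base_mem (hd hz), hT'.br_exp base_mem (hd' hz)]) hr
    (by rw [hT.br_right base_mem hrre, hT'.br_right base_mem hrre]) he

lemma slit_inv {w : ℂ} (hw : w ∈ Complex.slitPlane) : w⁻¹ ∈ Complex.slitPlane := by
  have h0 : 0 < Complex.normSq w := Complex.normSq_pos.2 (Complex.slitPlane_ne_zero hw)
  rw [Complex.mem_slitPlane_iff] at hw ⊢
  rcases hw with hw | hw
  · left; rw [Complex.inv_re]; positivity
  · right; rw [Complex.inv_im]; exact div_ne_zero (neg_ne_zero.2 hw) h0.ne'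

lemma slit_add {w : ℂ} (h1 : ‖w‖ = 1) (hw : w ≠ -1) {t : ℝ} (ht : 0 ≤ t) : w + t ∈ Complex.slitPlane := by
  rw [Complex.mem_slitPlane_iff]
  by_cases him : w.im = 0
  · left
    have hre : w.re ^ 2 = 1 := by
      have := Complex.sq_norm w
      rw [h1, Complex.normSq_apply, him] at this
      nlinarith
    rcases mul_eq_zero.1 (show (w.re - 1) * (w.re + 1) = 0 by linarith) with h0 | h0
    · simp; linarith
    · exact (hw (Complex.ext (by simp; linarith) (by simp [him]))).elim
  · right; simpa using him

/-- The angle relation. -/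
lemma angle (h : Good A B σ) {z0 a b : ℂ} (hz0 : z0 ∈ equidistSet A B) (ha : a ∈ A) (hda : infDist z0 A = dist z0 a)
    (hb : b ∈ B) (hdb : infDist z0 B = dist z0 b) :
    br (Sa A z0 a) (rho z0) z0 b = br (connectedComponentIn A a) 0 a z0 + Complex.log ((b - z0) / (z0 - a)) ∧
    Complex.exp (br (connectedComponentIn A a) 0 a z0) = z0 - a ∧ (b - z0) / (z0 - a) ∈ Complex.slitPlane := by
  have hE : infDist z0 A = infDist z0 B := hz0
  have hzA : z0 ∈ FA A B := hE.le
  have hzB : z0 ∈ FA B A := hE.ge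
  have hT := h.tailS z0 ha
  have hTC := h.tailA ha
  have haC : a ∈ connectedComponentIn A a := mem_connectedComponentIn ha
  have hza : z0 ∉ A := by
    intro h0
    have := h.mem_VA_of_mem h0
    have : infDist z0 A < infDist z0 B := this
    linarith
  have hzb : z0 ∉ B := by
    intro h0
    have := h.symm.mem_VA_of_mem h0
    have : infDist z0 B < infDist z0 A := this
    linarith
  have hza' : z0 - a ≠ 0 := sub_ne_zero.2 (by rintro rfl; exact hza ha)
  have hzb' : b - z0 ≠ 0 := sub_ne_zero.2 (by rintro rfl; exact hzb hb)
  have hnorm : ‖(z0 - a) / (b - z0)‖ = 1 := by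
    rw [norm_div, ← dist_eq_norm, ← dist_eq_norm, dist_comm b, ← hda, ← hdb, hE, div_self]
    rw [hdb, dist_comm, dist_eq_norm]; exact norm_ne_zero_iff.2 hzb'
  have hne1 : (z0 - a) / (b - z0) ≠ -1 := by
    intro h0
    rw [div_eq_iff hzb'] at h0
    have : a = b := by linear_combination -h0
    exact h.disj a ha (this ▸ hb)
  have hseg : segment ℝ z0 b ⊆ tdom (connectedComponentIn A a) 0 := by
    refine tdom_of (convex_segment z0 b).isPreconnected ?_ (right_mem_segment ℝ z0 b) (h.B_sub ha hb)
    intro p hp hpC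
    have hpA := connectedComponentIn_subset _ _ hpC
    by_cases hpz : p = z0
    · subst hpz; exact hza hpA
    · have e1 : infDist p B < infDist p A := segV h.acl h.ane h.symm.disj hzB hb hdb hp hpz
      have e2 : infDist p A < infDist p B := h.mem_VA_of_mem hpA
      linarith
  set e : ℝ → ℂ := fun t => AffineMap.lineMap z0 b t with he
  have hec : Continuous e := AffineMap.lineMap_continuous
  have he' : ∀ t, e t - a = (b - z0) * ((z0 - a) / (b - z0) + t) := by
    intro t
    rw [mul_add, mul_div_cancel₀ _ hzb']
    simp only [he, AffineMap.lineMap_apply, vsub_eq_sub, vadd_eq_add, Complex.real_smul]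
    ring
  have hq : ∀ t ∈ Icc (0:ℝ) 1, (b - z0) / (e t - a) ∈ Complex.slitPlane := by
    intro t ht
    have := slit_inv (slit_add hnorm hne1 ht.1)
    rw [he' t, div_mul_eq_div_div, div_self hzb', one_div]
    exact this
  have hea : ∀ t ∈ Icc (0:ℝ) 1, e t - a ≠ 0 := by
    intro t ht h0
    have := hq t ht
    rw [h0, div_zero] at this
    exact Complex.slitPlane_ne_zero this rfl
  have het : ∀ t ∈ Icc (0:ℝ) 1, e t ∈ tdom (connectedComponentIn A a) 0 := by
    intro t ht
    refine hseg ?_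
    rw [segment_eq_image_lineMap]; exact ⟨t, ht, rfl⟩
  have hF : br (connectedComponentIn A a) 0 a (e 1) + Complex.log ((b - z0) / (e 1 - a)) =
      br (connectedComponentIn A a) 0 a (e 0) + Complex.log ((b - z0) / (e 0 - a)) := by
    refine log_uni (K := Icc (0:ℝ) 1) isPreconnected_Icc
      (l1 := fun t => br (connectedComponentIn A a) 0 a (e t) + Complex.log ((b - z0) / (e t - a)))
      (l2 := fun t => br (connectedComponentIn A a) 0 a (e 0) + Complex.log ((b - z0) / (e 0 - a)))
      ?_ continuousOn_const ?_ (e0 := 0) (by simp) rfl (by simp)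
    · refine ContinuousOn.add ((hTC.br_cont haC).comp hec.continuousOn het) ?_
      refine ContinuousOn.clog ?_ hq
      exact continuousOn_const.div (hec.continuousOn.sub continuousOn_const) hea
    · have key : ∀ t ∈ Icc (0:ℝ) 1, Complex.exp (br (connectedComponentIn A a) 0 a (e t) + Complex.log ((b - z0) / (e t - a))) = b - z0 := by
        intro t ht
        rw [Complex.exp_add, hTC.br_exp haC (het t ht), Complex.exp_log (Complex.slitPlane_ne_zero (hq t ht)),
          mul_div_cancel₀ _ (hea t ht)]
      intro t ht
      exact (key t ht).trans (key 0 (by simp)).symm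
  have e0 : e 0 = z0 := by simp [he]
  have e1 : e 1 = b := by simp [he]
  have hbd : b ∈ tdom (Sa A z0 a) (rho z0) :=
    h.FB_dom hzA ha hda ⟨VA_sub_FA (h.symm.mem_VA_of_mem hb), by rintro rfl; exact hzb hb⟩
  rw [e0, e1] at hF
  refine ⟨?_, hTC.br_exp haC (e0 ▸ het 0 (by simp)), e0 ▸ hq 0 (by simp)⟩
  rw [hT.br_seg subset_union_right hbd, ← hTC.br_mono hT subset_union_left haC hbd, hF]

end Good

open Set Metric Topology Filter

/-! ### Part 10: the transversal direction -/

lemma isCompact_nearest {A : Set ℂ} (hA : IsClosed A) (z0 : ℂ) :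
    IsCompact {a | a ∈ A ∧ infDist z0 A = dist z0 a} := by
  refine Metric.isCompact_of_isClosed_isBounded ?_ ?_
  · exact hA.inter (isClosed_eq continuous_const (continuous_const.dist continuous_id))
  · refine (Metric.isBounded_closedBall (x := z0) (r := infDist z0 A)).subset ?_
    rintro a ⟨-, ha⟩
    rw [mem_closedBall, dist_comm]; exact ha.ge

namespace Good
variable {A B : Set ℂ} {σ : ℝ}

lemma transversal (h : Good A B σ) {z0 : ℂ} (hz0 : z0 ∈ equidistSet A B) :
    ∃ μ k : ℝ, (∀ a ∈ A, infDist z0 A = dist z0 a → ((a - z0) * Complex.exp (-(μ * Complex.I))).re < k * dist z0 a) ∧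
      (∀ b ∈ B, infDist z0 B = dist z0 b → k * dist z0 b < ((b - z0) * Complex.exp (-(μ * Complex.I))).re) := by
  have hE : infDist z0 A = infDist z0 B := hz0
  have hzA : z0 ∈ FA A B := hE.le
  have hpos : 0 < infDist z0 A := by
    rcases (infDist_nonneg (x := z0) (s := A)).lt_or_eq with h0 | h0
    · exact h0
    · exfalso
      have h1 : z0 ∈ A := (h.acl.mem_iff_infDist_zero h.ane).2 h0.symm
      have h2 : z0 ∈ B := (h.bcl.mem_iff_infDist_zero h.bne).2 (by linarith)
      exact h.disj _ h1 h2
  set r := infDist z0 A with hr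
  obtain ⟨a0, ha0, hda0⟩ := h.acl.exists_infDist_eq_dist h.ane z0
  obtain ⟨b0, hb0, hdb0⟩ := h.bcl.exists_infDist_eq_dist h.bne z0
  have hNA := isCompact_nearest h.acl z0
  have hNB := isCompact_nearest h.bcl z0
  set ψ : ℂ → ℝ := fun e => (br (Sa A z0 a0) (rho z0) z0 e).im with hψ
  have hT := h.tailS z0 ha0
  have hzb : ∀ b ∈ B, b ≠ z0 := by
    rintro b hb rfl
    have := h.symm.mem_VA_of_mem hb
    have : infDist b B < infDist b A := this
    linarith
  have hNBd : ∀ b ∈ B, b ∈ tdom (Sa A z0 a0) (rho z0) := fun b hb =>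
    h.FB_dom hzA ha0 hda0 ⟨VA_sub_FA (h.symm.mem_VA_of_mem hb), hzb b hb⟩
  have hψc : ContinuousOn ψ {b | b ∈ B ∧ infDist z0 B = dist z0 b} :=
    Complex.continuous_im.comp_continuousOn ((hT.br_cont base_mem).mono (fun b hb => hNBd b hb.1))
  obtain ⟨b1, hb1, hmin⟩ := hNB.exists_isMinOn ⟨b0, hb0, hdb0⟩ hψc
  obtain ⟨b2, hb2, hmax⟩ := hNB.exists_isMaxOn ⟨b0, hb0, hdb0⟩ hψc
  set m := ψ b1 with hm
  set M := ψ b2 with hM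
  have hmM : m ≤ M := hmin hb2
  set μ := (m + M) / 2 with hμ
  have hrot : ∀ (w L : ℂ), Complex.exp L = w → (w * Complex.exp (-(μ * Complex.I))).re = ‖w‖ * Real.cos (L.im - μ) := by
    rintro w L rfl
    rw [← Complex.exp_add, Complex.exp_re, Complex.norm_exp]
    simp [sub_eq_add_neg]
  -- angles of the points of `A`
  have hlam : ∀ a ∈ A, infDist z0 A = dist z0 a →
      ∃ lam : ℝ, M - Real.pi < lam ∧ lam < m + Real.pi ∧
        ((z0 - a) * Complex.exp (-(μ * Complex.I))).re = r * Real.cos (lam - μ) := by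
    intro a ha hda
    have key : ∀ b ∈ B, infDist z0 B = dist z0 b →
        ψ b - Real.pi < (br (connectedComponentIn A a) 0 a z0).im ∧ (br (connectedComponentIn A a) 0 a z0).im < ψ b + Real.pi := by
      intro b hb hdb
      obtain ⟨e1, -, e3⟩ := h.angle hz0 ha hda hb hdb
      have e4 : ψ b = (br (connectedComponentIn A a) 0 a z0).im + Complex.arg ((b - z0) / (z0 - a)) := by
        simp only [hψ]
        rw [h.psi_eq hzA ha0 hda0 ha hda (h.symm.mem_VA_of_mem hb), e1, Complex.add_im, Complex.log_im]
      have e5 := Complex.neg_pi_lt_arg ((b - z0) / (z0 - a))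
      have e6 := lt_of_le_of_ne (Complex.arg_le_pi ((b - z0) / (z0 - a))) (Complex.slitPlane_arg_ne_pi e3)
      constructor <;> linarith
    refine ⟨(br (connectedComponentIn A a) 0 a z0).im, (key b2 hb2.1 hb2.2).1, (key b1 hb1.1 hb1.2).2, ?_⟩
    rw [hrot _ _ (h.angle hz0 ha hda hb0 hdb0).2.1, ← dist_eq_norm, ← hda]
  set c := r * Real.cos ((M - m) / 2) with hc
  have hMm : M - m < 2 * Real.pi := by
    obtain ⟨lam, h1, h2, -⟩ := hlam a0 ha0 hda0
    linarith
  have hA1 : ∀ a ∈ A, infDist z0 A = dist z0 a → ((a - z0) * Complex.exp (-(μ * Complex.I))).re < c := by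
    intro a ha hda
    obtain ⟨lam, h1, h2, h3⟩ := hlam a ha hda
    have e1 : ((a - z0) * Complex.exp (-(μ * Complex.I))).re = -(r * Real.cos (lam - μ)) := by
      rw [← h3, ← Complex.neg_re]; ring_nf
    rw [e1, hc]
    have e2 : Real.cos (Real.pi - (M - m) / 2) < Real.cos |lam - μ| := by
      refine Real.cos_lt_cos_of_nonneg_of_le_pi (abs_nonneg _) (by linarith) ?_
      rw [abs_lt]; constructor <;> linarith
    rw [Real.cos_abs, Real.cos_pi_sub] at e2
    nlinarith
  have hB1 : ∀ b ∈ B, infDist z0 B = dist z0 b → c ≤ ((b - z0) * Complex.exp (-(μ * Complex.I))).re := by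
    intro b hb hdb
    rw [hrot _ _ (hT.br_exp base_mem (hNBd b hb)), ← dist_eq_norm, dist_comm, ← hdb, ← hE, hc]
    have e0 : m ≤ ψ b := hmin ⟨hb, hdb⟩
    have e0' : ψ b ≤ M := hmax ⟨hb, hdb⟩
    have e2 : Real.cos ((M - m) / 2) ≤ Real.cos |ψ b - μ| := by
      refine Real.cos_le_cos_of_nonneg_of_le_pi (abs_nonneg _) (by linarith) ?_
      rw [abs_le]; constructor <;> linarith
    rw [Real.cos_abs] at e2
    exact mul_le_mul_of_nonneg_left e2 hpos.le
  obtain ⟨a1, ha1, hmaxA⟩ := hNA.exists_isMaxOn ⟨a0, ha0, hda0⟩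
    (f := fun a => ((a - z0) * Complex.exp (-(μ * Complex.I))).re) (by fun_prop)
  set c' := ((a1 - z0) * Complex.exp (-(μ * Complex.I))).re with hc'
  have hcc : c' < c := hA1 a1 ha1.1 ha1.2
  have hk : (c' + c) / 2 / r * r = (c' + c) / 2 := div_mul_cancel₀ _ hpos.ne'
  refine ⟨μ, (c' + c) / 2 / r, fun a ha hda => ?_, fun b hb hdb => ?_⟩
  · rw [← hda, hk]
    have : ((a - z0) * Complex.exp (-(μ * Complex.I))).re ≤ c' := hmaxA ⟨ha, hda⟩
    linarith
  · rw [← hdb, ← hE, hk]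
    linarith [hB1 b hb hdb]

end Good

lemma near_usc {A : Set ℂ} (hA : IsClosed A) {z0 v : ℂ} {k : ℝ}
    (h : ∀ a ∈ A, infDist z0 A = dist z0 a → ((a - z0) * v).re < k * dist z0 a) :
    ∃ ε > 0, ∀ z ∈ ball z0 ε, ∀ z' ∈ ball z0 ε, ∀ a ∈ A, infDist z' A = dist z' a → ((a - z) * v).re < k * dist z a := by
  set T : Set (ℂ × ℂ × ℂ) := {x | x.2.2 ∈ A ∧ infDist x.2.1 A = dist x.2.1 x.2.2 ∧ k * dist x.1 x.2.2 ≤ ((x.2.2 - x.1) * v).re}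
    with hT
  have hTc : IsClosed T := by
    refine IsClosed.inter (hA.preimage (by fun_prop)) (IsClosed.inter ?_ ?_)
    · exact isClosed_eq ((continuous_infDist_pt A).comp (by fun_prop)) (by fun_prop)
    · exact isClosed_le (f := fun x : ℂ × ℂ × ℂ => k * dist x.1 x.2.2) (g := fun x => ((x.2.2 - x.1) * v).re) (by fun_prop) (by fun_prop)
  have hK : IsCompact (T ∩ (closedBall z0 1 ×ˢ closedBall z0 1 ×ˢ closedBall z0 (infDist z0 A + 2))) :=
    ((isCompact_closedBall _ _).prod ((isCompact_closedBall _ _).prod (isCompact_closedBall _ _))).inter_left hTc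
  have hI := (hK.image (f := fun x : ℂ × ℂ × ℂ => (x.1, x.2.1)) (by fun_prop)).isClosed
  have hn : (z0, z0) ∉ (fun x : ℂ × ℂ × ℂ => (x.1, x.2.1)) '' (T ∩ (closedBall z0 1 ×ˢ closedBall z0 1 ×ˢ closedBall z0 (infDist z0 A + 2))) := by
    rintro ⟨⟨x, y, a⟩, ⟨⟨h1, h2, h3⟩, -⟩, hxy⟩
    simp only [Prod.mk.injEq] at hxy
    obtain ⟨rfl, rfl⟩ := hxy
    exact absurd (h a h1 h2) (not_lt.2 h3)
  obtain ⟨ε, hε, hb⟩ := Metric.isOpen_iff.1 hI.isOpen_compl _ hn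
  refine ⟨min ε 1, lt_min hε one_pos, fun z hz z' hz' a ha hda => ?_⟩
  by_contra hcon
  have hz1 : dist z z0 < min ε 1 := hz
  have hz1' : dist z' z0 < min ε 1 := hz'
  have m1 := min_le_left ε 1
  have m2 := min_le_right ε 1
  refine hb (show (z, z') ∈ ball (z0, z0) ε from ?_) ⟨(z, z', a), ⟨⟨ha, hda, not_lt.1 hcon⟩, ?_, ?_, ?_⟩, rfl⟩
  · rw [mem_ball, Prod.dist_eq, max_lt_iff]; exact ⟨by linarith, by linarith⟩
  · rw [mem_closedBall]; show dist z z0 ≤ 1; linarith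
  · rw [mem_closedBall]; show dist z' z0 ≤ 1; linarith
  · rw [mem_closedBall]
    show dist a z0 ≤ _
    have e1 := infDist_le_infDist_add_dist (x := z') (y := z0) (s := A)
    have e2 := dist_triangle a z' z0
    rw [dist_comm a z', ← hda] at e2
    linarith

lemma norm_ineq {x u v : ℂ} (huv : v = (starRingEnd ℂ) u) {k t : ℝ} (ht : 0 < t) (h : (x * v).re < k * ‖x‖) :
    ‖x‖ - t * k < ‖x - t * u‖ := by
  have hx : 0 < ‖x‖ := by
    rw [norm_pos_iff]; rintro rfl; simp at h
  have e1 : ((x - t * u) * (starRingEnd ℂ) x).re ≤ ‖x - t * u‖ * ‖x‖ := by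
    refine (Complex.re_le_norm _).trans ?_
    rw [norm_mul, Complex.norm_conj]
  have e2 : ((x - t * u) * (starRingEnd ℂ) x).re = ‖x‖ ^ 2 - t * (x * v).re := by
    rw [Complex.sq_norm, Complex.normSq_apply, huv]
    simp
    ring
  have e3 : (‖x‖ - t * k) * ‖x‖ < ‖x - t * u‖ * ‖x‖ := by
    have := mul_lt_mul_of_pos_left h ht
    nlinarith
  exact lt_of_mul_lt_mul_right e3 hx.le

namespace Good
variable {A B : Set ℂ} {σ : ℝ}

lemma local_mono (h : Good A B σ) {z0 : ℂ} (hz0 : z0 ∈ equidistSet A B) :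
    ∃ u v : ℂ, u * v = 1 ∧ ‖u‖ = 1 ∧ ∃ ε > 0, ∀ z ∈ ball z0 ε, ∀ t : ℝ, 0 < t → z + t * u ∈ ball z0 ε →
      infDist z A - infDist z B < infDist (z + t * u) A - infDist (z + t * u) B := by
  obtain ⟨μ, k, hA, hB⟩ := h.transversal hz0
  set v := Complex.exp (-(μ * Complex.I)) with hv
  set u := Complex.exp (μ * Complex.I) with hu
  have huv : v = (starRingEnd ℂ) u := by
    rw [hu, hv, ← Complex.exp_conj]; simp
  obtain ⟨ε1, hε1, h1⟩ := near_usc h.acl hA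
  obtain ⟨ε2, hε2, h2⟩ := near_usc (v := -v) (k := -k) (z0 := z0) h.bcl (by
    intro b hb hdb
    have := hB b hb hdb
    rw [mul_neg, Complex.neg_re]; linarith)
  refine ⟨u, v, by rw [hu, hv, ← Complex.exp_add]; simp, by rw [hu, Complex.norm_exp_ofReal_mul_I], min ε1 ε2, lt_min hε1 hε2, ?_⟩
  intro z hz t ht hz'
  have hz1 := ball_subset_ball (min_le_left ε1 ε2) hz
  have hz2 := ball_subset_ball (min_le_right ε1 ε2) hz
  have hz1' := ball_subset_ball (min_le_left ε1 ε2) hz'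
  have hz2' := ball_subset_ball (min_le_right ε1 ε2) hz'
  set z' := z + t * u with hzz
  obtain ⟨a, ha, hda⟩ := h.acl.exists_infDist_eq_dist h.ane z'
  obtain ⟨b, hb, hdb⟩ := h.bcl.exists_infDist_eq_dist h.bne z
  have e1 := h1 z hz1 z' hz1' a ha hda
  have e2 := h2 z' hz2' z hz2 b hb hdb
  have f1 : dist z a - t * k < dist z' a := by
    rw [dist_comm, dist_eq_norm] at e1
    have := norm_ineq huv ht e1
    have e5 : a - z - t * u = a - z' := by rw [hzz]; ring
    rw [e5] at this
    rw [dist_comm z, dist_comm z', dist_eq_norm, dist_eq_norm]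
    exact this
  have f2 : dist z' b + t * k < dist z b := by
    have e3 : ((z' - b) * v).re < (-k) * ‖z' - b‖ := by
      rw [← dist_eq_norm, show (z' - b) * v = (b - z') * -v by ring]
      exact e2
    have := norm_ineq huv ht e3
    rw [dist_eq_norm, dist_eq_norm]
    have e4 : z' - b - t * u = z - b := by rw [hzz]; ring
    rw [e4] at this
    linarith
  have g1 := infDist_le_dist_of_mem (x := z) ha
  have g2 := infDist_le_dist_of_mem (x := z') hb
  linarith

end Good

open Set Metric Topology Filter

/-! ### Part 11: local charts and conclusion -/

lemma exists_chart {f : ℂ → ℝ} (hf : Continuous f) {E : Set ℂ} (hE : ∀ z, z ∈ E ↔ f z = 0) (z0 : E) {u v : ℂ}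
    (huv : u * v = 1) (hu : ‖u‖ = 1) {ε : ℝ} (hε : 0 < ε)
    (hmono : ∀ z ∈ ball (z0 : ℂ) ε, ∀ t : ℝ, 0 < t → z + t * u ∈ ball (z0 : ℂ) ε → f z < f (z + t * u)) :
    ∃ (γ : ℝ → E) (δ : ℝ), ArcChart γ δ ∧ γ 0 = z0 := by
  classical
  set Φ : ℝ → ℝ → ℂ := fun ξ η => z0 + u * (η + ξ * Complex.I) with hΦ
  have hinv : ∀ ξ η, (Φ ξ η - z0) * v = η + ξ * Complex.I := by
    intro ξ η
    simp only [hΦ]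
    linear_combination (η + ξ * Complex.I) * huv
  have hinv' : ∀ z : ℂ, Φ ((z - z0) * v).im ((z - z0) * v).re = z := by
    intro z
    simp only [hΦ]
    rw [Complex.re_add_im]
    linear_combination (z - z0) * huv
  have hΦre : ∀ ξ η, ((Φ ξ η - z0) * v).re = η := by intro ξ η; rw [hinv]; simp
  have hΦim : ∀ ξ η, ((Φ ξ η - z0) * v).im = ξ := by intro ξ η; rw [hinv]; simp
  set h0 := ε / 2 with hh0
  have hh0p : 0 < h0 := by linarith
  have hΦball : ∀ ξ η, |ξ| < h0 → |η| ≤ h0 → Φ ξ η ∈ ball (z0 : ℂ) ε := by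
    intro ξ η h1 h2
    rw [mem_ball, dist_eq_norm]
    have : Φ ξ η - z0 = u * (η + ξ * Complex.I) := by simp [hΦ]
    rw [this, norm_mul, hu, one_mul]
    refine (norm_add_le _ _).trans_lt ?_
    rw [norm_mul, Complex.norm_I, mul_one, Complex.norm_real, Complex.norm_real, Real.norm_eq_abs, Real.norm_eq_abs]
    linarith
  have hΦm : ∀ ξ η η', |ξ| < h0 → |η| ≤ h0 → |η'| ≤ h0 → η < η' → f (Φ ξ η) < f (Φ ξ η') := by
    intro ξ η η' h1 h2 h3 h4
    have : Φ ξ η' = Φ ξ η + ((η' - η : ℝ) : ℂ) * u := by simp only [hΦ]; push_cast; ring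
    rw [this]
    exact hmono _ (hΦball ξ η h1 h2) _ (sub_pos.2 h4) (this ▸ hΦball ξ η' h1 h3)
  have hΦ0 : Φ 0 0 = z0 := by simp [hΦ]
  have hf0 : f (Φ 0 0) = 0 := by rw [hΦ0]; exact (hE _).1 z0.2
  have ha0 : |(0:ℝ)| ≤ h0 := by rw [abs_zero]; exact hh0p.le
  have ha0' : |(0:ℝ)| < h0 := by rw [abs_zero]; exact hh0p
  have ha1 : |h0| ≤ h0 := by rw [abs_of_pos hh0p]
  have ha2 : |-h0| ≤ h0 := by rw [abs_neg]; exact ha1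
  have htop : 0 < f (Φ 0 h0) := by
    have := hΦm 0 0 h0 ha0' ha0 ha1 hh0p
    rwa [hf0] at this
  have hbot : f (Φ 0 (-h0)) < 0 := by
    have := hΦm 0 (-h0) 0 ha0' ha2 ha0 (by linarith)
    rwa [hf0] at this
  have hΦc1 : ∀ η, Continuous (fun ξ => f (Φ ξ η)) := fun η => hf.comp (by simp only [hΦ]; fun_prop)
  have hΦc2 : ∀ ξ, Continuous (fun η => f (Φ ξ η)) := fun ξ => hf.comp (by simp only [hΦ]; fun_prop)
  have hev : ∀ᶠ ξ in 𝓝 (0:ℝ), 0 < f (Φ ξ h0) ∧ f (Φ ξ (-h0)) < 0 :=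
    (((hΦc1 h0).tendsto 0).eventually (lt_mem_nhds htop)).and (((hΦc1 (-h0)).tendsto 0).eventually (gt_mem_nhds hbot))
  obtain ⟨δ', hδ', hδ2⟩ := Metric.eventually_nhds_iff.1 hev
  set δ := min δ' h0 with hδ
  have hδp : 0 < δ := lt_min hδ' hh0p
  have hI : ∀ ξ ∈ Ioo (-δ) δ, |ξ| < h0 ∧ 0 < f (Φ ξ h0) ∧ f (Φ ξ (-h0)) < 0 := by
    intro ξ hξ
    have : |ξ| < δ := abs_lt.2 hξ
    exact ⟨this.trans_le (min_le_right _ _), hδ2 (by rw [Real.dist_eq, sub_zero]; exact this.trans_le (min_le_left _ _))⟩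
  have hy : ∀ ξ, ∃ y : ℝ, ξ ∈ Ioo (-δ) δ → y ∈ Ioo (-h0) h0 ∧ f (Φ ξ y) = 0 := by
    intro ξ
    by_cases hξ : ξ ∈ Ioo (-δ) δ
    · obtain ⟨-, h1, h2⟩ := hI ξ hξ
      obtain ⟨y, hy, hy0⟩ := intermediate_value_Ioo (show -h0 ≤ h0 by linarith) (hΦc2 ξ).continuousOn (show (0:ℝ) ∈ Ioo _ _ from ⟨h2, h1⟩)
      exact ⟨y, fun _ => ⟨hy, hy0⟩⟩
    · exact ⟨0, fun h => (hξ h).elim⟩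
  choose y hy using hy
  have habs : ∀ {η : ℝ}, η ∈ Ioo (-h0) h0 → |η| ≤ h0 := fun hη => (abs_lt.2 hη).le
  have huniq : ∀ ξ ∈ Ioo (-δ) δ, ∀ η, |η| ≤ h0 → f (Φ ξ η) = 0 → y ξ = η := by
    intro ξ hξ η hη h1
    rcases lt_trichotomy (y ξ) η with hlt | heq | hlt
    · have := hΦm ξ _ _ (hI ξ hξ).1 (habs (hy ξ hξ).1) hη hlt
      rw [h1, (hy ξ hξ).2] at this; exact (lt_irrefl _ this).elim
    · exact heq
    · have := hΦm ξ _ _ (hI ξ hξ).1 hη (habs (hy ξ hξ).1) hlt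
      rw [h1, (hy ξ hξ).2] at this; exact (lt_irrefl _ this).elim
  have hlt : ∀ ξ ∈ Ioo (-δ) δ, ∀ η, |η| ≤ h0 → (0 < f (Φ ξ η) → y ξ < η) ∧ (f (Φ ξ η) < 0 → η < y ξ) := by
    intro ξ hξ η hη
    constructor
    · intro h1
      by_contra hcon
      rcases (not_lt.1 hcon).lt_or_eq with h2 | h2
      · have := hΦm ξ _ _ (hI ξ hξ).1 hη (habs (hy ξ hξ).1) h2
        rw [(hy ξ hξ).2] at this; linarith
      · rw [h2, (hy ξ hξ).2] at h1; exact lt_irrefl _ h1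
    · intro h1
      by_contra hcon
      rcases (not_lt.1 hcon).lt_or_eq with h2 | h2
      · have := hΦm ξ _ _ (hI ξ hξ).1 (habs (hy ξ hξ).1) hη h2
        rw [(hy ξ hξ).2] at this; linarith
      · rw [← h2, (hy ξ hξ).2] at h1; exact lt_irrefl _ h1
  have hyc : ContinuousOn y (Ioo (-δ) δ) := by
    intro ξ hξ
    have hIn : ∀ᶠ x in 𝓝[Ioo (-δ) δ] ξ, x ∈ Ioo (-δ) δ := self_mem_nhdsWithin
    have hyξ := (hy ξ hξ).1
    refine tendsto_order.2 ⟨fun a ha => ?_, fun a ha => ?_⟩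
    · set a' := max a (-h0) with ha'
      have h1 : a' < y ξ := max_lt ha hyξ.1
      have h2 : |a'| ≤ h0 := abs_le.2 ⟨le_max_right _ _, by linarith [hyξ.2]⟩
      have h3 := hΦm ξ _ _ (hI ξ hξ).1 h2 (habs hyξ) h1
      rw [(hy ξ hξ).2] at h3
      have h4 := nhdsWithin_le_nhds (s := Ioo (-δ) δ) (((hΦc1 a').tendsto ξ).eventually (gt_mem_nhds h3))
      filter_upwards [hIn, h4] with x hx hx4
      exact (le_max_left _ _).trans_lt ((hlt x hx a' h2).2 hx4)
    · set a' := min a h0 with ha'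
      have h1 : y ξ < a' := lt_min ha hyξ.2
      have h2 : |a'| ≤ h0 := abs_le.2 ⟨by linarith [hyξ.1], min_le_right _ _⟩
      have h3 := hΦm ξ _ _ (hI ξ hξ).1 (habs hyξ) h2 h1
      rw [(hy ξ hξ).2] at h3
      have h4 := nhdsWithin_le_nhds (s := Ioo (-δ) δ) (((hΦc1 a').tendsto ξ).eventually (lt_mem_nhds h3))
      filter_upwards [hIn, h4] with x hx hx4
      exact ((hlt x hx a' h2).1 hx4).trans_le (min_le_left _ _)
  set γ : ℝ → E := fun ξ => if h : f (Φ ξ (y ξ)) = 0 then ⟨Φ ξ (y ξ), (hE _).2 h⟩ else z0 with hγ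
  have hγv : ∀ ξ ∈ Ioo (-δ) δ, (γ ξ : ℂ) = Φ ξ (y ξ) := by
    intro ξ hξ
    simp only [hγ]; rw [dif_pos (hy ξ hξ).2]
  have h0I : (0:ℝ) ∈ Ioo (-δ) δ := ⟨by linarith, hδp⟩
  refine ⟨γ, δ, ⟨hδp, ?_, ?_, ?_⟩, ?_⟩
  · rw [IsInducing.subtypeVal.continuousOn_iff]
    refine ContinuousOn.congr (f := fun ξ => Φ ξ (y ξ)) ?_ hγv
    simp only [hΦ]
    fun_prop
  · intro x hx x' hx' hxx
    have := congrArg (fun e : E => (((e : ℂ) - z0) * v).im) hxx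
    have this : (((γ x : ℂ) - z0) * v).im = (((γ x' : ℂ) - z0) * v).im := this
    rwa [hγv x hx, hγv x' hx', hΦim, hΦim] at this
  · intro s t hs ht
    have hset : γ '' Ioo s t = {e : E | (((e : ℂ) - z0) * v).im ∈ Ioo s t ∧ (((e : ℂ) - z0) * v).re ∈ Ioo (-h0) h0} := by
      ext e
      constructor
      · rintro ⟨ξ, hξ, rfl⟩
        have hξ' : ξ ∈ Ioo (-δ) δ := ⟨by linarith [hξ.1], by linarith [hξ.2]⟩
        refine ⟨?_, ?_⟩
        · rw [hγv ξ hξ', hΦim]; exact hξ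
        · rw [hγv ξ hξ', hΦre]; exact (hy ξ hξ').1
      · rintro ⟨h1, h2⟩
        have hξ' : (((e : ℂ) - z0) * v).im ∈ Ioo (-δ) δ := ⟨by linarith [h1.1], by linarith [h1.2]⟩
        refine ⟨_, h1, Subtype.ext ?_⟩
        rw [hγv _ hξ', huniq _ hξ' _ (habs h2) (by rw [hinv']; exact (hE _).1 e.2), hinv']
    rw [hset]
    exact (isOpen_Ioo.preimage (f := fun e : E => (((e : ℂ) - z0) * v).im) (by fun_prop)).inter
      (isOpen_Ioo.preimage (f := fun e : E => (((e : ℂ) - z0) * v).re) (by fun_prop))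
  · apply Subtype.ext
    rw [hγv 0 h0I, huniq 0 h0I 0 ha0 hf0, hΦ0]

lemma no_log {F G : Set ℂ} (hF : IsClosed F) (hG : IsClosed G) (hU : F ∪ G = univ) {p : ℂ} {l l' : ℂ → ℂ}
    (hl : ContinuousOn l (F \ {p})) (hl' : ContinuousOn l' (G \ {p}))
    (he : ∀ e ∈ F \ {p}, Complex.exp (l e) = e - p) (he' : ∀ e ∈ G \ {p}, Complex.exp (l' e) = e - p)
    (heq : ∀ e ∈ F ∩ G, e ≠ p → l e = l' e) : False := by
  classical
  set w : ℝ → ℂ := fun θ => p + Complex.exp (θ * Complex.I) with hw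
  have hwc : Continuous w := by rw [hw]; fun_prop
  have hwp : ∀ θ, w θ ≠ p := by
    intro θ h
    simp [hw, Complex.exp_ne_zero] at h
  set q : ℝ → ℂ := fun θ => if w θ ∈ F then l (w θ) else l' (w θ) with hq
  have hqF : ∀ θ ∈ w ⁻¹' F, q θ = l (w θ) := fun θ h => if_pos h
  have hqG : ∀ θ ∈ w ⁻¹' G, q θ = l' (w θ) := by
    intro θ h
    by_cases hF' : w θ ∈ F
    · rw [hqF θ hF']; exact heq _ ⟨hF', h⟩ (hwp θ)
    · exact if_neg hF'
  have hqU : w ⁻¹' F ∪ w ⁻¹' G = univ := by rw [← preimage_union, hU, preimage_univ]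
  have hqc : Continuous q := by
    rw [← continuousOn_univ, ← hqU]
    refine ContinuousOn.union_of_isClosed ?_ ?_ (hF.preimage hwc) (hG.preimage hwc)
    · exact (hl.comp hwc.continuousOn (fun θ h => ⟨h, hwp θ⟩)).congr hqF
    · exact (hl'.comp hwc.continuousOn (fun θ h => ⟨h, hwp θ⟩)).congr hqG
  have hqe : ∀ θ, Complex.exp (q θ) = Complex.exp (θ * Complex.I) := by
    intro θ
    have hsub : w θ - p = Complex.exp (θ * Complex.I) := by simp [hw]
    rcases (hqU ▸ mem_univ θ : θ ∈ w ⁻¹' F ∪ w ⁻¹' G) with h | h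
    · rw [hqF θ h, he _ ⟨h, hwp θ⟩, hsub]
    · rw [hqG θ h, he' _ ⟨h, hwp θ⟩, hsub]
  have hcon := log_uni isPreconnected_univ (l1 := q) (l2 := fun θ : ℝ => (θ : ℂ) * Complex.I + q 0) hqc.continuousOn
    (by fun_prop) (fun θ _ => by rw [Complex.exp_add, hqe, hqe]; simp) (mem_univ 0) (by simp) (mem_univ (2 * Real.pi))
  have hcon : q (2 * Real.pi) = ((2 * Real.pi : ℝ) : ℂ) * Complex.I + q 0 := hcon
  have hw2 : w (2 * Real.pi) = w 0 := by
    simp [hw, Complex.exp_two_pi_mul_I]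
  have hq2 : q (2 * Real.pi) = q 0 := by simp only [hq]; rw [hw2]
  rw [hq2] at hcon
  have := congrArg Complex.im hcon
  simp at this

lemma exp_one_far {c : ℂ} (h : Complex.exp c = 1) (hc : ‖c‖ < 1) : c = 0 := by
  obtain ⟨n, hn⟩ := Complex.exp_eq_one_iff.1 h
  rcases eq_or_ne n 0 with rfl | hn0
  · simpa using hn
  · exfalso
    have h1 : (1:ℝ) ≤ |(n:ℝ)| := by
      have := Int.one_le_abs hn0
      exact_mod_cast this
    have h2 : ‖c‖ = |(n:ℝ)| * (2 * Real.pi) := by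
      rw [hn]; simp [abs_of_pos Real.pi_pos]
    have := Real.pi_gt_three
    nlinarith

namespace Good
variable {A B : Set ℂ}

theorem E_homeo (h : Good A B 1) : Nonempty (equidistSet A B ≃ₜ ℝ) := by
  have hEc : IsClosed (equidistSet A B) := isClosed_eq (continuous_infDist_pt A) (continuous_infDist_pt B)
  have hmem : ∀ p : equidistSet A B, (p : ℂ) ∈ FA A B ∧ (p : ℂ) ∈ FA B A := fun p => by
    have h2 : (p : ℂ) ∈ FA A B ∩ FA B A := FA_inter.symm ▸ p.2
    exact h2
  choose lB hB1 hB2 hB3 using fun p : equidistSet A B => h.branch (hmem p).1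
  choose lA hA1 hA2 hA3 using fun p : equidistSet A B => h.symm.branch (hmem p).2
  have hval : ∀ {p e : equidistSet A B}, e ≠ p → (e : ℂ) ≠ p := fun he h => he (Subtype.ext h)
  set d : equidistSet A B → equidistSet A B → ℂ := fun p e => lA p e - lB p e with hd
  have hdc : ∀ p, ContinuousOn (d p) {p}ᶜ := by
    intro p
    refine ContinuousOn.sub ?_ ?_
    · exact (hA1 p).comp continuous_subtype_val.continuousOn (fun e he => ⟨(hmem e).1, hval he⟩)
    · exact (hB1 p).comp continuous_subtype_val.continuousOn (fun e he => ⟨(hmem e).2, hval he⟩)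
  have hde : ∀ p e, e ≠ p → Complex.exp (d p e) = 1 := by
    intro p e he
    have h1 := hA2 p e ⟨(hmem e).1, hval he⟩
    have h2 := hB2 p e ⟨(hmem e).2, hval he⟩
    simp only [hd]
    rw [Complex.exp_sub, h1, h2, div_self (sub_ne_zero.2 (hval he))]
  set R : equidistSet A B → Set (equidistSet A B) := fun p => {e | e ≠ p ∧ d p e = 0} with hR
  set L : equidistSet A B → Set (equidistSet A B) := fun p => {e | e ≠ p ∧ d p e ≠ 0} with hL
  have hright : ∀ p q : equidistSet A B, ∀ m : ℝ, ∃ e : equidistSet A B, e ∈ R p ∧ e ∈ R q ∧ m < (e : ℂ).re := by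
    intro p q m
    obtain ⟨z, hz, hzre⟩ := (h.re_E ▸ mem_univ (max (m + 1) (max (rho p) (rho q))) :
      max (m + 1) (max (rho p) (rho q)) ∈ Complex.re '' equidistSet A B)
    have e1 : m + 1 ≤ z.re := hzre ▸ le_max_left _ _
    have e2 : rho p ≤ z.re := hzre ▸ (le_max_left _ _).trans (le_max_right _ _)
    have e3 : rho q ≤ z.re := hzre ▸ (le_max_right _ _).trans (le_max_right _ _)
    have key : ∀ p : equidistSet A B, rho p ≤ z.re → (⟨z, hz⟩ : equidistSet A B) ∈ R p := by
      intro p hp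
      refine ⟨?_, ?_⟩
      · rintro rfl
        exact absurd (rho_gt z) (not_lt.2 hp)
      · show lA p z - lB p z = 0
        rw [hA3 p z hp, hB3 p z hp, sub_self]
    exact ⟨⟨z, hz⟩, key p e2, key q e3, by show m < z.re; linarith⟩
  have hord : CutOrd R L := by
    refine ⟨fun p => ⟨?_, ?_, ?_, ?_, ?_, ?_, ?_, ?_⟩, ?_, ?_⟩
    · have : R p = {p}ᶜ ∩ d p ⁻¹' (ball 0 1) := by
        ext e
        constructor
        · rintro ⟨h1, h2⟩
          exact ⟨h1, by rw [mem_preimage, h2]; simp⟩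
        · rintro ⟨h1, h2⟩
          exact ⟨h1, exp_one_far (hde p e h1) (by simpa using h2)⟩
      rw [this]
      exact (hdc p).isOpen_inter_preimage isOpen_compl_singleton isOpen_ball
    · exact (hdc p).isOpen_inter_preimage isOpen_compl_singleton isOpen_compl_singleton
    · rintro x ⟨-, h1⟩ ⟨-, h2⟩; exact h2 h1
    · intro x hx
      by_cases h1 : d p x = 0
      · exact Or.inl ⟨hx, h1⟩
      · exact Or.inr ⟨hx, h1⟩
    · exact fun hp => hp.1 rfl
    · exact fun hp => hp.1 rfl
    · obtain ⟨e, he, -⟩ := hright p p 0; exact ⟨e, he⟩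
    · by_contra hne
      refine no_log FA_closed FA_closed FA_union (p := (p : ℂ)) (hA1 p) (hB1 p) (hA2 p) (hB2 p) ?_
      intro e he hep
      rw [FA_inter] at he
      by_contra hcon
      exact hne ⟨⟨e, he⟩, fun h' => hep (congrArg Subtype.val h'), sub_ne_zero.2 hcon⟩
    · intro p q K hK
      obtain ⟨m, M, hM⟩ := isCompact_re_bdd (hK.image continuous_subtype_val)
      obtain ⟨e, he1, he2, he3⟩ := hright p q M
      refine ⟨e, he1, he2, fun heK => ?_⟩
      have := (hM e ⟨e, heK, rfl⟩).2
      linarith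
    · intro p
      obtain ⟨u, v, huv, hu, ε, hε, hmono⟩ := h.local_mono p.2
      exact exists_chart (f := fun z => infDist z A - infDist z B)
        ((continuous_infDist_pt A).sub (continuous_infDist_pt B)) (fun z => sub_eq_zero.symm) p huv hu hε hmono
  have : PreconnectedSpace (equidistSet A B) := Subtype.preconnectedSpace h.E_pre
  have : Nonempty (equidistSet A B) := by
    obtain ⟨z, ⟨hz, -⟩, -⟩ := h.vert_unique one_pos
    exact ⟨⟨z, hz⟩⟩
  exact hord.homeo

end Good

/-- if `X̂ = A ∪ B` with `A, B` disjoint, closed, nonempty and `A` lying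
above `B`, then `E(A,B)` is a closed ray, `Re(E(A,B)) = ℝ`, and for every `x > 0` the
vertical line `Re z = x` meets `E(A,B)` in exactly one point. -/
theorem equidistSet_closedRay
    (X : Set ℂ) (hXne : X.Nonempty) (hXcpt : IsCompact X) (hXconn : IsConnected X)
    (hXns : IsConnected Xᶜ) (h0 : (0:ℂ) ∈ frontier X) (hXb : X ⊆ Metric.ball 0 1)
    (A B : Set ℂ) (hAB : hatSet X = A ∪ B) (hdisj : Disjoint A B)
    (hAcl : IsClosed A) (hBcl : IsClosed B)
    (hAne : A.Nonempty) (hBne : B.Nonempty) (habove : LiesAboveSets A B) :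
    IsClosedRay (equidistSet A B) ∧
    Complex.re '' equidistSet A B = Set.univ ∧
    (∀ x : ℝ, 0 < x → ∃! z : ℂ, z ∈ equidistSet A B ∧ z.re = x) := by
  have h := good_of hXcpt hXconn hXns h0 hXb hAB hdisj hAcl hBcl hAne hBne habove
  exact ⟨⟨isClosed_eq (continuous_infDist_pt A) (continuous_infDist_pt B), h.E_homeo⟩, h.re_E,
    fun x hx => h.vert_unique hx⟩
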